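/- arXiv:2006.00240 — 2 statements merged into one kernel-verified Lean document; each statement's English description precedes it below -/
import Mathlib

section
/- Let n ≥ 1, β ∈ (0,n) ∪ (n,∞), and let φ be a Young function satisfying C_β := sup_{t>0} (t^β/φ(t)) ∫_0^t φ(s) s^{-β-1} ds < ∞. If Ω ⊂ ℝⁿ is an Ahlfors n-regular domain, then Ω is a Ẇ^{β,φ}-extension domain: there exist a constant C > 0 and a linear operator E from Ẇ^{β,φ}(Ω) to Ẇ^{β,φ}(ℝⁿ) such that Eu = u almost everywhere on Ω and ‖Eu‖_{Ẇ^{β,φ}(ℝⁿ)} ≤ C ‖u‖_{Ẇ^{β,φ}(Ω)} for all u ∈ Ẇ^{β,φ}(Ω). -/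
/-!
The extension of `u` is `u` itself on the closure of `Ω`, whose boundary is a null set by Ahlfors
regularity and the Lebesgue density theorem (`volume_boundary`). At a point `y` at distance
`d(y) > 0` from `Ω` it is an average of `u` over points `z ∈ Ω` with `|y - z| < 3 d(y)`, with respect
to a kernel `κ(y, z)` (`kap`) that takes the role of the Whitney cubes and their reflected
quasi-cubes of bounded overlap.

To obtain bounded overlap, `z` carries a load: the integral of `d(y)^{-n}` over the points `y` at
scale up to `r` that could use `z`. The kernel is cut off where the load of `z` at scale `d(y)`
exceeds a large constant.
* The load is bounded on average, so by Chebyshev's inequality and Ahlfors regularity the cut-off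
  leaves a mass of at least `c d(y)^n` (`kap_mass`).
* The cut-off itself gives the overlap bound `∫ κ(y, z) d(y)^{-n} dy ≤ C` (`kap_overlap`).
* The load is Lipschitz in `log r`, so `κ` is Lipschitz at Whitney scale (`kap_lip`).
* At distances beyond the diameter of `Ω` the kernel, hence the extension, is constant (`kap_far`).

The modular of the extension is estimated separately over different kinds of pairs of points. Over
pairs in `Ω` it is the modular of `u`. For a pair with one point in `Ω`, and for two points off the
closure whose distance is at least comparable to their distances to `Ω`, Jensen's inequality moves
`φ` inside the averages, `|x - y|` is comparable from below to the distance of the points averaged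
over, and the overlap bound integrates the kernel (`modular_cross`, `modular_region`). For two
points `x`, `y` with `|x - y| < d(x) / 2` the extension has a Lipschitz bound
`|x - y| / d(x)` times the mean oscillation of `u` on `B(x, 5 d(x)) ∩ Ω`; the condition `C_β < ∞`
says exactly that such a profile has modular at most `C d(x)^{-β}` times `φ` of the oscillation
(`lintegral_lipschitz_profile`, `modular_local`).

Finally, `φ(t / B) ≤ φ(t) / B` for `B ≥ 1` turns the modular bound into the bound of the seminorms
(`fracIntegral_ext_le`).
-/

open MeasureTheory Metric Set Filter
open scoped ENNReal NNReal Topology Classical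

noncomputable section

/-- `φ` is a Young function: convex, continuous on `[0,∞)`, `φ(0)=0`, `φ(t)>0` for `t>0`. -/
def IsYoung (φ : ℝ → ℝ) : Prop :=
  ContinuousOn φ (Set.Ici 0) ∧ ConvexOn ℝ (Set.Ici 0) φ ∧ φ 0 = 0 ∧ ∀ t > 0, 0 < φ t

/-- `φ` is doubling with constant `K > 1`: `φ(2t) ≤ K φ(t)` for all `t > 0`. -/
def IsDoubling (φ : ℝ → ℝ) (K : ℝ) : Prop :=
  1 < K ∧ ∀ t > 0, φ (2 * t) ≤ K * φ t

/-- The (generalized) inverse of a Young function. -/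
def yInv (φ : ℝ → ℝ) (y : ℝ) : ℝ :=
  sInf {t : ℝ | 0 ≤ t ∧ y ≤ φ t}

/-- `sup_{t>0} (t^β/φ(t)) ∫_0^t φ(s) s^{-β-1} ds ≤ M`. -/
def CbetaLE (β : ℝ) (φ : ℝ → ℝ) (M : ℝ) : Prop :=
  ∀ t > 0,
    ENNReal.ofReal (t ^ β / φ t) *
        (∫⁻ s in Set.Ioc (0 : ℝ) t, ENNReal.ofReal (φ s / s ^ (β + 1))) ≤
      ENNReal.ofReal M

/-- The condition `C_β := sup_{t>0} (t^β/φ(t)) ∫_0^t φ(s) s^{-β-1} ds < ∞`. -/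
def CbetaFinite (β : ℝ) (φ : ℝ → ℝ) : Prop :=
  ∃ M : ℝ, CbetaLE β φ M

/-- The double integral `∫_Ω ∫_Ω φ(|u(x)-u(y)|/λ) |x-y|^{-n-β} dx dy`. -/
def fracIntegral (n : ℕ) (β : ℝ) (φ : ℝ → ℝ) (Ω : Set (EuclideanSpace ℝ (Fin n)))
    (u : EuclideanSpace ℝ (Fin n) → ℝ) (lam : ℝ) : ℝ≥0∞ :=
  ∫⁻ x in Ω, ∫⁻ y in Ω,
    ENNReal.ofReal (φ (|u x - u y| / lam) / dist x y ^ ((n : ℝ) + β))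

/-- The fractional Orlicz–Sobolev (Luxemburg-type) seminorm `‖u‖_{Ẇ^{β,φ}(Ω)}`,
valued in `[0,∞]` (it is `∞` iff no admissible `λ` exists). -/
def fracNorm (n : ℕ) (β : ℝ) (φ : ℝ → ℝ) (Ω : Set (EuclideanSpace ℝ (Fin n)))
    (u : EuclideanSpace ℝ (Fin n) → ℝ) : ℝ≥0∞ :=
  sInf {lam : ℝ≥0∞ | 0 < lam ∧ lam ≠ ∞ ∧ fracIntegral n β φ Ω u lam.toReal ≤ 1}

/-- `u ∈ Ẇ^{β,φ}(Ω)` : locally integrable on `Ω` with finite seminorm. -/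
def MemW (n : ℕ) (β : ℝ) (φ : ℝ → ℝ) (Ω : Set (EuclideanSpace ℝ (Fin n)))
    (u : EuclideanSpace ℝ (Fin n) → ℝ) : Prop :=
  LocallyIntegrableOn u Ω ∧ fracNorm n β φ Ω u ≠ ∞

/-- The Orlicz (Luxemburg) norm `‖u‖_{L^ψ(Ω)}`, valued in `[0,∞]`. -/
def luxNorm (n : ℕ) (ψ : ℝ → ℝ) (Ω : Set (EuclideanSpace ℝ (Fin n)))
    (u : EuclideanSpace ℝ (Fin n) → ℝ) : ℝ≥0∞ :=
  sInf {lam : ℝ≥0∞ | 0 < lam ∧ lam ≠ ∞ ∧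
    (∫⁻ x in Ω, ENNReal.ofReal (ψ (|u x| / lam.toReal))) ≤ 1}

/-- `Ω` is Ahlfors `n`-regular: `|B(x,r) ∩ Ω| ≥ θ rⁿ` for all `x ∈ Ω`, `0 < r < 2 diam Ω`. -/
def AhlforsRegular (n : ℕ) (Ω : Set (EuclideanSpace ℝ (Fin n))) : Prop :=
  ∃ θ > (0 : ℝ), ∀ x ∈ Ω, ∀ r : ℝ, 0 < r → ENNReal.ofReal r < 2 * EMetric.diam Ω →
    ENNReal.ofReal (θ * r ^ n) ≤ volume (Metric.ball x r ∩ Ω)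

/-- `Ω` is a `Ẇ^{β,φ}`-extension domain: there are `C > 0` and a linear operator `E`
from `Ẇ^{β,φ}(Ω)` to `Ẇ^{β,φ}(ℝⁿ)` with `Eu = u` a.e. on `Ω` and
`‖Eu‖_{Ẇ^{β,φ}(ℝⁿ)} ≤ C ‖u‖_{Ẇ^{β,φ}(Ω)}`. -/
def IsExtensionDomain (n : ℕ) (β : ℝ) (φ : ℝ → ℝ)
    (Ω : Set (EuclideanSpace ℝ (Fin n))) : Prop :=
  ∃ C > (0 : ℝ), ∃ E : (EuclideanSpace ℝ (Fin n) → ℝ) → (EuclideanSpace ℝ (Fin n) → ℝ),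
    (∀ u v, MemW n β φ Ω u → MemW n β φ Ω v → E (u + v) = E u + E v) ∧
    (∀ (c : ℝ) (u), MemW n β φ Ω u → E (c • u) = c • E u) ∧
    (∀ u, MemW n β φ Ω u →
      MemW n β φ Set.univ (E u) ∧
      (∀ᵐ x ∂(volume.restrict Ω), E u x = u x) ∧
      fracNorm n β φ Set.univ (E u) ≤ ENNReal.ofReal C * fracNorm n β φ Ω u)

end

namespace AhlforsExt

/-! ### Measure-theoretic tools -/

lemma lintegral_comp_smul_addHaar {E : Type*} [NormedAddCommGroup E] [NormedSpace ℝ E]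
    [MeasurableSpace E] [BorelSpace E] [FiniteDimensional ℝ E] (μ : Measure E)
    [μ.IsAddHaarMeasure] {f : E → ℝ≥0∞} (hf : Measurable f) {r : ℝ} (hr : 0 < r) :
    ∫⁻ x, f (r • x) ∂μ =
      ENNReal.ofReal ((r ^ Module.finrank ℝ E)⁻¹) * ∫⁻ x, f x ∂μ := by
  rw [← lintegral_map (f := f) (g := fun x => r • x) hf (by fun_prop),
    Measure.map_addHaar_smul μ hr.ne', lintegral_smul_measure, abs_of_pos (by positivity),
    smul_eq_mul]

/-- Integration of radial functions in polar coordinates, for the lower Lebesgue integral. -/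
lemma lintegral_norm_polar {E : Type*} [NormedAddCommGroup E] [NormedSpace ℝ E]
    [MeasurableSpace E] [BorelSpace E] [FiniteDimensional ℝ E] [Nontrivial E] (μ : Measure E)
    [μ.IsAddHaarMeasure] {f : ℝ → ℝ≥0∞} (hf : Measurable f) :
    ∫⁻ x, f ‖x‖ ∂μ = μ.toSphere univ *
      ∫⁻ r in Ioi (0 : ℝ), ENNReal.ofReal (r ^ (Module.finrank ℝ E - 1)) * f r := by
  calc
    ∫⁻ x, f ‖x‖ ∂μ = ∫⁻ x : ({(0)}ᶜ : Set E), f (‖x.1‖) ∂(μ.comap (↑)) := by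
      rw [lintegral_subtype_comap (measurableSet_singleton _).compl fun x ↦ f (‖x‖),
        restrict_compl_singleton]
    _ = ∫⁻ x, f x.2 ∂μ.toSphere.prod (.volumeIoiPow (Module.finrank ℝ E - 1)) := by
      simpa using μ.measurePreserving_homeomorphUnitSphereProd.lintegral_comp_emb
        (Homeomorph.measurableEmbedding _) (f ∘ Subtype.val ∘ Prod.snd)
    _ = μ.toSphere univ *
        ∫⁻ x : Ioi (0 : ℝ), f x ∂.volumeIoiPow (Module.finrank ℝ E - 1) := by
      rw [lintegral_prod _ (by fun_prop)]
      simp [mul_comm]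
    _ = _ := by
      congr 1
      rw [Measure.volumeIoiPow, lintegral_withDensity_eq_lintegral_mul _ (by fun_prop)
        (by fun_prop)]
      exact lintegral_subtype_comap measurableSet_Ioi
        fun a : ℝ ↦ ENNReal.ofReal (a ^ (Module.finrank ℝ E - 1)) * f a

/-- A set all of whose `d`-sublevels (taken at its own points) have measure at most `c` has
itself measure at most `c`. -/
lemma measure_le_of_sublevel {X : Type*} [MeasurableSpace X] (μ : Measure X) (d : X → ℝ)
    (S : Set X) (c : ℝ≥0∞) (h : ∀ y ∈ S, μ {y' | d y' ≤ d y} ≤ c) : μ S ≤ c := by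
  by_cases hmax : ∃ y ∈ S, ∀ y' ∈ S, d y' ≤ d y
  · obtain ⟨y, hy, hy'⟩ := hmax
    exact (measure_mono fun y' h' => hy' y' h').trans (h y hy)
  · push Not at hmax
    obtain ⟨T, hTS, hTc, hT⟩ := TopologicalSpace.isOpen_biUnion_countable S
      (fun y => Iio (d y)) (fun _ _ => isOpen_Iio)
    have hsub : S ⊆ ⋃ y ∈ T, {y' | d y' < d y} := by
      intro y hy
      obtain ⟨y', hy', hlt⟩ := hmax y hy
      have : d y ∈ ⋃ i ∈ S, Iio (d i) := mem_biUnion hy' hlt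
      rw [← hT] at this
      simpa using this
    refine (measure_mono hsub).trans ?_
    rw [measure_biUnion_eq_iSup hTc]
    · refine iSup₂_le fun y hy => le_trans (measure_mono ?_) (h y (hTS hy))
      intro y' h'
      simp only [mem_ofPred_eq] at h' ⊢
      exact h'.le
    · intro a ha b hb
      rcases le_total (d a) (d b) with hab | hab
      · exact ⟨b, hb, fun y (hy : _ < _) => lt_of_lt_of_le hy hab, subset_rfl⟩
      · exact ⟨a, ha, subset_rfl, fun y (hy : _ < _) => lt_of_lt_of_le hy hab⟩

/-- Jensen's inequality in weighted form, without any integrability requirement on `Φ ∘ f`. -/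
lemma jensen_weighted {X : Type*} [MeasurableSpace X] (μ : Measure X) {Φ : ℝ → ℝ}
    (hconv : ConvexOn ℝ univ Φ) (hcont : Continuous Φ) (hnn : ∀ t, 0 ≤ Φ t)
    {p f : X → ℝ} (hp : Measurable p) (hp0 : ∀ x, 0 ≤ p x) (hpi : Integrable p μ)
    (hp1 : ∫ x, p x ∂μ = 1)
    (hf : Measurable f) (hpf : Integrable (fun x => p x * f x) μ) :
    ENNReal.ofReal (Φ (∫ x, p x * f x ∂μ)) ≤
      ∫⁻ x, ENNReal.ofReal (p x) * ENNReal.ofReal (Φ (f x)) ∂μ := by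
  set ν : Measure X := μ.withDensity fun x => ENNReal.ofReal (p x) with hν
  have hpm : Measurable fun x => ENNReal.ofReal (p x) := by fun_prop
  have hνp : IsProbabilityMeasure ν := by
    constructor
    rw [hν, withDensity_apply _ MeasurableSet.univ, setLIntegral_univ,
      ← ofReal_integral_eq_lintegral_ofReal hpi (ae_of_all _ hp0), hp1, ENNReal.ofReal_one]
  have hInt : ∫ x, p x * f x ∂μ = ∫ x, f x ∂ν := by
    rw [hν, integral_withDensity_eq_integral_toReal_smul hpm (ae_of_all _ fun x => by simp)]
    simp [ENNReal.toReal_ofReal (hp0 _)]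
  have hfi : Integrable f ν := by
    rw [hν, integrable_withDensity_iff_integrable_smul' hpm (ae_of_all _ fun x => by simp)]
    simpa [ENNReal.toReal_ofReal (hp0 _)] using hpf
  have hl : ∫⁻ x, ENNReal.ofReal (p x) * ENNReal.ofReal (Φ (f x)) ∂μ
      = ∫⁻ x, ENNReal.ofReal (Φ (f x)) ∂ν := by
    have hm : Measurable fun x => ENNReal.ofReal (Φ (f x)) :=
      (hcont.measurable.comp hf).ennreal_ofReal
    rw [hν, lintegral_withDensity_eq_lintegral_mul _ hpm hm]
    rfl
  rw [hl, hInt]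
  by_cases hg : Integrable (Φ ∘ f) ν
  · refine le_trans ?_
      (ofReal_integral_eq_lintegral_ofReal hg (ae_of_all _ fun x => hnn _)).le
    exact ENNReal.ofReal_le_ofReal
      (hconv.map_integral_le hcont.continuousOn isClosed_univ (by simp) hfi hg)
  · have : ∫⁻ x, ENNReal.ofReal (Φ (f x)) ∂ν = ∞ := by
      by_contra hne
      apply hg
      refine ⟨(hcont.measurable.comp hf).aestronglyMeasurable, ?_⟩
      exact (hasFiniteIntegral_iff_ofReal (f := Φ ∘ f) (ae_of_all _ fun x => hnn _)).2
        (lt_top_iff_ne_top.2 hne)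
    rw [this]
    exact le_top

/-! ### Young functions -/

section Young
variable {φ : ℝ → ℝ}

lemma young_nonneg (h : IsYoung φ) {t : ℝ} (ht : 0 ≤ t) : 0 ≤ φ t := by
  rcases ht.eq_or_lt with rfl | ht
  · exact h.2.2.1.ge
  · exact (h.2.2.2 t ht).le

lemma young_scale (h : IsYoung φ) {t a : ℝ} (ht : 0 ≤ t) (ha : 0 ≤ a) (ha1 : a ≤ 1) :
    φ (a * t) ≤ a * φ t := by
  have := h.2.1.2 (x := t) ht (y := 0) (by simp) ha (sub_nonneg.2 ha1) (by ring)
  simpa [h.2.2.1] using this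

lemma young_mono (h : IsYoung φ) : MonotoneOn φ (Ici 0) := by
  intro s hs t ht hst
  rcases (show (0 : ℝ) ≤ t from ht).eq_or_lt with rfl | ht'
  · rw [le_antisymm hst hs]
  have h1 := young_scale h ht (a := s / t) (div_nonneg hs ht'.le) ((div_le_one ht').2 hst)
  rw [div_mul_cancel₀ _ ht'.ne'] at h1
  exact h1.trans (mul_le_of_le_one_left (young_nonneg h ht) ((div_le_one ht').2 hst))

lemma young_abs_convex (h : IsYoung φ) : ConvexOn ℝ univ fun t => φ |t| := by
  refine ⟨convex_univ, fun x _ y _ a b ha hb hab => ?_⟩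
  have h1 : |a • x + b • y| ≤ a • |x| + b • |y| := by
    simp only [smul_eq_mul]
    refine (abs_add_le _ _).trans ?_
    rw [abs_mul, abs_mul, abs_of_nonneg ha, abs_of_nonneg hb]
  have h2 : 0 ≤ a • |x| + b • |y| := by simp only [smul_eq_mul]; positivity
  exact (young_mono h (mem_Ici.2 (abs_nonneg _)) h2 h1).trans
    (h.2.1.2 (abs_nonneg x) (abs_nonneg y) ha hb hab)

lemma young_abs_cont (h : IsYoung φ) : Continuous fun t => φ |t| :=
  h.1.comp_continuous continuous_abs fun t => abs_nonneg t

/-- At least linear growth at infinity. -/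
lemma young_linear (h : IsYoung φ) {t : ℝ} (ht : 0 ≤ t) : t ≤ 1 + φ t / φ 1 := by
  have h1 : 0 < φ 1 := h.2.2.2 1 one_pos
  rcases le_total t 1 with h' | h'
  · have := div_nonneg (young_nonneg h ht) h1.le
    linarith
  · have h0 : 0 < t := by linarith
    have := young_scale h ht (a := t⁻¹) (by positivity) (inv_le_one_of_one_le₀ h')
    rw [inv_mul_cancel₀ h0.ne', inv_mul_eq_div, le_div_iff₀ h0] at this
    have : t ≤ φ t / φ 1 := by rw [le_div_iff₀ h1]; linarith
    linarith

end Young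

/-! ### Estimates in Euclidean space -/

section Eucl
variable {n : ℕ}

lemma nontrivial_eucl (hn : 1 ≤ n) : Nontrivial (EuclideanSpace ℝ (Fin n)) := by
  have : Nonempty (Fin n) := ⟨⟨0, hn⟩⟩
  infer_instance

lemma vol_ball (hn : 1 ≤ n) (x : EuclideanSpace ℝ (Fin n)) {r : ℝ} (hr : 0 ≤ r) :
    volume (ball x r) =
      ENNReal.ofReal (r ^ n) * volume (ball (0 : EuclideanSpace ℝ (Fin n)) 1) := by
  have := nontrivial_eucl hn
  simpa using Measure.addHaar_ball volume x hr

/-- `∫ (a + |x - z|)^{-γ} dx ≤ C a^{n-γ}` for `γ > n`. -/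
lemma lintegral_tail (γ : ℝ) (hγ : (n : ℝ) < γ) :
    ∃ C : ℝ≥0∞, C ≠ ∞ ∧ ∀ (z : EuclideanSpace ℝ (Fin n)) (a : ℝ), 0 < a →
      ∫⁻ x, ENNReal.ofReal ((a + dist x z) ^ (-γ)) ≤ C * ENNReal.ofReal (a ^ ((n : ℝ) - γ)) := by
  refine ⟨∫⁻ x : EuclideanSpace ℝ (Fin n), ENNReal.ofReal ((1 + ‖x‖) ^ (-γ)),
    (finite_integral_one_add_norm (by simpa using hγ)).ne, fun z a ha => le_of_eq ?_⟩
  have hm : Measurable fun x : EuclideanSpace ℝ (Fin n) =>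
    ENNReal.ofReal ((1 + ‖x‖) ^ (-γ)) := by fun_prop
  have h1 : ∫⁻ x, ENNReal.ofReal ((a + dist x z) ^ (-γ)) =
      ∫⁻ x : EuclideanSpace ℝ (Fin n), ENNReal.ofReal ((a + ‖x‖) ^ (-γ)) := by
    simp_rw [dist_eq_norm]
    exact lintegral_sub_right_eq_self
      (fun x : EuclideanSpace ℝ (Fin n) => ENNReal.ofReal ((a + ‖x‖) ^ (-γ))) z
  have h2 := lintegral_comp_smul_addHaar volume hm (inv_pos.2 ha)
  have h3 : ∀ x : EuclideanSpace ℝ (Fin n), ENNReal.ofReal ((a + ‖x‖) ^ (-γ)) =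
      ENNReal.ofReal (a ^ (-γ)) * ENNReal.ofReal ((1 + ‖a⁻¹ • x‖) ^ (-γ)) := by
    intro x
    rw [← ENNReal.ofReal_mul (by positivity), ← Real.mul_rpow ha.le (by positivity), norm_smul,
      Real.norm_of_nonneg (by positivity), mul_add, mul_inv_cancel_left₀ ha.ne', mul_one]
  rw [h1, lintegral_congr h3, lintegral_const_mul _ (by fun_prop), h2, mul_comm, mul_comm
    (ENNReal.ofReal _) (∫⁻ _, _), mul_assoc]
  congr 1
  rw [← ENNReal.ofReal_mul (by positivity)]
  congr 1
  rw [finrank_euclideanSpace_fin, inv_pow, inv_inv, ← Real.rpow_natCast,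
    ← Real.rpow_add ha, sub_eq_add_neg]

/-- The place where `C_β < ∞` is used: a Lipschitz profile `|h| S / d` on a ball of radius `d`
has modular at most `C d^{-β} φ(S)`. -/
lemma lintegral_lipschitz_profile (hn : 1 ≤ n) {β : ℝ} {φ : ℝ → ℝ} (hφ : IsYoung φ)
    (hC : CbetaFinite β φ) :
    ∃ C : ℝ≥0∞, C ≠ ∞ ∧ ∀ (x : EuclideanSpace ℝ (Fin n)) (d S : ℝ), 0 < d → 0 ≤ S →
      ∫⁻ y in ball x d, ENNReal.ofReal (φ (dist x y / d * S) / dist x y ^ ((n : ℝ) + β)) ≤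
        C * ENNReal.ofReal (d ^ (-β)) * ENNReal.ofReal (φ S) := by
  have := nontrivial_eucl hn
  obtain ⟨M, hM⟩ := hC
  set μS := (volume : Measure (EuclideanSpace ℝ (Fin n))).toSphere univ with hμS
  refine ⟨μS * ENNReal.ofReal M, ENNReal.mul_ne_top (measure_ne_top _ _) (by simp),
    fun x d S hd hS => ?_⟩
  rcases hS.eq_or_lt with rfl | hS
  · simp [hφ.2.2.1]
  set f : ℝ → ℝ≥0∞ := (Iio d).indicator fun r =>
    ENNReal.ofReal (φ |r / d * S| / r ^ ((n : ℝ) + β)) with hf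
  have hφm : Measurable fun t => φ |t| := (young_abs_cont hφ).measurable
  have hfm : Measurable f := by
    refine Measurable.indicator ?_ measurableSet_Iio
    have : Measurable fun r : ℝ => φ |r / d * S| :=
      hφm.comp (by fun_prop : Measurable fun r : ℝ => r / d * S)
    exact (this.div (by fun_prop)).ennreal_ofReal
  have h1 : ∫⁻ y in ball x d, ENNReal.ofReal (φ (dist x y / d * S) / dist x y ^ ((n : ℝ) + β))
      = ∫⁻ y : EuclideanSpace ℝ (Fin n), f ‖y‖ := by
    rw [← lintegral_sub_right_eq_self (fun y : EuclideanSpace ℝ (Fin n) => f ‖y‖) x,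
      ← lintegral_indicator measurableSet_ball]
    refine lintegral_congr fun y => ?_
    simp only [hf, indicator, mem_ball, mem_Iio, dist_eq_norm, norm_sub_rev x y]
    rw [abs_of_nonneg (by positivity)]
  rw [h1, lintegral_norm_polar volume hfm, finrank_euclideanSpace_fin, mul_assoc, mul_assoc]
  gcongr
  set g : ℝ → ℝ≥0∞ := (Ioc 0 S).indicator fun s => ENNReal.ofReal (φ s / s ^ (β + 1)) with hg
  set g' : ℝ → ℝ≥0∞ := (Ioc 0 S).indicator fun s => ENNReal.ofReal (φ |s| / s ^ (β + 1)) with hg'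
  have hgg : g = g' := by
    ext s
    simp only [hg, hg', indicator, mem_Ioc]
    split_ifs with h
    · rw [abs_of_pos h.1]
    · rfl
  have hgm : Measurable g := by
    rw [hgg]
    refine Measurable.indicator ?_ measurableSet_Ioc
    exact (hφm.div (by fun_prop)).ennreal_ofReal
  have hS' : 0 < S / d := by positivity
  have h2 : ∫⁻ r in Ioi (0 : ℝ), ENNReal.ofReal (r ^ (n - 1)) * f r ≤
      ∫⁻ r : ℝ, ENNReal.ofReal ((S / d) ^ (β + 1)) * g ((S / d) • r) := by
    rw [← lintegral_indicator measurableSet_Ioi]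
    refine lintegral_mono fun r => ?_
    simp only [hf, hg, indicator, mem_Ioi, mem_Iio, mem_Ioc, smul_eq_mul]
    by_cases h0 : 0 < r
    · by_cases hr : r < d
      · have e1 : 0 < S / d * r := by positivity
        have e2 : S / d * r ≤ S := by
          rw [div_mul_eq_mul_div, div_le_iff₀ hd]; nlinarith
        rw [if_pos h0, if_pos hr, if_pos ⟨e1, e2⟩, ← ENNReal.ofReal_mul (by positivity),
          ← ENNReal.ofReal_mul (by positivity)]
        have e3 : r / d * S = S / d * r := by ring
        rw [e3, abs_of_pos e1]
        apply le_of_eq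
        congr 1
        have e4 : r ^ ((n : ℝ) + β) = r ^ (n - 1) * r ^ (β + 1) := by
          rw [← Real.rpow_natCast, ← Real.rpow_add h0, Nat.cast_sub hn]
          congr 1
          push_cast
          ring
        rw [e4, Real.mul_rpow hS'.le h0.le]
        have : 0 < (S / d) ^ (β + 1) := by positivity
        have : 0 < r ^ (β + 1) := by positivity
        have : 0 < r ^ (n - 1) := by positivity
        field_simp
      · simp [hr]
    · simp [h0]
  refine h2.trans ?_
  rw [lintegral_const_mul _ (by fun_prop), lintegral_comp_smul_addHaar volume hgm hS', hg,
    lintegral_indicator measurableSet_Ioc, Module.finrank_self, pow_one]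
  have h3 := hM S hS
  set I := ∫⁻ s in Ioc 0 S, ENNReal.ofReal (φ s / s ^ (β + 1))
  have hφS := hφ.2.2.2 S hS
  have h4 : I ≤ ENNReal.ofReal (φ S / S ^ β) * ENNReal.ofReal M := by
    calc I = ENNReal.ofReal (φ S / S ^ β) * (ENNReal.ofReal (S ^ β / φ S) * I) := by
          rw [← mul_assoc, ← ENNReal.ofReal_mul (by positivity)]
          have : φ S / S ^ β * (S ^ β / φ S) = 1 := by
            have : 0 < S ^ β := by positivity
            field_simp
          rw [this, ENNReal.ofReal_one, one_mul]
      _ ≤ _ := by gcongr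
  calc _ ≤ ENNReal.ofReal ((S / d) ^ (β + 1)) * (ENNReal.ofReal (S / d)⁻¹ *
        (ENNReal.ofReal (φ S / S ^ β) * ENNReal.ofReal M)) := by gcongr
    _ = _ := by
      generalize ENNReal.ofReal M = m
      rw [mul_comm m, ← mul_assoc, ← mul_assoc, ← ENNReal.ofReal_mul
        (by positivity), ← ENNReal.ofReal_mul (by positivity), ← ENNReal.ofReal_mul
        (by positivity)]
      congr 2
      rw [Real.rpow_add_one hS'.ne', Real.div_rpow hS.le hd.le, Real.rpow_neg hd.le]
      have : 0 < S ^ β := by positivity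
      have : 0 < d ^ β := by positivity
      field_simp

end Eucl

/-! ### Functions of finite modular, and the boundary of a regular set -/

section
variable {n : ℕ} {β : ℝ} {φ : ℝ → ℝ} {Ω : Set (EuclideanSpace ℝ (Fin n))}

lemma measurable_frac_integrand (hφ : IsYoung φ) {u : EuclideanSpace ℝ (Fin n) → ℝ}
    (hu : Measurable u) (lam : ℝ) (hlam : 0 < lam) :
    Measurable fun q : EuclideanSpace ℝ (Fin n) × EuclideanSpace ℝ (Fin n) =>
      ENNReal.ofReal (φ (|u q.1 - u q.2| / lam) / dist q.1 q.2 ^ ((n : ℝ) + β)) := by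
  have h1 : Measurable fun q : EuclideanSpace ℝ (Fin n) × EuclideanSpace ℝ (Fin n) =>
      φ |(u q.1 - u q.2) / lam| :=
    (young_abs_cont hφ).measurable.comp (by fun_prop)
  have h2 : ∀ q : EuclideanSpace ℝ (Fin n) × EuclideanSpace ℝ (Fin n),
      |(u q.1 - u q.2) / lam| = |u q.1 - u q.2| / lam := fun q => by
    rw [abs_div, abs_of_pos hlam]
  simp_rw [h2] at h1
  exact (h1.div (by fun_prop)).ennreal_ofReal

lemma fracIntegral_congr {u v : EuclideanSpace ℝ (Fin n) → ℝ}
    (h : u =ᵐ[volume.restrict Ω] v) (lam : ℝ) :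
    fracIntegral n β φ Ω u lam = fracIntegral n β φ Ω v lam := by
  refine lintegral_congr_ae ?_
  filter_upwards [h] with x hx
  refine lintegral_congr_ae ?_
  filter_upwards [h] with y hy
  simp only [hx, hy]

/-- A function of finite modular is integrable on the bounded parts of `Ω`, right up to the
boundary. -/
lemma integrableOn_of_fracIntegral (hn : 1 ≤ n) (hβ : 0 < β) (hφ : IsYoung φ)
    (hΩ : MeasurableSet Ω) (hpos : volume Ω ≠ 0)
    {u : EuclideanSpace ℝ (Fin n) → ℝ} (hu : Measurable u) {lam : ℝ} (hlam : 0 < lam)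
    (hfin : fracIntegral n β φ Ω u lam ≠ ∞) (x : EuclideanSpace ℝ (Fin n)) (R : ℝ) :
    IntegrableOn u (Ω ∩ ball x R) := by
  have hm := measurable_frac_integrand (β := β) hφ hu lam hlam
  have h1 : ∀ᵐ z ∂(volume.restrict Ω), ∫⁻ y in Ω,
      ENNReal.ofReal (φ (|u z - u y| / lam) / dist z y ^ ((n : ℝ) + β)) < ∞ :=
    ae_lt_top (Measurable.lintegral_prod_right hm) hfin
  have : (ae (volume.restrict Ω)).NeBot := by
    rw [ae_neBot]
    exact fun h => hpos (Measure.restrict_eq_zero.1 h)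
  -- a point at which the inner integral is finite; `u` is then compared with the constant `u z`
  obtain ⟨z, hz⟩ := h1.exists
  set G : EuclideanSpace ℝ (Fin n) → ℝ := fun y =>
    φ (|u z - u y| / lam) / dist z y ^ ((n : ℝ) + β) with hG
  have hG0 : ∀ y, 0 ≤ G y := fun y =>
    div_nonneg (young_nonneg hφ (by positivity)) (by positivity)
  have hGm : Measurable G := by
    have h1 : Measurable fun y => φ |(u z - u y) / lam| :=
      (young_abs_cont hφ).measurable.comp (by fun_prop)
    simp_rw [abs_div, abs_of_pos hlam] at h1
    exact h1.div (by fun_prop)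
  have hGi : IntegrableOn G Ω := by
    refine ⟨hGm.aestronglyMeasurable, ?_⟩
    rw [hasFiniteIntegral_iff_ofReal (ae_of_all _ hG0)]
    exact hz
  set R' := |R| + dist x z
  have hφ1 : 0 < φ 1 := hφ.2.2.2 1 one_pos
  have hbd : ∀ y ∈ ball x R, ‖u y‖ ≤ |u z| + lam + lam / φ 1 * R' ^ ((n : ℝ) + β) * G y := by
    intro y hy
    have hd : dist z y ≤ R' := by
      have := mem_ball.1 hy
      have h2 := dist_triangle y x z
      rw [dist_comm z y]
      have := le_abs_self R
      simp only [R']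
      linarith
    have h2 : φ (|u z - u y| / lam) ≤ R' ^ ((n : ℝ) + β) * G y := by
      rcases eq_or_ne z y with rfl | hzy
      · simp [hG, hφ.2.2.1]
      have hd0 : 0 < dist z y := dist_pos.2 hzy
      have : φ (|u z - u y| / lam) = dist z y ^ ((n : ℝ) + β) * G y := by
        simp only [hG]
        field_simp
      rw [this]
      have := hG0 y
      gcongr
    have h3 := young_linear hφ (t := |u z - u y| / lam) (by positivity)
    rw [div_le_iff₀ hlam] at h3
    have h4 : |u y| ≤ |u z| + |u z - u y| := by
      have := abs_sub_abs_le_abs_sub (u y) (u z)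
      rw [abs_sub_comm] at this
      linarith
    rw [Real.norm_eq_abs]
    have h5 : φ (|u z - u y| / lam) / φ 1 * lam ≤ R' ^ ((n : ℝ) + β) * G y / φ 1 * lam := by
      gcongr
    have h6 : R' ^ ((n : ℝ) + β) * G y / φ 1 * lam = lam / φ 1 * R' ^ ((n : ℝ) + β) * G y := by
      ring
    nlinarith
  have hvol : volume (Ω ∩ ball x R) ≠ ∞ :=
    ((measure_mono inter_subset_right).trans_lt measure_ball_lt_top).ne
  have hi : IntegrableOn (fun y => |u z| + lam + lam / φ 1 * R' ^ ((n : ℝ) + β) * G y)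
      (Ω ∩ ball x R) :=
    (integrableOn_const hvol).add ((hGi.mono_set inter_subset_left).const_mul _)
  refine hi.mono' hu.aestronglyMeasurable ?_
  filter_upwards [ae_restrict_mem (hΩ.inter measurableSet_ball)] with y hy using hbd y hy.2

lemma ediam_pos (hn : 1 ≤ n) (hΩopen : IsOpen Ω) (hne : Ω.Nonempty) : 0 < ediam Ω := by
  have := nontrivial_eucl hn
  rw [ediam_pos_iff]
  obtain ⟨x, hx⟩ := hne
  exact (infinite_of_mem_nhds x (hΩopen.mem_nhds hx)).nontrivial

/-- The boundary of an Ahlfors regular open set is a null set, by the Lebesgue density theorem. -/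
lemma volume_boundary (hn : 1 ≤ n) (hΩopen : IsOpen Ω) (hne : Ω.Nonempty)
    (hA : AhlforsRegular n Ω) : volume (closure Ω \ Ω) = 0 := by
  obtain ⟨θ, hθ, hA⟩ := hA
  have hD := ediam_pos hn hΩopen hne
  set N := closure Ω \ Ω with hN
  have hNm : MeasurableSet N := isClosed_closure.measurableSet.diff hΩopen.measurableSet
  have hae := Besicovitch.ae_tendsto_measure_inter_div
    (volume : Measure (EuclideanSpace ℝ (Fin n))) N
  rw [ae_restrict_iff' hNm] at hae
  set ω := volume (ball (0 : EuclideanSpace ℝ (Fin n)) 1) with hω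
  have hω0 : ω ≠ 0 := (measure_ball_pos _ _ one_pos).ne'
  have hωt : ω ≠ ∞ := measure_ball_lt_top.ne
  have hnot : ∀ x ∈ N, ¬ Tendsto (fun r => volume (N ∩ closedBall x r) / volume (closedBall x r))
      (𝓝[>] 0) (𝓝 1) := by
    intro x hx ht
    set c : ℝ≥0∞ := ENNReal.ofReal (θ / 2 ^ n) / ω with hc
    have hc0 : c ≠ 0 := by
      rw [hc]
      exact (ENNReal.div_pos (by simp; positivity) hωt).ne'
    have hle : ∀ᶠ r in 𝓝[>] (0 : ℝ),
        volume (N ∩ closedBall x r) / volume (closedBall x r) ≤ 1 - c := by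
      obtain ⟨r₀, hr₀, hr₀'⟩ : ∃ r₀ : ℝ, 0 < r₀ ∧ ENNReal.ofReal r₀ < 2 * ediam Ω := by
        obtain ⟨q, hq0, hq⟩ := ENNReal.lt_iff_exists_nnreal_btwn.1
          (show 0 < 2 * ediam Ω by simpa using hD)
        refine ⟨q, by simpa using hq0, by simpa using hq⟩
      filter_upwards [Ioo_mem_nhdsGT hr₀] with r hr
      have hr0 : 0 < r := hr.1
      -- `B(x, r)` contains a ball of radius `r / 2` about a point of `Ω`, so `N` has no density point
      obtain ⟨y, hy, hxy⟩ := Metric.mem_closure_iff.1 hx.1 (r / 2) (by positivity)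
      have h1 := hA y hy (r / 2) (by positivity)
        (lt_of_le_of_lt (ENNReal.ofReal_le_ofReal (by linarith [hr.2])) hr₀')
      have hsub : ball y (r / 2) ∩ Ω ⊆ closedBall x r \ N := by
        intro z hz
        refine ⟨?_, fun h => h.2 hz.2⟩
        have := mem_ball.1 hz.1
        rw [mem_closedBall]
        have := dist_triangle z y x
        rw [dist_comm x y] at hxy
        linarith
      have h2 : volume (N ∩ closedBall x r) + ENNReal.ofReal (θ * (r / 2) ^ n) ≤
          volume (closedBall x r) := by
        calc _ ≤ volume (closedBall x r ∩ N) + volume (closedBall x r \ N) := by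
              rw [inter_comm]
              gcongr
              exact h1.trans (measure_mono hsub)
          _ = _ := measure_inter_add_sdiff _ hNm
      have h3 : volume (closedBall x r) = ENNReal.ofReal (r ^ n) * ω := by
        rw [Measure.addHaar_closedBall _ _ hr0.le, finrank_euclideanSpace_fin]
      have hB0 : volume (closedBall x r) ≠ 0 := (measure_closedBall_pos _ _ hr0).ne'
      have hBt : volume (closedBall x r) ≠ ∞ := measure_closedBall_lt_top.ne
      have h4 : ENNReal.ofReal (θ * (r / 2) ^ n) = c * volume (closedBall x r) := by
        rw [h3, hc, mul_comm (ENNReal.ofReal (r ^ n)), ← mul_assoc, ENNReal.div_mul_cancel hω0 hωt,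
          ← ENNReal.ofReal_mul (by positivity)]
        congr 1
        rw [div_pow]
        ring
      refine ENNReal.le_sub_of_add_le_right ?_ ?_
      · rw [hc]
        exact ENNReal.div_ne_top (by simp) hω0
      · rw [h4] at h2
        rw [← ENNReal.mul_le_mul_iff_left hB0 hBt, add_mul, ENNReal.div_mul_cancel hB0 hBt, one_mul]
        exact h2
    have := le_of_tendsto ht hle
    have h1 : (1 : ℝ≥0∞) - c < 1 := ENNReal.sub_lt_self (by simp) (by simp) hc0
    exact absurd this (not_le.2 h1)
  rw [measure_eq_zero_iff_ae_notMem]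
  filter_upwards [hae] with x hx hxN using hnot x hxN (hx hxN)

end

/-! ### The reflection kernel -/

section
variable {n : ℕ}

/-- Truncation of a real number to `[0,1]`. -/
noncomputable def clip (t : ℝ) : ℝ := max 0 (min 1 t)

lemma clip_nonneg (t : ℝ) : 0 ≤ clip t := le_max_left _ _
lemma clip_le_one (t : ℝ) : clip t ≤ 1 := max_le zero_le_one (min_le_left _ _)
lemma clip_eq_one {t : ℝ} (h : 1 ≤ t) : clip t = 1 := by simp [clip, h]
lemma clip_eq_zero {t : ℝ} (h : t ≤ 0) : clip t = 0 := by simp [clip, h]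
lemma continuous_clip : Continuous clip := by unfold clip; fun_prop
@[fun_prop] lemma measurable_clip : Measurable clip := continuous_clip.measurable

lemma abs_clip_sub_clip_le (s t : ℝ) : |clip s - clip t| ≤ |s - t| := by
  have h : ∀ a b : ℝ, a ≤ b → |clip a - clip b| ≤ |a - b| := by
    intro a b hab
    have hm : clip a ≤ clip b := max_le_max_left _ (min_le_min_left _ hab)
    rw [abs_of_nonpos (by linarith), abs_of_nonpos (by linarith)]
    simp only [clip] at hm ⊢
    rcases max_cases 0 (min 1 a) with h1 | h1 <;> rcases max_cases 0 (min 1 b) with h2 | h2 <;>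
      rcases min_cases 1 a with h3 | h3 <;> rcases min_cases 1 b with h4 | h4 <;> linarith
  rcases le_total s t with h1 | h1
  · exact h s t h1
  · rw [abs_sub_comm, abs_sub_comm s]
    exact h t s h1

/-- The points off the closure of `Ω` that are closer to `Ω` than the diameter of `Ω`. -/
def near (Ω : Set (EuclideanSpace ℝ (Fin n))) : Set (EuclideanSpace ℝ (Fin n)) :=
  {y | 0 < infDist y Ω ∧ ENNReal.ofReal (infDist y Ω) < ediam Ω}

lemma measurableSet_near (Ω : Set (EuclideanSpace ℝ (Fin n))) : MeasurableSet (near Ω) :=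
  (measurableSet_lt measurable_const measurable_infDist).inter
    (measurableSet_lt measurable_infDist.ennreal_ofReal measurable_const)

/-- The density with which `y` would charge `z` if its unit mass were spread evenly over the
ball of radius `3 dist(y, Ω)`. -/
noncomputable def loadDensity (Ω : Set (EuclideanSpace ℝ (Fin n)))
    (y z : EuclideanSpace ℝ (Fin n)) : ℝ :=
  if dist y z < 3 * infDist y Ω then (infDist y Ω ^ n)⁻¹ else 0

/-- The total charge received by `z` from the points `y` at distance about at most `r` from `Ω`,
with a Lipschitz cut-off between `r` and `2 r`. -/
noncomputable def load (Ω : Set (EuclideanSpace ℝ (Fin n)))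
    (z : EuclideanSpace ℝ (Fin n)) (r : ℝ) : ℝ :=
  ∫ y in near Ω, loadDensity Ω y z * clip (2 - infDist y Ω / r)

/-- The (unnormalised) reflection kernel: `z ∈ Ω` is used by `y` if `|y - z| < 3 dist(y, Ω)` and
if the charge on `z` from scales below `dist(y, Ω)` does not exceed `2 A`. -/
noncomputable def kap (Ω : Set (EuclideanSpace ℝ (Fin n))) (A : ℝ)
    (y z : EuclideanSpace ℝ (Fin n)) : ℝ :=
  clip (3 - dist y z / infDist y Ω) * clip (2 - load Ω z (infDist y Ω) / A)

/-- The properties of a kernel needed to build an extension operator. -/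
structure IsReflKernel (Ω : Set (EuclideanSpace ℝ (Fin n)))
    (κ : EuclideanSpace ℝ (Fin n) → EuclideanSpace ℝ (Fin n) → ℝ) (c C : ℝ) : Prop where
  c_pos : 0 < c
  C_nonneg : 0 ≤ C
  meas : Measurable (Function.uncurry κ)
  nonneg : ∀ y z, 0 ≤ κ y z
  le_one : ∀ y z, κ y z ≤ 1
  supp : ∀ y z, 0 < infDist y Ω → κ y z ≠ 0 → dist y z < 3 * infDist y Ω
  mass : ∀ y, 0 < infDist y Ω → ENNReal.ofReal (infDist y Ω) < 2 * ediam Ω →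
    c * infDist y Ω ^ n ≤ ∫ z in Ω, κ y z
  mass_far : ∀ y, ediam Ω ≤ ENNReal.ofReal (infDist y Ω) →
    c * (ediam Ω).toReal ^ n ≤ ∫ z in Ω, κ y z
  overlap : ∀ z ∈ Ω, ∫⁻ y in near Ω, ENNReal.ofReal (κ y z / infDist y Ω ^ n) ≤ ENNReal.ofReal C
  lip : ∀ z ∈ Ω, ∀ x y, 0 < infDist x Ω → dist x y < infDist x Ω / 2 →
    |κ x z - κ y z| ≤ C * (dist x y / infDist x Ω)
  far : ∀ z ∈ Ω, ∀ x y, ediam Ω ≤ ENNReal.ofReal (infDist x Ω) →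
    ediam Ω ≤ ENNReal.ofReal (infDist y Ω) → κ x z = κ y z

variable {Ω : Set (EuclideanSpace ℝ (Fin n))}

lemma loadDensity_nonneg (y z : EuclideanSpace ℝ (Fin n)) : 0 ≤ loadDensity Ω y z := by
  unfold loadDensity
  have := infDist_nonneg (x := y) (s := Ω)
  split_ifs <;> positivity

lemma measurable_loadDensity :
    Measurable fun q : EuclideanSpace ℝ (Fin n) × EuclideanSpace ℝ (Fin n) =>
      loadDensity Ω q.1 q.2 := by
  unfold loadDensity
  have h : Measurable fun q : EuclideanSpace ℝ (Fin n) × EuclideanSpace ℝ (Fin n) =>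
      infDist q.1 Ω := measurable_infDist.comp measurable_fst
  exact Measurable.ite (measurableSet_lt (by fun_prop) (by fun_prop)) (by fun_prop) (by fun_prop)

lemma measurable_load : Measurable fun q : EuclideanSpace ℝ (Fin n) × ℝ => load Ω q.1 q.2 := by
  unfold load
  have h1 : Measurable fun p : (EuclideanSpace ℝ (Fin n) × ℝ) × EuclideanSpace ℝ (Fin n) =>
      loadDensity Ω p.2 p.1.1 :=
    measurable_loadDensity.comp (f := fun p :
      (EuclideanSpace ℝ (Fin n) × ℝ) × EuclideanSpace ℝ (Fin n) => (p.2, p.1.1)) (by fun_prop)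
  have h2 : Measurable fun p : (EuclideanSpace ℝ (Fin n) × ℝ) × EuclideanSpace ℝ (Fin n) =>
      infDist p.2 Ω := measurable_infDist.comp measurable_snd
  have h3 : Measurable fun p : (EuclideanSpace ℝ (Fin n) × ℝ) × EuclideanSpace ℝ (Fin n) =>
      loadDensity Ω p.2 p.1.1 * clip (2 - infDist p.2 Ω / p.1.2) := by fun_prop
  exact (h3.stronglyMeasurable.integral_prod_right' (ν := volume.restrict (near Ω))).measurable

lemma measurable_kap (A : ℝ) : Measurable (Function.uncurry (kap Ω A)) := by
  unfold kap Function.uncurry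
  have h : Measurable fun q : EuclideanSpace ℝ (Fin n) × EuclideanSpace ℝ (Fin n) =>
      infDist q.1 Ω := measurable_infDist.comp measurable_fst
  have h2 : Measurable fun q : EuclideanSpace ℝ (Fin n) × EuclideanSpace ℝ (Fin n) =>
      load Ω q.2 (infDist q.1 Ω) :=
    measurable_load.comp (f := fun q : EuclideanSpace ℝ (Fin n) × EuclideanSpace ℝ (Fin n) =>
      (q.2, infDist q.1 Ω)) (by fun_prop)
  fun_prop

lemma integrable_load (hΩ : IsOpen Ω) {z : EuclideanSpace ℝ (Fin n)} (hz : z ∈ Ω) {r : ℝ}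
    (hr : 0 < r) :
    IntegrableOn (fun y => loadDensity Ω y z * clip (2 - infDist y Ω / r)) (near Ω) := by
  obtain ⟨δ, hδ, hball⟩ := Metric.isOpen_iff.1 hΩ z hz
  have hi : Integrable ((ball z (6 * r)).indicator fun _ => ((δ / 3) ^ n)⁻¹)
      (volume.restrict (near Ω)) :=
    ((integrable_indicator_iff measurableSet_ball).2
      (integrableOn_const measure_ball_lt_top.ne)).mono_measure Measure.restrict_le_self
  have hm : Measurable fun y => loadDensity Ω y z * clip (2 - infDist y Ω / r) := by
    have h1 : Measurable fun y => loadDensity Ω y z :=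
      measurable_loadDensity.comp (f := fun y : EuclideanSpace ℝ (Fin n) => (y, z)) (by fun_prop)
    have h2 : Measurable fun y : EuclideanSpace ℝ (Fin n) => infDist y Ω := measurable_infDist
    fun_prop
  refine hi.mono' hm.aestronglyMeasurable ?_
  filter_upwards [ae_restrict_mem (measurableSet_near Ω)] with y hy
  rw [Real.norm_of_nonneg (mul_nonneg (loadDensity_nonneg _ _) (clip_nonneg _))]
  have hnn : (0 : ℝ) ≤ (ball z (6 * r)).indicator (fun _ => ((δ / 3) ^ n)⁻¹) y :=
    indicator_nonneg (fun _ _ => by positivity) _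
  by_cases h1 : dist y z < 3 * infDist y Ω
  · by_cases h2 : infDist y Ω < 2 * r
    · have hmem : y ∈ ball z (6 * r) := by rw [mem_ball]; linarith
      have hd : δ / 3 ≤ infDist y Ω := by
        by_contra! hlt
        have : y ∈ Ω := hball (by rw [mem_ball]; linarith)
        exact hy.1.ne' (infDist_zero_of_mem this)
      rw [indicator_of_mem hmem, loadDensity, if_pos h1]
      refine (mul_le_of_le_one_right ?_ (clip_le_one _)).trans ?_
      · have := hy.1; positivity
      · gcongr
    · rw [clip_eq_zero, mul_zero]
      · exact hnn
      · push Not at h2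
        have : 2 ≤ infDist y Ω / r := (le_div_iff₀ hr).2 h2
        linarith
  · rw [loadDensity, if_neg h1, zero_mul]
    exact hnn

/-- The load is Lipschitz in the logarithm of the scale. -/
lemma load_lip (hn : 1 ≤ n) (hΩ : IsOpen Ω) :
    ∃ C : ℝ, 0 ≤ C ∧ ∀ z ∈ Ω, ∀ r s : ℝ, 0 < r → |r - s| < r / 2 →
      |load Ω z r - load Ω z s| ≤ C * (|r - s| / r) := by
  set ω := (volume (ball (0 : EuclideanSpace ℝ (Fin n)) 1)).toReal with hω
  refine ⟨18 ^ n * ω * 6, by positivity, fun z hz r s hr hrs => ?_⟩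
  have hs : 0 < s := by linarith [(abs_lt.1 hrs).2]
  have hs2 : r / 2 ≤ s := by linarith [(abs_lt.1 hrs).2]
  have hs3 : s ≤ 3 / 2 * r := by linarith [(abs_lt.1 hrs).1]
  rw [load, load, ← integral_sub (integrable_load hΩ hz hr) (integrable_load hΩ hz hs)]
  set K : ℝ := ((r / 2) ^ n)⁻¹ * (6 * (|r - s| / r)) with hK
  have hK0 : 0 ≤ K := by positivity
  have hb : ∀ y, 0 < infDist y Ω →
      ‖loadDensity Ω y z * clip (2 - infDist y Ω / r) -
        loadDensity Ω y z * clip (2 - infDist y Ω / s)‖ ≤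
      (ball z (9 * r)).indicator (fun _ => K) y := by
    intro y hy
    have hnn : 0 ≤ (ball z (9 * r)).indicator (fun _ => K) y :=
      indicator_nonneg (fun _ _ => hK0) _
    set t := infDist y Ω with ht
    rw [← mul_sub, norm_mul, Real.norm_of_nonneg (loadDensity_nonneg _ _), Real.norm_eq_abs]
    by_cases h1 : dist y z < 3 * t
    swap
    · rw [loadDensity, if_neg h1, zero_mul]; exact hnn
    by_cases h2 : t ≤ r / 2
    · have e1 : t / r ≤ 1 := (div_le_one hr).2 (by linarith)
      have e2 : t / s ≤ 1 := (div_le_one hs).2 (by linarith)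
      rw [clip_eq_one (by linarith), clip_eq_one (by linarith)]
      simpa using hnn
    by_cases h3 : 3 * r ≤ t
    · have e1 : 2 ≤ t / r := (le_div_iff₀ hr).2 (by linarith)
      have e2 : 2 ≤ t / s := (le_div_iff₀ hs).2 (by linarith)
      rw [clip_eq_zero (by linarith), clip_eq_zero (by linarith)]
      simpa using hnn
    push Not at h2 h3
    have hmem : y ∈ ball z (9 * r) := by rw [mem_ball]; linarith
    rw [indicator_of_mem hmem, loadDensity, if_pos h1, hK]
    gcongr
    refine (abs_clip_sub_clip_le _ _).trans ?_
    have e1 : 2 - t / r - (2 - t / s) = (r - s) * t / (r * s) := by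
      field_simp
      ring
    rw [e1, abs_div, abs_mul, abs_of_pos hy, abs_of_pos (mul_pos hr hs), div_le_iff₀ (by positivity)]
    have e2 : 6 * (|r - s| / r) * (r * s) = |r - s| * (6 * s) := by field_simp
    rw [e2]
    gcongr
    linarith
  have hi : Integrable ((ball z (9 * r)).indicator fun _ => K) :=
    (integrable_indicator_iff measurableSet_ball).2 (integrableOn_const measure_ball_lt_top.ne)
  calc |∫ y in near Ω, (loadDensity Ω y z * clip (2 - infDist y Ω / r) -
        loadDensity Ω y z * clip (2 - infDist y Ω / s))|
      ≤ ∫ y in near Ω, (ball z (9 * r)).indicator (fun _ => K) y := by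
        rw [← Real.norm_eq_abs]
        refine norm_integral_le_of_norm_le hi.integrableOn ?_
        filter_upwards [ae_restrict_mem (measurableSet_near Ω)] with y hy using hb y hy.1
    _ ≤ ∫ y, (ball z (9 * r)).indicator (fun _ => K) y :=
        setIntegral_le_integral hi (ae_of_all _ fun y => indicator_nonneg (fun _ _ => hK0) _)
    _ = (9 * r) ^ n * ω * K := by
        rw [integral_indicator measurableSet_ball, setIntegral_const, Measure.real,
          vol_ball hn _ (by positivity), ENNReal.toReal_mul, ENNReal.toReal_ofReal (by positivity),
          smul_eq_mul]
    _ = _ := by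
        rw [hK, mul_pow, div_pow, show (18 : ℝ) = 9 * 2 by norm_num, mul_pow]
        have : r ^ n ≠ 0 := by positivity
        field_simp

lemma measurable_infDist' : Measurable fun y : EuclideanSpace ℝ (Fin n) => infDist y Ω :=
  measurable_infDist

lemma ofReal_load (hΩ : IsOpen Ω) {z : EuclideanSpace ℝ (Fin n)} (hz : z ∈ Ω) {r : ℝ}
    (hr : 0 < r) : ENNReal.ofReal (load Ω z r) =
      ∫⁻ y in near Ω, ENNReal.ofReal (loadDensity Ω y z * clip (2 - infDist y Ω / r)) :=
  ofReal_integral_eq_lintegral_ofReal (integrable_load hΩ hz hr)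
    (ae_of_all _ fun _ => mul_nonneg (loadDensity_nonneg _ _) (clip_nonneg _))

/-- The load is bounded on average over `B(x, 2 dist(x, Ω)) ∩ Ω`. -/
lemma load_average (hn : 1 ≤ n) (hΩ : IsOpen Ω) :
    ∃ C : ℝ, 0 ≤ C ∧ ∀ x, 0 < infDist x Ω →
      ∫⁻ z in Ω ∩ ball x (2 * infDist x Ω), ENNReal.ofReal (load Ω z (infDist x Ω)) ≤
        ENNReal.ofReal (C * infDist x Ω ^ n) := by
  set ω := volume (ball (0 : EuclideanSpace ℝ (Fin n)) 1) with hω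
  have hωt : ω ≠ ∞ := measure_ball_lt_top.ne
  refine ⟨3 ^ n * ω.toReal * (8 ^ n * ω.toReal), by positivity, fun x hx => ?_⟩
  set d := infDist x Ω with hd
  set F : EuclideanSpace ℝ (Fin n) → EuclideanSpace ℝ (Fin n) → ℝ≥0∞ := fun z y =>
    ENNReal.ofReal (loadDensity Ω y z * clip (2 - infDist y Ω / d)) with hF
  have hFm : Measurable (Function.uncurry F) := by
    have h1 : Measurable fun q : EuclideanSpace ℝ (Fin n) × EuclideanSpace ℝ (Fin n) =>
        loadDensity Ω q.2 q.1 :=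
      measurable_loadDensity.comp (f := fun q : EuclideanSpace ℝ (Fin n) ×
        EuclideanSpace ℝ (Fin n) => (q.2, q.1)) (by fun_prop)
    have h2 : Measurable fun q : EuclideanSpace ℝ (Fin n) × EuclideanSpace ℝ (Fin n) =>
        infDist q.2 Ω := measurable_infDist.comp measurable_snd
    simp only [hF, Function.uncurry_def]
    fun_prop
  have hin : ∀ y ∈ near Ω, ∫⁻ z in ball x (2 * d), F z y ≤
      (ball x (8 * d)).indicator (fun _ => ENNReal.ofReal (3 ^ n) * ω) y := by
    intro y hy
    by_cases hmem : y ∈ ball x (8 * d)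
    · rw [indicator_of_mem hmem]
      calc ∫⁻ z in ball x (2 * d), F z y
          ≤ ∫⁻ z, (ball y (3 * infDist y Ω)).indicator
              (fun _ => ENNReal.ofReal (infDist y Ω ^ n)⁻¹) z := by
            refine (setLIntegral_le_lintegral _ _).trans (lintegral_mono fun z => ?_)
            simp only [hF, loadDensity, indicator, mem_ball, dist_comm z y]
            have := hy.1
            split_ifs
            · refine ENNReal.ofReal_le_ofReal
                (mul_le_of_le_one_right (by positivity) (clip_le_one _))
            · simp
        _ = ENNReal.ofReal (3 ^ n) * ω := by
            have := hy.1
            rw [lintegral_indicator measurableSet_ball, setLIntegral_const,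
              vol_ball hn _ (by positivity), ← mul_assoc, ← ENNReal.ofReal_mul (by positivity),
              mul_pow]
            congr 2
            field_simp
    · rw [indicator_of_notMem hmem]
      refine le_of_eq ?_
      rw [setLIntegral_congr_fun (g := fun _ => 0) measurableSet_ball, lintegral_zero]
      intro z hz
      simp only [hF, loadDensity]
      split_ifs with h1
      · rw [clip_eq_zero]
        · simp
        · rw [mem_ball, not_lt] at hmem
          have h2 := mem_ball.1 hz
          have h3 := dist_triangle y z x
          have : 2 ≤ infDist y Ω / d := (le_div_iff₀ hx).2 (by linarith)
          linarith
      · simp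
  calc ∫⁻ z in Ω ∩ ball x (2 * d), ENNReal.ofReal (load Ω z d)
      = ∫⁻ z in Ω ∩ ball x (2 * d), ∫⁻ y in near Ω, F z y :=
        setLIntegral_congr_fun (hΩ.measurableSet.inter measurableSet_ball)
          fun z hz => ofReal_load hΩ hz.1 hx
    _ ≤ ∫⁻ z in ball x (2 * d), ∫⁻ y in near Ω, F z y :=
        lintegral_mono_set inter_subset_right
    _ = ∫⁻ y in near Ω, ∫⁻ z in ball x (2 * d), F z y :=
        lintegral_lintegral_swap hFm.aemeasurable
    _ ≤ ∫⁻ y in near Ω, (ball x (8 * d)).indicator (fun _ => ENNReal.ofReal (3 ^ n) * ω) y :=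
        setLIntegral_mono' (measurableSet_near Ω) hin
    _ ≤ ∫⁻ y, (ball x (8 * d)).indicator (fun _ => ENNReal.ofReal (3 ^ n) * ω) y :=
        setLIntegral_le_lintegral _ _
    _ = ENNReal.ofReal (3 ^ n * ω.toReal * (8 ^ n * ω.toReal) * d ^ n) := by
        rw [lintegral_indicator measurableSet_ball, setLIntegral_const,
          vol_ball hn _ (by positivity), ← hω]
        nth_rewrite 1 2 [← ENNReal.ofReal_toReal hωt]
        rw [← ENNReal.ofReal_mul (by positivity), ← ENNReal.ofReal_mul (by positivity),
          ← ENNReal.ofReal_mul (by positivity), mul_pow]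
        congr 1
        ring

end

/-! ### Mass, overlap and regularity of the reflection kernel -/

section
variable {n : ℕ} {Ω : Set (EuclideanSpace ℝ (Fin n))}

lemma integrable_of_bdd_supp {f : EuclideanSpace ℝ (Fin n) → ℝ} (hm : Measurable f)
    (h0 : ∀ z, 0 ≤ f z) (h1 : ∀ z, f z ≤ 1) {y : EuclideanSpace ℝ (Fin n)} {R : ℝ}
    (hs : ∀ z, f z ≠ 0 → dist y z < R) : Integrable f := by
  have hi : Integrable ((ball y R).indicator fun _ => (1 : ℝ)) :=
    (integrable_indicator_iff measurableSet_ball).2 (integrableOn_const measure_ball_lt_top.ne)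
  refine hi.mono' hm.aestronglyMeasurable (ae_of_all _ fun z => ?_)
  rw [Real.norm_of_nonneg (h0 z)]
  by_cases hz : f z = 0
  · rw [hz]; exact indicator_nonneg (fun _ _ => zero_le_one) _
  · rw [indicator_of_mem (by rw [mem_ball, dist_comm]; exact hs z hz)]
    exact h1 z

lemma kap_nonneg (A : ℝ) (y z : EuclideanSpace ℝ (Fin n)) : 0 ≤ kap Ω A y z :=
  mul_nonneg (clip_nonneg _) (clip_nonneg _)

lemma kap_le_one (A : ℝ) (y z : EuclideanSpace ℝ (Fin n)) : kap Ω A y z ≤ 1 :=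
  mul_le_one₀ (clip_le_one _) (clip_nonneg _) (clip_le_one _)

lemma kap_supp (A : ℝ) (y z : EuclideanSpace ℝ (Fin n)) (hy : 0 < infDist y Ω)
    (h : kap Ω A y z ≠ 0) : dist y z < 3 * infDist y Ω := by
  by_contra! hlt
  apply h
  have : 3 ≤ dist y z / infDist y Ω := (le_div_iff₀ hy).2 hlt
  rw [kap, clip_eq_zero (by linarith), zero_mul]

lemma measurable_kap_right (A : ℝ) (y : EuclideanSpace ℝ (Fin n)) :
    Measurable (kap Ω A y) :=
  (measurable_kap A).of_uncurry_left

lemma integrable_kap (A : ℝ) (y : EuclideanSpace ℝ (Fin n)) (hy : 0 < infDist y Ω) :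
    Integrable (kap Ω A y) :=
  integrable_of_bdd_supp (measurable_kap_right A y) (kap_nonneg A y) (kap_le_one A y)
    fun z => kap_supp A y z hy

/-- By Ahlfors regularity and Chebyshev's inequality, at least a fixed proportion of the points of
`Ω` near `y` carries a small load, so the kernel has a large total mass. -/
lemma kap_mass (hΩ : IsOpen Ω) (hne : Ω.Nonempty) {θ C₁ A : ℝ} (hθ : 0 < θ)
    (hA : ∀ x ∈ Ω, ∀ r : ℝ, 0 < r → ENNReal.ofReal r < 2 * ediam Ω →
      ENNReal.ofReal (θ * r ^ n) ≤ volume (ball x r ∩ Ω))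
    (hload : ∀ x, 0 < infDist x Ω →
      ∫⁻ z in Ω ∩ ball x (2 * infDist x Ω), ENNReal.ofReal (load Ω z (infDist x Ω)) ≤
        ENNReal.ofReal (C₁ * infDist x Ω ^ n))
    (hA0 : 0 < A) (hAC : C₁ ≤ A * (θ / 2 / 2 ^ n)) (y : EuclideanSpace ℝ (Fin n))
    (hy : 0 < infDist y Ω) (hyD : ENNReal.ofReal (infDist y Ω) < 2 * ediam Ω) :
    θ / 2 / 2 ^ n * infDist y Ω ^ n ≤ ∫ z in Ω, kap Ω A y z := by
  set d := infDist y Ω with hd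
  obtain ⟨x, hx, hxy⟩ := (infDist_lt_iff hne (r := 3 / 2 * d)).1 (by rw [← hd]; linarith)
  set S := Ω ∩ ball y (2 * d) with hS
  have hSm : MeasurableSet S := hΩ.measurableSet.inter measurableSet_ball
  have hSt : volume S ≠ ∞ := (measure_mono inter_subset_right).trans_lt measure_ball_lt_top |>.ne
  have hvS : ENNReal.ofReal (θ * (d / 2) ^ n) ≤ volume S := by
    refine (hA x hx (d / 2) (by positivity)
      (lt_of_le_of_lt (ENNReal.ofReal_le_ofReal (by linarith)) hyD)).trans (measure_mono ?_)
    rintro w ⟨hw, hwΩ⟩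
    refine ⟨hwΩ, ?_⟩
    rw [mem_ball] at hw ⊢
    have := dist_triangle w x y
    rw [dist_comm x y] at this
    linarith
  have hlm : Measurable fun z => load Ω z d :=
    measurable_load.comp (f := fun z : EuclideanSpace ℝ (Fin n) => (z, d)) (by fun_prop)
  set B := S ∩ {z | ENNReal.ofReal A ≤ ENNReal.ofReal (load Ω z d)} with hB
  have hBm : MeasurableSet B :=
    hSm.inter (measurableSet_le measurable_const hlm.ennreal_ofReal)
  have hvB : volume B ≤ ENNReal.ofReal (θ / 2 / 2 ^ n * d ^ n) := by
    have h1 := mul_meas_ge_le_lintegral (μ := volume.restrict S) hlm.ennreal_ofReal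
      (ENNReal.ofReal A)
    rw [Measure.restrict_apply (measurableSet_le measurable_const hlm.ennreal_ofReal),
      inter_comm, ← hB] at h1
    have h2 : ENNReal.ofReal A * volume B ≤
        ENNReal.ofReal A * ENNReal.ofReal (θ / 2 / 2 ^ n * d ^ n) := by
      refine (h1.trans (hload y hy)).trans ?_
      rw [← ENNReal.ofReal_mul hA0.le, ← mul_assoc]
      exact ENNReal.ofReal_le_ofReal (by rw [← hd]; gcongr)
    exact (ENNReal.mul_le_mul_iff_right (by simpa using hA0) ENNReal.ofReal_ne_top).1 h2
  have hG : θ / 2 / 2 ^ n * d ^ n ≤ (volume (S \ B)).toReal := by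
    have h1 : θ * (d / 2) ^ n ≤ (volume S).toReal :=
      (ENNReal.ofReal_le_iff_le_toReal hSt).1 hvS
    have h2 : (volume B).toReal ≤ θ / 2 / 2 ^ n * d ^ n :=
      ENNReal.toReal_le_of_le_ofReal (by positivity) hvB
    have h3 : (volume (S \ B)).toReal = (volume S).toReal - (volume B).toReal :=
      measureReal_sdiff inter_subset_left hBm hSt
    have h4 : θ * (d / 2) ^ n = 2 * (θ / 2 / 2 ^ n * d ^ n) := by rw [div_pow]; ring
    linarith
  have hInt := integrable_kap A y hy
  calc θ / 2 / 2 ^ n * d ^ n ≤ (volume (S \ B)).toReal := hG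
    _ = ∫ z in S \ B, (1 : ℝ) := by simp [Measure.real]
    _ = ∫ z in S \ B, kap Ω A y z := by
        refine setIntegral_congr_fun (hSm.diff hBm) fun z hz => ?_
        have h1 : dist y z / d ≤ 2 := by
          rw [div_le_iff₀ hy, dist_comm]
          exact (mem_ball.1 hz.1.2).le
        have h2 : load Ω z d / A ≤ 1 := by
          rw [div_le_one hA0]
          by_contra! hlt
          exact hz.2 ⟨hz.1, ENNReal.ofReal_le_ofReal hlt.le⟩
        simp only [kap, ← hd]
        rw [clip_eq_one (by linarith), clip_eq_one (by linarith), mul_one]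
    _ ≤ ∫ z in Ω, kap Ω A y z :=
        setIntegral_mono_set hInt.integrableOn (ae_of_all _ (kap_nonneg A y))
          (LE.le.eventuallyLE fun z hz => hz.1.1)

/-- At distances beyond the diameter the kernel no longer depends on the first variable. -/
lemma kap_far (A : ℝ) (hD : 0 < ediam Ω) {z : EuclideanSpace ℝ (Fin n)} (hz : z ∈ Ω)
    (x y : EuclideanSpace ℝ (Fin n)) (hx : ediam Ω ≤ ENNReal.ofReal (infDist x Ω))
    (hy : ediam Ω ≤ ENNReal.ofReal (infDist y Ω)) : kap Ω A x z = kap Ω A y z := by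
  have key : ∀ x, ediam Ω ≤ ENNReal.ofReal (infDist x Ω) →
      kap Ω A x z = clip (2 - (∫ y in near Ω, loadDensity Ω y z) / A) := by
    intro x hx
    have hxp : 0 < infDist x Ω := by
      by_contra! h
      rw [ENNReal.ofReal_of_nonpos h] at hx
      exact absurd hx (by simpa using hD.ne')
    have h1 : dist x z / infDist x Ω ≤ 2 := by
      rw [div_le_iff₀ hxp]
      refine le_of_forall_pos_lt_add fun ε hε => ?_
      obtain ⟨w, hw, hxw⟩ := (infDist_lt_iff ⟨z, hz⟩ (r := infDist x Ω + ε)).1 (by linarith)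
      have hwz : dist w z ≤ infDist x Ω := by
        have := (edist_le_ediam_of_mem hw hz).trans hx
        rw [edist_dist] at this
        exact (ENNReal.ofReal_le_ofReal_iff hxp.le).1 this
      have := dist_triangle x w z
      linarith
    have h2 : load Ω z (infDist x Ω) = ∫ y in near Ω, loadDensity Ω y z := by
      refine setIntegral_congr_fun (measurableSet_near Ω) fun y hy => ?_
      have h3 : infDist y Ω / infDist x Ω ≤ 1 := by
        rw [div_le_one hxp]
        exact (ENNReal.ofReal_le_ofReal_iff hxp.le).1 (hy.2.le.trans hx)
      rw [clip_eq_one (by linarith), mul_one]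
    rw [kap, h2, clip_eq_one (by linarith), one_mul]
  rw [key x hx, key y hy]

/-- The cut-off at load `2 A` bounds the total charge on `z`. -/
lemma kap_overlap (hΩ : IsOpen Ω) {A : ℝ} (hA0 : 0 < A) {z : EuclideanSpace ℝ (Fin n)}
    (hz : z ∈ Ω) :
    ∫⁻ y in near Ω, ENNReal.ofReal (kap Ω A y z / infDist y Ω ^ n) ≤ ENNReal.ofReal (2 * A) := by
  have hdm : Measurable fun y : EuclideanSpace ℝ (Fin n) => infDist y Ω := measurable_infDist
  have hρm : Measurable fun y => loadDensity Ω y z :=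
    measurable_loadDensity.comp (f := fun y : EuclideanSpace ℝ (Fin n) => (y, z)) (by fun_prop)
  have hlm : Measurable fun y => load Ω z (infDist y Ω) :=
    measurable_load.comp (f := fun y : EuclideanSpace ℝ (Fin n) => (z, infDist y Ω)) (by fun_prop)
  set ν := (volume.restrict (near Ω)).withDensity fun y => ENNReal.ofReal (loadDensity Ω y z)
    with hν
  set S := near Ω ∩ {y | load Ω z (infDist y Ω) < 2 * A} with hS
  have hSm : MeasurableSet S :=
    (measurableSet_near Ω).inter (measurableSet_lt hlm measurable_const)
  have h1 : ν S ≤ ENNReal.ofReal (2 * A) := by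
    -- the `ν`-mass of `{dist ≤ dist(y, Ω)}` is at most the load of `z` at the scale `dist(y, Ω)`
    refine measure_le_of_sublevel ν (fun y => infDist y Ω) S _ fun y hy => ?_
    have hle : MeasurableSet {y' : EuclideanSpace ℝ (Fin n) | infDist y' Ω ≤ infDist y Ω} :=
      measurableSet_le hdm measurable_const
    refine le_trans ?_ (ENNReal.ofReal_le_ofReal (le_of_lt hy.2))
    rw [ofReal_load hΩ hz hy.1.1, hν, withDensity_apply _ hle, ← lintegral_indicator hle]
    refine lintegral_mono fun y' => ?_
    by_cases h : infDist y' Ω ≤ infDist y Ω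
    · rw [indicator_of_mem (by exact h)]
      have : infDist y' Ω / infDist y Ω ≤ 1 := (div_le_one hy.1.1).2 h
      rw [clip_eq_one (by linarith), mul_one]
    · rw [indicator_of_notMem (by exact h)]
      exact zero_le
  refine le_trans ?_ h1
  rw [hν, withDensity_apply _ hSm, ← lintegral_indicator hSm]
  refine setLIntegral_mono' (measurableSet_near Ω) fun y hy => ?_
  have hd := hy.1
  by_cases h0 : kap Ω A y z = 0
  · rw [h0]; simp
  have hlt : load Ω z (infDist y Ω) < 2 * A := by
    by_contra! h
    have : 2 ≤ load Ω z (infDist y Ω) / A := (le_div_iff₀ hA0).2 h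
    exact h0 (by rw [kap, clip_eq_zero (t := 2 - _) (by linarith), mul_zero])
  rw [indicator_of_mem (show y ∈ S from ⟨hy, hlt⟩), loadDensity, if_pos (kap_supp A y z hd h0), div_eq_mul_inv]
  exact ENNReal.ofReal_le_ofReal (mul_le_of_le_one_left (by positivity) (kap_le_one A y z))

/-- The kernel is Lipschitz in its first variable at Whitney scale, because the load is Lipschitz
in the logarithm of the scale. -/
lemma kap_lip (hn : 1 ≤ n) (hΩ : IsOpen Ω) {A : ℝ} (hA0 : 0 < A) :
    ∃ C : ℝ, 0 ≤ C ∧ ∀ z ∈ Ω, ∀ x y, 0 < infDist x Ω → dist x y < infDist x Ω / 2 →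
      |kap Ω A x z - kap Ω A y z| ≤ C * (dist x y / infDist x Ω) := by
  obtain ⟨C₀, hC₀, hlip⟩ := load_lip hn hΩ
  refine ⟨12 + C₀ / A, by positivity, fun z hz x y hx hxy => ?_⟩
  set d := infDist x Ω with hd
  set d' := infDist y Ω with hd'
  have hdd : |d - d'| ≤ dist x y := by
    rw [abs_le]
    have h1 := infDist_le_infDist_add_dist (s := Ω) (x := x) (y := y)
    have h2 := infDist_le_infDist_add_dist (s := Ω) (x := y) (y := x)
    rw [dist_comm y x] at h2
    constructor <;> linarith
  have hd'2 : d / 2 < d' := by linarith [(abs_le.1 hdd).2]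
  have hd'0 : 0 < d' := by linarith
  have e0 : 0 ≤ dist x y / d := by positivity
  have e1 : |clip (3 - dist x z / d) - clip (3 - dist y z / d')| ≤ 12 * (dist x y / d) := by
    by_cases h3 : 3 * d ≤ dist x z ∧ 3 * d' ≤ dist y z
    · have f1 : 3 ≤ dist x z / d := (le_div_iff₀ hx).2 h3.1
      have f2 : 3 ≤ dist y z / d' := (le_div_iff₀ hd'0).2 h3.2
      rw [clip_eq_zero (by linarith), clip_eq_zero (by linarith)]
      simp only [sub_self, abs_zero]; positivity
    have h5 : dist x z ≤ 5 * d := by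
      rw [not_and_or, not_le, not_le] at h3
      rcases h3 with h3 | h3
      · linarith
      · have := dist_triangle x y z
        linarith [(abs_le.1 hdd).1]
    refine (abs_clip_sub_clip_le _ _).trans ?_
    have f1 : 3 - dist x z / d - (3 - dist y z / d') =
        ((dist y z - dist x z) * d + dist x z * (d - d')) / (d * d') := by
      field_simp; ring
    have f2 : |dist y z - dist x z| ≤ dist x y := by
      rw [abs_le]
      have g1 := dist_triangle x y z
      have g2 := dist_triangle y x z
      rw [dist_comm y x] at g2
      constructor <;> linarith
    rw [f1, abs_div, abs_of_pos (mul_pos hx hd'0), div_le_iff₀ (by positivity)]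
    calc |(dist y z - dist x z) * d + dist x z * (d - d')|
        ≤ |dist y z - dist x z| * d + dist x z * |d - d'| := by
          refine (abs_add_le _ _).trans ?_
          rw [abs_mul, abs_mul, abs_of_pos hx, abs_of_nonneg dist_nonneg]
      _ ≤ dist x y * d + 5 * d * dist x y := by gcongr
      _ = 12 * (dist x y / d) * (d * (d / 2)) := by field_simp; ring
      _ ≤ 12 * (dist x y / d) * (d * d') := by gcongr
  have e2 : |clip (2 - load Ω z d / A) - clip (2 - load Ω z d' / A)| ≤
      C₀ / A * (dist x y / d) := by
    refine (abs_clip_sub_clip_le _ _).trans ?_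
    have f1 : 2 - load Ω z d / A - (2 - load Ω z d' / A) = -((load Ω z d - load Ω z d') / A) := by
      ring
    rw [f1, abs_neg, abs_div, abs_of_pos hA0, div_mul_eq_mul_div]
    gcongr
    refine (hlip z hz d d' hx (hdd.trans_lt hxy)).trans ?_
    gcongr
  have f0 : kap Ω A x z - kap Ω A y z =
      (clip (3 - dist x z / d) - clip (3 - dist y z / d')) * clip (2 - load Ω z d / A) +
      clip (3 - dist y z / d') * (clip (2 - load Ω z d / A) - clip (2 - load Ω z d' / A)) := by
    simp only [kap, ← hd, ← hd']; ring
  rw [f0]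
  refine (abs_add_le _ _).trans ?_
  rw [abs_mul, abs_mul, abs_of_nonneg (clip_nonneg _), abs_of_nonneg (clip_nonneg _), add_mul]
  exact add_le_add ((mul_le_of_le_one_right (abs_nonneg _) (clip_le_one _)).trans e1)
    ((mul_le_of_le_one_left (abs_nonneg _) (clip_le_one _)).trans e2)

/-- On an Ahlfors regular open set the kernel `kap Ω A` has all required properties once `A` is so
large that, by Chebyshev, the points of load above `A` cannot fill `Ω` near `y`. -/
lemma exists_reflKernel (hn : 1 ≤ n) (hΩ : IsOpen Ω) (hne : Ω.Nonempty)
    (hA : AhlforsRegular n Ω) : ∃ κ c C, IsReflKernel Ω κ c C := by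
  obtain ⟨θ, hθ, hA⟩ := hA
  obtain ⟨C₁, hC₁, hload⟩ := load_average (Ω := Ω) hn hΩ
  have hD := ediam_pos hn hΩ hne
  set c := θ / 2 / 2 ^ n with hc
  have hc0 : 0 < c := by positivity
  set A := (C₁ + 1) / c with hAdef
  have hA0 : 0 < A := by positivity
  obtain ⟨C₂, hC₂, hlip⟩ := kap_lip hn hΩ hA0
  have hmass := kap_mass hΩ hne hθ hA hload hA0 (A := A) (by
    rw [hAdef, ← hc, div_mul_cancel₀ _ hc0.ne']; linarith)
  refine ⟨kap Ω A, c, max (2 * A) C₂, hc0, by positivity, measurable_kap A, kap_nonneg A,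
    kap_le_one A, kap_supp A, hmass, ?_, ?_, ?_, fun z hz x y => kap_far A hD hz x y⟩
  · intro y hy
    have hDt : ediam Ω ≠ ∞ := ne_top_of_le_ne_top ENNReal.ofReal_ne_top hy
    set D := (ediam Ω).toReal with hDdef
    have hD0 : 0 < D := ENNReal.toReal_pos hD.ne' hDt
    have hDe : ediam Ω = ENNReal.ofReal D := (ENNReal.ofReal_toReal hDt).symm
    obtain ⟨x, hx⟩ := hne
    -- some point is at distance exactly `D` from `Ω`, by connectedness of the ambient space
    obtain ⟨y₁, hy₁⟩ : ∃ y₁, infDist y₁ Ω = D := by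
      refine mem_range_of_exists_le_of_exists_ge (continuous_infDist_pt Ω) ⟨x, ?_⟩ ⟨y, ?_⟩
      · rw [infDist_zero_of_mem hx]; exact hD0.le
      · rw [hDe] at hy
        exact (ENNReal.ofReal_le_ofReal_iff infDist_nonneg).1 hy
    have h1 := hmass y₁ (by rw [hy₁]; exact hD0) (by
      rw [hy₁, ← hDe]
      calc ediam Ω = 1 * ediam Ω := (one_mul _).symm
        _ < 2 * ediam Ω := by
          rw [ENNReal.mul_lt_mul_iff_left hD.ne' hDt]
          exact ENNReal.one_lt_two)
    rw [hy₁] at h1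
    refine h1.trans (le_of_eq (setIntegral_congr_fun hΩ.measurableSet fun z hz => ?_))
    exact kap_far A hD hz _ _ (by rw [hy₁, hDe]) hy
  · exact fun z hz => (kap_overlap hΩ hA0 hz).trans (ENNReal.ofReal_le_ofReal (le_max_left _ _))
  · intro z hz x y hx hxy
    refine (hlip z hz x y hx hxy).trans ?_
    gcongr
    exact le_max_right _ _

end

/-! ### The extension operator -/

section
variable {n : ℕ} {Ω : Set (EuclideanSpace ℝ (Fin n))}
  {κ : EuclideanSpace ℝ (Fin n) → EuclideanSpace ℝ (Fin n) → ℝ} {c C β : ℝ} {φ : ℝ → ℝ}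

/-- The total mass of the kernel at `y`. -/
noncomputable def kmass (Ω : Set (EuclideanSpace ℝ (Fin n)))
    (κ : EuclideanSpace ℝ (Fin n) → EuclideanSpace ℝ (Fin n) → ℝ)
    (y : EuclideanSpace ℝ (Fin n)) : ℝ := ∫ z in Ω, κ y z

/-- The average of `u` over `Ω` with respect to the kernel at `y`. -/
noncomputable def avg (Ω : Set (EuclideanSpace ℝ (Fin n)))
    (κ : EuclideanSpace ℝ (Fin n) → EuclideanSpace ℝ (Fin n) → ℝ)
    (u : EuclideanSpace ℝ (Fin n) → ℝ) (y : EuclideanSpace ℝ (Fin n)) : ℝ :=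
  (∫ z in Ω, κ y z * u z) / kmass Ω κ y

/-- The extension of `u`: unchanged on the closure of `Ω` (where `infDist` vanishes),
a kernel average outside. -/
noncomputable def ext (Ω : Set (EuclideanSpace ℝ (Fin n)))
    (κ : EuclideanSpace ℝ (Fin n) → EuclideanSpace ℝ (Fin n) → ℝ)
    (u : EuclideanSpace ℝ (Fin n) → ℝ) (y : EuclideanSpace ℝ (Fin n)) : ℝ :=
  if infDist y Ω ≤ 0 then u y else avg Ω κ u y

/-- The normalised kernel, as an extended nonnegative number. -/
noncomputable def prob (Ω : Set (EuclideanSpace ℝ (Fin n)))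
    (κ : EuclideanSpace ℝ (Fin n) → EuclideanSpace ℝ (Fin n) → ℝ)
    (y z : EuclideanSpace ℝ (Fin n)) : ℝ≥0∞ := ENNReal.ofReal (κ y z / kmass Ω κ y)

/-- The singular kernel `|x - y|^{-n-β}`, with value `0` on the diagonal. -/
noncomputable def sing (β : ℝ) (x y : EuclideanSpace ℝ (Fin n)) : ℝ≥0∞ :=
  ENNReal.ofReal ((dist x y ^ ((n : ℝ) + β))⁻¹)

/-- The even extension of the Young function, with values in `[0,∞]`. -/
noncomputable def yg (φ : ℝ → ℝ) (t : ℝ) : ℝ≥0∞ := ENNReal.ofReal (φ |t|)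

lemma yg_zero (hφ : IsYoung φ) : yg φ 0 = 0 := by simp [yg, hφ.2.2.1]

lemma yg_neg (t : ℝ) : yg φ (-t) = yg φ t := by simp [yg]

lemma yg_sub_comm (s t : ℝ) : yg φ (s - t) = yg φ (t - s) := by simp [yg, abs_sub_comm]

lemma yg_mono (hφ : IsYoung φ) {s t : ℝ} (h : |s| ≤ |t|) : yg φ s ≤ yg φ t :=
  ENNReal.ofReal_le_ofReal (young_mono hφ (mem_Ici.2 (abs_nonneg _)) (mem_Ici.2 (abs_nonneg _)) h)

lemma measurable_yg (hφ : IsYoung φ) : Measurable (yg φ) :=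
  (young_abs_cont hφ).measurable.ennreal_ofReal

lemma sing_comm (x y : EuclideanSpace ℝ (Fin n)) : sing β x y = sing β y x := by
  simp [sing, dist_comm]

lemma measurable_sing : Measurable fun q : EuclideanSpace ℝ (Fin n) × EuclideanSpace ℝ (Fin n) =>
    sing β q.1 q.2 := by
  unfold sing; fun_prop

lemma sing_le (hβ : 0 < β) {a : ℝ} (ha : 0 < a) {x y z w : EuclideanSpace ℝ (Fin n)}
    (hzw : z ≠ w) (h : dist z w ≤ a * dist x y) :
    sing β x y ≤ ENNReal.ofReal (a ^ ((n : ℝ) + β)) * sing β z w := by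
  have h0 : 0 < dist z w := dist_pos.2 hzw
  have h1 : 0 < dist x y := by
    by_contra! h1
    nlinarith
  rw [sing, sing, ← ENNReal.ofReal_mul (by positivity)]
  refine ENNReal.ofReal_le_ofReal ?_
  have h2 : dist z w ^ ((n : ℝ) + β) ≤ a ^ ((n : ℝ) + β) * dist x y ^ ((n : ℝ) + β) := by
    rw [← Real.mul_rpow ha.le h1.le]
    exact Real.rpow_le_rpow h0.le h (by positivity)
  rw [← div_eq_mul_inv, inv_eq_one_div, div_le_div_iff₀ (by positivity) (by positivity)]
  linarith

lemma yg_mul_sing {lam : ℝ} (hlam : 0 < lam) (s t : ℝ) (x y : EuclideanSpace ℝ (Fin n)) :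
    ENNReal.ofReal (φ (|s - t| / lam) / dist x y ^ ((n : ℝ) + β)) =
      yg φ ((s - t) / lam) * sing β x y := by
  rw [yg, sing, ← ENNReal.ofReal_mul' (by positivity), abs_div, abs_of_pos hlam, div_eq_mul_inv]

lemma measurable_kmass (hκ : IsReflKernel Ω κ c C) : Measurable (kmass Ω κ) :=
  (hκ.meas.stronglyMeasurable.integral_prod_right (ν := volume.restrict Ω)).measurable

lemma measurable_avg (hκ : IsReflKernel Ω κ c C) {u : EuclideanSpace ℝ (Fin n) → ℝ}
    (hu : Measurable u) : Measurable (avg Ω κ u) := by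
  have h : Measurable (Function.uncurry fun y z => κ y z * u z) := by
    have := hκ.meas
    simp only [Function.uncurry_def] at this ⊢
    fun_prop
  exact (h.stronglyMeasurable.integral_prod_right (ν := volume.restrict Ω)).measurable.div
    (measurable_kmass hκ)

lemma measurable_ext (hκ : IsReflKernel Ω κ c C) {u : EuclideanSpace ℝ (Fin n) → ℝ}
    (hu : Measurable u) : Measurable (ext Ω κ u) :=
  Measurable.ite (measurableSet_le measurable_infDist measurable_const) hu (measurable_avg hκ hu)

lemma measurable_prob (hκ : IsReflKernel Ω κ c C) :
    Measurable fun q : EuclideanSpace ℝ (Fin n) × EuclideanSpace ℝ (Fin n) =>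
      prob Ω κ q.1 q.2 := by
  have h1 := hκ.meas
  have h2 : Measurable fun q : EuclideanSpace ℝ (Fin n) × EuclideanSpace ℝ (Fin n) =>
      kmass Ω κ q.1 := (measurable_kmass hκ).comp measurable_fst
  simp only [Function.uncurry_def] at h1
  unfold prob
  fun_prop

lemma kernel_integrable (hκ : IsReflKernel Ω κ c C) {y : EuclideanSpace ℝ (Fin n)}
    (hy : 0 < infDist y Ω) : Integrable (κ y) :=
  integrable_of_bdd_supp hκ.meas.of_uncurry_left (hκ.nonneg y) (hκ.le_one y)
    fun z => hκ.supp y z hy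

lemma kmass_pos (hκ : IsReflKernel Ω κ c C) (hD : 0 < ediam Ω) {y : EuclideanSpace ℝ (Fin n)}
    (hy : 0 < infDist y Ω) : 0 < kmass Ω κ y := by
  have := hκ.c_pos
  rcases lt_or_ge (ENNReal.ofReal (infDist y Ω)) (2 * ediam Ω) with h | h
  · exact lt_of_lt_of_le (by positivity) (hκ.mass y hy h)
  · have h' : ediam Ω ≤ ENNReal.ofReal (infDist y Ω) :=
      le_trans (le_mul_of_one_le_left zero_le one_le_two) h
    have : 0 < (ediam Ω).toReal :=
      ENNReal.toReal_pos hD.ne' (ne_top_of_le_ne_top ENNReal.ofReal_ne_top h')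
    exact lt_of_lt_of_le (by positivity) (hκ.mass_far y h')

lemma prob_eq_zero (hκ : IsReflKernel Ω κ c C) {y z : EuclideanSpace ℝ (Fin n)}
    (hy : 0 < infDist y Ω) (h : 3 * infDist y Ω ≤ dist y z) : prob Ω κ y z = 0 := by
  have : κ y z = 0 := by
    by_contra h0
    exact absurd (hκ.supp y z hy h0) (not_lt.2 h)
  simp [prob, this]

lemma prob_le_near (hκ : IsReflKernel Ω κ c C) {y : EuclideanSpace ℝ (Fin n)}
    (hy : 0 < infDist y Ω) (hyD : ENNReal.ofReal (infDist y Ω) < 2 * ediam Ω)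
    (z : EuclideanSpace ℝ (Fin n)) :
    prob Ω κ y z ≤ ENNReal.ofReal c⁻¹ * ENNReal.ofReal (κ y z / infDist y Ω ^ n) := by
  have hc := hκ.c_pos
  rw [prob, ← ENNReal.ofReal_mul (by positivity)]
  refine ENNReal.ofReal_le_ofReal ?_
  have h1 := hκ.mass y hy hyD
  have h2 := hκ.nonneg y z
  calc κ y z / kmass Ω κ y ≤ κ y z / (c * infDist y Ω ^ n) := by
        unfold kmass; gcongr
    _ = _ := by field_simp

lemma near_lt {y : EuclideanSpace ℝ (Fin n)} (hy : y ∈ near Ω) :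
    ENNReal.ofReal (infDist y Ω) < 2 * ediam Ω :=
  lt_of_lt_of_le hy.2 (le_mul_of_one_le_left zero_le one_le_two)

lemma prob_le_far (hκ : IsReflKernel Ω κ c C) (hD : 0 < ediam Ω) {y : EuclideanSpace ℝ (Fin n)}
    (hy : ediam Ω ≤ ENNReal.ofReal (infDist y Ω)) (z : EuclideanSpace ℝ (Fin n)) :
    prob Ω κ y z ≤ ENNReal.ofReal c⁻¹ * ENNReal.ofReal (((ediam Ω).toReal ^ n)⁻¹) := by
  have hc := hκ.c_pos
  have hD' : 0 < (ediam Ω).toReal :=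
    ENNReal.toReal_pos hD.ne' (ne_top_of_le_ne_top ENNReal.ofReal_ne_top hy)
  rw [prob, ← ENNReal.ofReal_mul (by positivity)]
  refine ENNReal.ofReal_le_ofReal ?_
  have h1 := hκ.mass_far y hy
  have h2 := hκ.le_one y z
  calc κ y z / kmass Ω κ y ≤ 1 / (c * (ediam Ω).toReal ^ n) := by
        unfold kmass; gcongr
    _ = _ := by field_simp

lemma integrable_kernel_mul (hκ : IsReflKernel Ω κ c C) {u : EuclideanSpace ℝ (Fin n) → ℝ}
    (hum : AEStronglyMeasurable u (volume.restrict Ω))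
    (hui : ∀ x R, IntegrableOn u (Ω ∩ ball x R)) {y : EuclideanSpace ℝ (Fin n)}
    (hy : 0 < infDist y Ω) : IntegrableOn (fun z => κ y z * u z) Ω := by
  have hi : Integrable ((ball y (3 * infDist y Ω)).indicator fun z => |u z|)
      (volume.restrict Ω) := by
    rw [integrable_indicator_iff measurableSet_ball, IntegrableOn,
      Measure.restrict_restrict measurableSet_ball, inter_comm]
    exact (hui _ _).abs
  refine hi.mono' (hκ.meas.of_uncurry_left.aestronglyMeasurable.mul hum) (ae_of_all _ fun z => ?_)
  rw [norm_mul, Real.norm_of_nonneg (hκ.nonneg y z), Real.norm_eq_abs]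
  by_cases h : κ y z = 0
  · rw [h, zero_mul]; exact indicator_nonneg (fun _ _ => abs_nonneg _) _
  · rw [indicator_of_mem (by rw [mem_ball, dist_comm]; exact hκ.supp y z hy h)]
    exact mul_le_of_le_one_left (abs_nonneg _) (hκ.le_one y z)

lemma ext_add (hκ : IsReflKernel Ω κ c C) {u v : EuclideanSpace ℝ (Fin n) → ℝ}
    (hum : AEStronglyMeasurable u (volume.restrict Ω))
    (hui : ∀ x R, IntegrableOn u (Ω ∩ ball x R))
    (hvm : AEStronglyMeasurable v (volume.restrict Ω))
    (hvi : ∀ x R, IntegrableOn v (Ω ∩ ball x R)) :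
    ext Ω κ (u + v) = ext Ω κ u + ext Ω κ v := by
  funext y
  simp only [ext, Pi.add_apply]
  split_ifs with h
  · rfl
  · push Not at h
    simp only [avg, Pi.add_apply, mul_add]
    rw [integral_add (integrable_kernel_mul hκ hum hui h) (integrable_kernel_mul hκ hvm hvi h),
      add_div]

lemma ext_smul (a : ℝ) (u : EuclideanSpace ℝ (Fin n) → ℝ) :
    ext Ω κ (a • u) = a • ext Ω κ u := by
  funext y
  simp only [ext, Pi.smul_apply, smul_eq_mul]
  split_ifs with h
  · rfl
  · simp only [avg, Pi.smul_apply, smul_eq_mul, mul_left_comm _ a]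
    rw [integral_const_mul, mul_div_assoc]

/-- The extension depends on `u` only up to null sets, the boundary of `Ω` being null. -/
lemma ext_congr {u v : EuclideanSpace ℝ (Fin n) → ℝ} (hb : volume (closure Ω \ Ω) = 0)
    (hne : Ω.Nonempty) (hΩ : MeasurableSet Ω)
    (h : u =ᵐ[volume.restrict Ω] v) : ext Ω κ u =ᵐ[volume] ext Ω κ v := by
  have hb' : ∀ᵐ y ∂(volume : Measure (EuclideanSpace ℝ (Fin n))), y ∉ closure Ω \ Ω :=
    measure_eq_zero_iff_ae_notMem.1 hb
  rw [EventuallyEq, ae_restrict_iff' hΩ] at h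
  filter_upwards [hb', h] with y hy1 hy2
  simp only [ext]
  split_ifs with hd
  · apply hy2
    have : y ∈ closure Ω := (mem_closure_iff_infDist_zero hne).2 (le_antisymm hd infDist_nonneg)
    by_contra hy3
    exact hy1 ⟨this, hy3⟩
  · simp only [avg]
    congr 1
    refine integral_congr_ae ?_
    rw [EventuallyEq, ae_restrict_iff' hΩ]
    filter_upwards [h] with z hz hzΩ
    rw [hz hzΩ]

lemma integral_prob_mul_sub (hκ : IsReflKernel Ω κ c C) (hD : 0 < ediam Ω)
    {u : EuclideanSpace ℝ (Fin n) → ℝ} (hu : Measurable u)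
    (hui : ∀ x R, IntegrableOn u (Ω ∩ ball x R)) {y : EuclideanSpace ℝ (Fin n)}
    (hy : 0 < infDist y Ω) (a : ℝ) :
    ∫ z in Ω, κ y z * (a - u z) = kmass Ω κ y * (a - avg Ω κ u y) := by
  have hK := kmass_pos hκ hD hy
  simp only [mul_sub]
  rw [integral_sub ((kernel_integrable hκ hy).mul_const a).integrableOn
    (integrable_kernel_mul hκ hu.aestronglyMeasurable hui hy), integral_mul_const, avg,
    mul_div_cancel₀ _ hK.ne', kmass]

/-- Jensen's inequality for the averages defining the extension. -/
lemma yg_avg_le (hφ : IsYoung φ) (hκ : IsReflKernel Ω κ c C) (hD : 0 < ediam Ω)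
    {u : EuclideanSpace ℝ (Fin n) → ℝ} (hu : Measurable u)
    (hui : ∀ x R, IntegrableOn u (Ω ∩ ball x R)) {y : EuclideanSpace ℝ (Fin n)}
    (hy : 0 < infDist y Ω) (a : ℝ) :
    yg φ (a - avg Ω κ u y) ≤ ∫⁻ z in Ω, prob Ω κ y z * yg φ (a - u z) := by
  have hK := kmass_pos hκ hD hy
  have hkm : Measurable (κ y) := hκ.meas.of_uncurry_left
  have hInt : IntegrableOn (fun z => κ y z * (a - u z)) Ω := by
    simp only [mul_sub]
    exact ((kernel_integrable hκ hy).mul_const a).integrableOn.sub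
      (integrable_kernel_mul hκ hu.aestronglyMeasurable hui hy)
  have := jensen_weighted (volume.restrict Ω) (young_abs_convex hφ) (young_abs_cont hφ)
    (fun t => young_nonneg hφ (abs_nonneg t)) (p := fun z => κ y z / kmass Ω κ y)
    (f := fun z => a - u z) (hkm.div_const _)
    (fun z => div_nonneg (hκ.nonneg y z) hK.le)
    ((kernel_integrable hκ hy).integrableOn.div_const _)
    (by rw [integral_div, ← kmass, div_self hK.ne']) (by fun_prop)
    (by simpa only [div_mul_eq_mul_div] using hInt.div_const (kmass Ω κ y))
  simp only [div_mul_eq_mul_div] at this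
  rw [integral_div, integral_prob_mul_sub hκ hD hu hui hy, mul_div_cancel_left₀ _ hK.ne'] at this
  exact this

end

/-! ### Pairs of points that are far apart relative to their distance to the domain -/

section
variable {n : ℕ} {Ω : Set (EuclideanSpace ℝ (Fin n))}
  {κ : EuclideanSpace ℝ (Fin n) → EuclideanSpace ℝ (Fin n) → ℝ} {c C β : ℝ} {φ : ℝ → ℝ}

/-- The points `x` off the closure of `Ω` such that `|x - y|` is at least half the distance of
both `x` and `y` to `Ω`. -/
def region (Ω : Set (EuclideanSpace ℝ (Fin n))) (y : EuclideanSpace ℝ (Fin n)) :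
    Set (EuclideanSpace ℝ (Fin n)) :=
  {x | 0 < infDist x Ω ∧ infDist x Ω / 2 ≤ dist x y ∧ infDist y Ω / 2 ≤ dist x y}

lemma measurableSet_region_prod :
    MeasurableSet {q : EuclideanSpace ℝ (Fin n) × EuclideanSpace ℝ (Fin n) |
      q.2 ∈ region Ω q.1} := by
  have h1 : Measurable fun q : EuclideanSpace ℝ (Fin n) × EuclideanSpace ℝ (Fin n) =>
      infDist q.1 Ω := measurable_infDist.comp measurable_fst
  have h2 : Measurable fun q : EuclideanSpace ℝ (Fin n) × EuclideanSpace ℝ (Fin n) =>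
      infDist q.2 Ω := measurable_infDist.comp measurable_snd
  have h3 : Measurable fun q : EuclideanSpace ℝ (Fin n) × EuclideanSpace ℝ (Fin n) =>
      dist q.2 q.1 := by fun_prop
  exact (measurableSet_lt measurable_const h2).inter
    ((measurableSet_le (h2.div_const 2) h3).inter (measurableSet_le (h1.div_const 2) h3))

lemma measurableSet_region (y : EuclideanSpace ℝ (Fin n)) : MeasurableSet (region Ω y) := by
  have h1 : Measurable fun x : EuclideanSpace ℝ (Fin n) => infDist x Ω := measurable_infDist
  have h3 : Measurable fun x : EuclideanSpace ℝ (Fin n) => dist x y := by fun_prop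
  exact (measurableSet_lt measurable_const h1).inter
    ((measurableSet_le (h1.div_const 2) h3).inter (measurableSet_le measurable_const h3))

lemma measurable_sing_left (w : EuclideanSpace ℝ (Fin n)) : Measurable fun z => sing β z w :=
  measurable_sing.comp (f := fun z : EuclideanSpace ℝ (Fin n) => (z, w)) (by fun_prop)

lemma measurable_prob_left (hκ : IsReflKernel Ω κ c C) (z : EuclideanSpace ℝ (Fin n)) :
    Measurable fun x => prob Ω κ x z :=
  (measurable_prob hκ).comp (f := fun x : EuclideanSpace ℝ (Fin n) => (x, z)) (by fun_prop)

lemma measurable_prob_right (hκ : IsReflKernel Ω κ c C) (x : EuclideanSpace ℝ (Fin n)) :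
    Measurable fun z => prob Ω κ x z :=
  (measurable_prob hκ).comp (f := fun z : EuclideanSpace ℝ (Fin n) => (x, z)) (by fun_prop)

/-- `∫_{|x - y| ≥ a} |x - y|^{-n-β} dx ≤ C a^{-β}`. -/
lemma lintegral_sing_tail (hβ : 0 < β) :
    ∃ C' : ℝ≥0∞, C' ≠ ∞ ∧ ∀ (y : EuclideanSpace ℝ (Fin n)) (a : ℝ), 0 < a →
      ∫⁻ x in {x | a ≤ dist x y}, sing β x y ≤ C' * ENNReal.ofReal (a ^ (-β)) := by
  obtain ⟨C₁, hC₁, h⟩ := lintegral_tail (n := n) ((n : ℝ) + β) (by linarith)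
  refine ⟨ENNReal.ofReal (2 ^ ((n : ℝ) + β)) * C₁, ENNReal.mul_ne_top ENNReal.ofReal_ne_top hC₁,
    fun y a ha => ?_⟩
  have hm : MeasurableSet {x : EuclideanSpace ℝ (Fin n) | a ≤ dist x y} :=
    measurableSet_le measurable_const (by fun_prop)
  calc ∫⁻ x in {x | a ≤ dist x y}, sing β x y
      ≤ ∫⁻ x in {x | a ≤ dist x y}, ENNReal.ofReal (2 ^ ((n : ℝ) + β)) *
          ENNReal.ofReal ((a + dist x y) ^ (-((n : ℝ) + β))) := by
        refine setLIntegral_mono' hm fun x hx => ?_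
        have hx : a ≤ dist x y := hx
        have hx0 : 0 < dist x y := ha.trans_le hx
        rw [sing, ← ENNReal.ofReal_mul (by positivity)]
        refine ENNReal.ofReal_le_ofReal ?_
        rw [Real.rpow_neg (by positivity), ← div_eq_mul_inv, inv_eq_one_div,
          div_le_div_iff₀ (by positivity) (by positivity), one_mul,
          ← Real.mul_rpow (by positivity) (by positivity)]
        exact Real.rpow_le_rpow (by positivity) (by linarith) (by positivity)
    _ ≤ ∫⁻ x, ENNReal.ofReal (2 ^ ((n : ℝ) + β)) *
          ENNReal.ofReal ((a + dist x y) ^ (-((n : ℝ) + β))) := setLIntegral_le_lintegral _ _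
    _ ≤ _ := by
        rw [lintegral_const_mul' _ _ ENNReal.ofReal_ne_top, mul_assoc]
        gcongr
        refine (h y a ha).trans_eq ?_
        congr 3
        ring

/-- The contribution to `region_bound` of the points `x` near `Ω`. Every `z` charged by such an `x`
satisfies `|z - w| ≤ 13 |x - y|`, so the singular kernels compare, and the overlap bound allows to
integrate in `x`. -/
lemma region_near (hβ : 0 < β) (hκ : IsReflKernel Ω κ c C) (hΩ : MeasurableSet Ω) :
    ∃ C' : ℝ≥0∞, C' ≠ ∞ ∧ ∀ w y, dist y w ≤ 3 * infDist y Ω →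
      ∀ f : EuclideanSpace ℝ (Fin n) → ℝ≥0∞, Measurable f → f w = 0 →
      ∫⁻ x in region Ω y ∩ near Ω, sing β x y * ∫⁻ z in Ω, prob Ω κ x z * f z ≤
        C' * ∫⁻ z in Ω, f z * sing β z w := by
  set a := ENNReal.ofReal (13 ^ ((n : ℝ) + β)) with ha
  refine ⟨a * ENNReal.ofReal c⁻¹ * ENNReal.ofReal C, by finiteness,
    fun w y hyw f hf hfw => ?_⟩
  have hdm : Measurable fun q : EuclideanSpace ℝ (Fin n) × EuclideanSpace ℝ (Fin n) =>
      infDist q.1 Ω := measurable_infDist.comp measurable_fst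
  have hkm : Measurable fun q : EuclideanSpace ℝ (Fin n) × EuclideanSpace ℝ (Fin n) =>
      κ q.1 q.2 := hκ.meas
  have hsm := measurable_sing_left (β := β) w
  have hWm : Measurable fun q : EuclideanSpace ℝ (Fin n) × EuclideanSpace ℝ (Fin n) =>
      ENNReal.ofReal (κ q.1 q.2 / infDist q.1 Ω ^ n) := by fun_prop
  have hgm : Measurable fun q : EuclideanSpace ℝ (Fin n) × EuclideanSpace ℝ (Fin n) =>
      f q.2 * sing β q.2 w := (hf.mul hsm).comp measurable_snd
  calc ∫⁻ x in region Ω y ∩ near Ω, sing β x y * ∫⁻ z in Ω, prob Ω κ x z * f z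
      ≤ ∫⁻ x in region Ω y ∩ near Ω, ∫⁻ z in Ω, a * ENNReal.ofReal c⁻¹ *
          ((f z * sing β z w) * ENNReal.ofReal (κ x z / infDist x Ω ^ n)) := by
        refine setLIntegral_mono' ((measurableSet_region y).inter (measurableSet_near Ω))
          fun x hx => ?_
        rw [← lintegral_const_mul _ ((measurable_prob_right hκ x).fun_mul hf)]
        refine lintegral_mono fun z => ?_
        by_cases hzw : z = w
        · simp [hzw, hfw]
        by_cases hd : dist x z < 3 * infDist x Ω
        · have h1 : sing β x y ≤ a * sing β z w := by
            refine sing_le hβ (by norm_num) hzw ?_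
            have h2 := dist_triangle z x w
            have h3 := dist_triangle x y w
            rw [dist_comm z x] at h2
            linarith [hx.1.2.1, hx.1.2.2]
          calc sing β x y * (prob Ω κ x z * f z)
              ≤ (a * sing β z w) * ((ENNReal.ofReal c⁻¹ *
                  ENNReal.ofReal (κ x z / infDist x Ω ^ n)) * f z) := by
                gcongr
                exact prob_le_near hκ hx.2.1 (near_lt hx.2) z
            _ = _ := by ring
        · rw [prob_eq_zero hκ hx.2.1 (not_lt.1 hd)]
          simp
    _ ≤ ∫⁻ x in near Ω, ∫⁻ z in Ω, a * ENNReal.ofReal c⁻¹ *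
          ((f z * sing β z w) * ENNReal.ofReal (κ x z / infDist x Ω ^ n)) :=
        lintegral_mono_set inter_subset_right
    _ = ∫⁻ z in Ω, ∫⁻ x in near Ω, a * ENNReal.ofReal c⁻¹ *
          ((f z * sing β z w) * ENNReal.ofReal (κ x z / infDist x Ω ^ n)) :=
        lintegral_lintegral_swap ((hgm.mul hWm).const_mul _).aemeasurable
    _ ≤ ∫⁻ z in Ω, a * ENNReal.ofReal c⁻¹ * ((f z * sing β z w) * ENNReal.ofReal C) := by
        refine setLIntegral_mono' hΩ fun z hz => ?_
        have hW1 : Measurable fun x => ENNReal.ofReal (κ x z / infDist x Ω ^ n) :=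
          hWm.comp (f := fun x : EuclideanSpace ℝ (Fin n) => (x, z)) (by fun_prop)
        rw [lintegral_const_mul _ (hW1.const_mul _), lintegral_const_mul _ hW1]
        gcongr
        exact hκ.overlap z hz
    _ = _ := by
        rw [← lintegral_const_mul _ (hf.fun_mul hsm)]
        refine lintegral_congr fun z => ?_
        ring

/-- The contribution to `region_bound` of the points `x` beyond the diameter `D` of `Ω`, where the
normalised kernel is at most `C D^{-n}` and `|x - y| ≥ D / 2`. -/
lemma region_far (hβ : 0 < β) (hκ : IsReflKernel Ω κ c C) (hΩ : MeasurableSet Ω)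
    (hD : 0 < ediam Ω) :
    ∃ C' : ℝ≥0∞, C' ≠ ∞ ∧ ∀ w ∈ Ω, ∀ y,
      ∀ f : EuclideanSpace ℝ (Fin n) → ℝ≥0∞, Measurable f → f w = 0 →
      ∫⁻ x in region Ω y ∩ {x | ediam Ω ≤ ENNReal.ofReal (infDist x Ω)},
        sing β x y * ∫⁻ z in Ω, prob Ω κ x z * f z ≤
        C' * ∫⁻ z in Ω, f z * sing β z w := by
  obtain ⟨C₁, hC₁, htail⟩ := lintegral_sing_tail (n := n) hβ
  have hFm : MeasurableSet {x : EuclideanSpace ℝ (Fin n) |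
      ediam Ω ≤ ENNReal.ofReal (infDist x Ω)} :=
    measurableSet_le measurable_const measurable_infDist.ennreal_ofReal
  refine ⟨ENNReal.ofReal c⁻¹ * (C₁ * ENNReal.ofReal (2 ^ β)), by finiteness,
    fun w hw y f hf hfw => ?_⟩
  by_cases hDt : ediam Ω = ∞
  · have : {x : EuclideanSpace ℝ (Fin n) | ediam Ω ≤ ENNReal.ofReal (infDist x Ω)} = ∅ := by
      ext x; simp [hDt]
    simp [this]
  set D := (ediam Ω).toReal with hDdef
  have hD0 : 0 < D := ENNReal.toReal_pos hD.ne' hDt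
  have hDe : ediam Ω = ENNReal.ofReal D := (ENNReal.ofReal_toReal hDt).symm
  calc ∫⁻ x in region Ω y ∩ {x | ediam Ω ≤ ENNReal.ofReal (infDist x Ω)},
        sing β x y * ∫⁻ z in Ω, prob Ω κ x z * f z
      ≤ ∫⁻ x in region Ω y ∩ {x | ediam Ω ≤ ENNReal.ofReal (infDist x Ω)},
        sing β x y * (ENNReal.ofReal c⁻¹ * ENNReal.ofReal ((D ^ n)⁻¹) * ∫⁻ z in Ω, f z) := by
        refine setLIntegral_mono' ((measurableSet_region y).inter hFm) fun x hx => ?_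
        rw [← lintegral_const_mul _ hf]
        gcongr with z
        exact prob_le_far hκ hD hx.2 z
    _ ≤ ∫⁻ x in {x | D / 2 ≤ dist x y},
        sing β x y * (ENNReal.ofReal c⁻¹ * ENNReal.ofReal ((D ^ n)⁻¹) * ∫⁻ z in Ω, f z) := by
        refine lintegral_mono_set ?_
        rintro x ⟨hx, hx2⟩
        have : D ≤ infDist x Ω := by
          have hx2 : ediam Ω ≤ ENNReal.ofReal (infDist x Ω) := hx2
          rw [hDe] at hx2
          exact (ENNReal.ofReal_le_ofReal_iff infDist_nonneg).1 hx2
        have h3 := hx.2.1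
        show D / 2 ≤ dist x y
        linarith
    _ ≤ (C₁ * ENNReal.ofReal ((D / 2) ^ (-β))) *
          (ENNReal.ofReal c⁻¹ * ENNReal.ofReal ((D ^ n)⁻¹) * ∫⁻ z in Ω, f z) := by
        rw [lintegral_mul_const _ (measurable_sing_left y)]
        gcongr
        exact htail y _ (by positivity)
    _ = ENNReal.ofReal c⁻¹ * (C₁ * ENNReal.ofReal (2 ^ β)) *
          ∫⁻ z in Ω, f z * ENNReal.ofReal ((D ^ ((n : ℝ) + β))⁻¹) := by
        rw [lintegral_mul_const _ hf]
        have e : ENNReal.ofReal ((D / 2) ^ (-β)) * ENNReal.ofReal ((D ^ n)⁻¹) =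
            ENNReal.ofReal (2 ^ β) * ENNReal.ofReal ((D ^ ((n : ℝ) + β))⁻¹) := by
          rw [← ENNReal.ofReal_mul (by positivity), ← ENNReal.ofReal_mul (by positivity)]
          congr 1
          rw [Real.rpow_neg (by positivity), Real.div_rpow hD0.le (by norm_num),
            Real.rpow_add hD0, Real.rpow_natCast]
          field_simp
        calc _ = C₁ * ENNReal.ofReal c⁻¹ * (∫⁻ z in Ω, f z) *
              (ENNReal.ofReal ((D / 2) ^ (-β)) * ENNReal.ofReal ((D ^ n)⁻¹)) := by ring
          _ = _ := by rw [e]; ring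
    _ ≤ _ := by
        refine mul_le_mul' le_rfl ?_
        refine setLIntegral_mono' hΩ fun z hz => ?_
        by_cases hzw : z = w
        · simp [hzw, hfw]
        · have h0 : 0 < dist z w := dist_pos.2 hzw
          have h1 : dist z w ≤ D := by
            have := edist_le_ediam_of_mem hz hw
            rw [hDe, edist_dist] at this
            exact (ENNReal.ofReal_le_ofReal_iff hD0.le).1 this
          unfold sing
          gcongr

/-- The averages at the points `x` that are far from `y`, relative to the distances to `Ω`, are
controlled by the singular integral over `Ω` centred at any point `w` close to `y`. -/
lemma region_bound (hβ : 0 < β) (hκ : IsReflKernel Ω κ c C) (hΩ : MeasurableSet Ω)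
    (hD : 0 < ediam Ω) :
    ∃ C' : ℝ≥0∞, C' ≠ ∞ ∧ ∀ w ∈ Ω, ∀ y, dist y w ≤ 3 * infDist y Ω →
      ∀ f : EuclideanSpace ℝ (Fin n) → ℝ≥0∞, Measurable f → f w = 0 →
      ∫⁻ x in region Ω y, sing β x y * ∫⁻ z in Ω, prob Ω κ x z * f z ≤
        C' * ∫⁻ z in Ω, f z * sing β z w := by
  obtain ⟨C₁, hC₁, h1⟩ := region_near hβ hκ hΩ
  obtain ⟨C₂, hC₂, h2⟩ := region_far hβ hκ hΩ hD
  refine ⟨C₁ + C₂, by finiteness, fun w hw y hy f hf hfw => ?_⟩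
  rw [add_mul]
  refine le_trans ?_ (add_le_add (h1 w y hy f hf hfw) (h2 w hw y f hf hfw))
  refine le_trans (lintegral_mono_set ?_) (lintegral_union_le _ _ _)
  intro x hx
  rcases lt_or_ge (ENNReal.ofReal (infDist x Ω)) (ediam Ω) with h | h
  · exact Or.inl ⟨hx, hx.1, h⟩
  · exact Or.inr ⟨hx, h⟩

/-- The modular over pairs consisting of a point of the domain and a point off its closure. -/
lemma modular_cross (hβ : 0 < β) (hφ : IsYoung φ) (hκ : IsReflKernel Ω κ c C)
    (hΩ : MeasurableSet Ω) (hD : 0 < ediam Ω) :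
    ∃ C' : ℝ≥0∞, C' ≠ ∞ ∧ ∀ u : EuclideanSpace ℝ (Fin n) → ℝ, Measurable u →
      (∀ x R, IntegrableOn u (Ω ∩ ball x R)) →
      ∫⁻ w in Ω, ∫⁻ x in {x | 0 < infDist x Ω}, yg φ (u w - avg Ω κ u x) * sing β w x ≤
        C' * ∫⁻ w in Ω, ∫⁻ z in Ω, yg φ (u w - u z) * sing β w z := by
  obtain ⟨C', hC', h⟩ := region_bound hβ hκ hΩ hD
  refine ⟨C', hC', fun u hu hui => ?_⟩
  rw [← lintegral_const_mul' _ _ hC']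
  refine setLIntegral_mono' hΩ fun w hw => ?_
  have hw0 : infDist w Ω = 0 := infDist_zero_of_mem hw
  -- a point of `Ω` is far, in the sense of `region`, from every point off the closure
  have hU : {x : EuclideanSpace ℝ (Fin n) | 0 < infDist x Ω} ⊆ region Ω w := by
    intro x hx
    have h1 : infDist x Ω ≤ dist x w := infDist_le_dist_of_mem hw
    have hx : 0 < infDist x Ω := hx
    exact ⟨hx, by linarith, by rw [hw0]; simp⟩
  have hfm : Measurable fun z => yg φ (u w - u z) := (measurable_yg hφ).comp (by fun_prop)
  calc ∫⁻ x in {x | 0 < infDist x Ω}, yg φ (u w - avg Ω κ u x) * sing β w x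
      ≤ ∫⁻ x in region Ω w, yg φ (u w - avg Ω κ u x) * sing β w x := lintegral_mono_set hU
    _ ≤ ∫⁻ x in region Ω w, sing β x w * ∫⁻ z in Ω, prob Ω κ x z * yg φ (u w - u z) := by
        refine setLIntegral_mono' (measurableSet_region w) fun x hx => ?_
        rw [mul_comm, sing_comm]
        gcongr
        exact yg_avg_le hφ hκ hD hu hui hx.1 (u w)
    _ ≤ C' * ∫⁻ z in Ω, yg φ (u w - u z) * sing β z w :=
        h w hw w (by simp [hw0]) _ hfm (by simp [yg_zero hφ])
    _ = _ := by simp only [sing_comm]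

/-- The modular over pairs off the closure of the domain that are far from each other, one of
them closer to the domain than its diameter. -/
lemma modular_region (hβ : 0 < β) (hφ : IsYoung φ) (hκ : IsReflKernel Ω κ c C)
    (hΩ : MeasurableSet Ω) (hD : 0 < ediam Ω) :
    ∃ C' : ℝ≥0∞, C' ≠ ∞ ∧ ∀ u : EuclideanSpace ℝ (Fin n) → ℝ, Measurable u →
      (∀ x R, IntegrableOn u (Ω ∩ ball x R)) →
      ∫⁻ y in near Ω, ∫⁻ x in region Ω y, yg φ (avg Ω κ u y - avg Ω κ u x) * sing β y x ≤
        C' * ∫⁻ w in Ω, ∫⁻ z in Ω, yg φ (u w - u z) * sing β w z := by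
  obtain ⟨C', hC', h⟩ := region_bound hβ hκ hΩ hD
  refine ⟨C' * (ENNReal.ofReal c⁻¹ * ENNReal.ofReal C), by finiteness, fun u hu hui => ?_⟩
  have hyu : Measurable fun q : EuclideanSpace ℝ (Fin n) × EuclideanSpace ℝ (Fin n) =>
      yg φ (u q.1 - u q.2) := (measurable_yg hφ).comp (by fun_prop)
  have hyus : Measurable fun q : EuclideanSpace ℝ (Fin n) × EuclideanSpace ℝ (Fin n) =>
      yg φ (u q.1 - u q.2) * sing β q.1 q.2 := hyu.mul measurable_sing
  set T : EuclideanSpace ℝ (Fin n) → ℝ≥0∞ :=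
    fun w => ∫⁻ z in Ω, yg φ (u w - u z) * sing β w z with hT
  have hTm : Measurable T := hyus.lintegral_prod_right'
  have key : ∀ y ∈ near Ω,
      ∫⁻ x in region Ω y, yg φ (avg Ω κ u y - avg Ω κ u x) * sing β y x ≤
        ∫⁻ w in Ω, prob Ω κ y w * (C' * T w) := by
    intro y hy
    set Gx : EuclideanSpace ℝ (Fin n) → EuclideanSpace ℝ (Fin n) → ℝ≥0∞ :=
      fun x w => ∫⁻ z in Ω, prob Ω κ x z * yg φ (u w - u z) with hGx
    have hGm : Measurable fun q : EuclideanSpace ℝ (Fin n) × EuclideanSpace ℝ (Fin n) =>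
        Gx q.1 q.2 := by
      have h3 : Measurable fun p : (EuclideanSpace ℝ (Fin n) × EuclideanSpace ℝ (Fin n)) ×
          EuclideanSpace ℝ (Fin n) => prob Ω κ p.1.1 p.2 * yg φ (u p.1.2 - u p.2) :=
        ((measurable_prob hκ).comp (f := fun p : (EuclideanSpace ℝ (Fin n) ×
          EuclideanSpace ℝ (Fin n)) × EuclideanSpace ℝ (Fin n) => (p.1.1, p.2))
            (by fun_prop)).mul ((measurable_yg hφ).comp (by fun_prop))
      exact h3.lintegral_prod_right'
    have hpy := measurable_prob_right hκ y
    have hFm : Measurable fun q : EuclideanSpace ℝ (Fin n) × EuclideanSpace ℝ (Fin n) =>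
        sing β q.1 y * (prob Ω κ y q.2 * Gx q.1 q.2) :=
      ((measurable_sing_left y).comp measurable_fst).mul ((hpy.comp measurable_snd).mul hGm)
    calc ∫⁻ x in region Ω y, yg φ (avg Ω κ u y - avg Ω κ u x) * sing β y x
        ≤ ∫⁻ x in region Ω y, ∫⁻ w in Ω, sing β x y * (prob Ω κ y w * Gx x w) := by
          refine setLIntegral_mono' (measurableSet_region y) fun x hx => ?_
          have hG1 : Measurable fun w => Gx x w :=
            hGm.comp (f := fun w : EuclideanSpace ℝ (Fin n) => (x, w)) (by fun_prop)
          rw [lintegral_const_mul _ (hpy.fun_mul hG1), mul_comm, sing_comm, yg_sub_comm]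
          gcongr
          refine (yg_avg_le hφ hκ hD hu hui hy.1 _).trans (lintegral_mono fun w => ?_)
          gcongr
          rw [yg_sub_comm]
          exact yg_avg_le hφ hκ hD hu hui hx.1 (u w)
      _ = ∫⁻ w in Ω, ∫⁻ x in region Ω y, sing β x y * (prob Ω κ y w * Gx x w) :=
          lintegral_lintegral_swap hFm.aemeasurable
      _ ≤ ∫⁻ w in Ω, prob Ω κ y w * (C' * T w) := by
          refine setLIntegral_mono' hΩ fun w hw => ?_
          have hG1 : Measurable fun x => Gx x w :=
            hGm.comp (f := fun x : EuclideanSpace ℝ (Fin n) => (x, w)) (by fun_prop)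
          simp only [mul_left_comm _ (prob Ω κ y w)]
          rw [lintegral_const_mul _ ((measurable_sing_left y).fun_mul hG1)]
          by_cases hd : dist y w < 3 * infDist y Ω
          · gcongr
            refine (h w hw y hd.le _ ((measurable_yg hφ).comp (by fun_prop))
              (by simp [yg_zero hφ])).trans_eq ?_
            simp only [hT, Function.comp_def, sing_comm]
          · rw [prob_eq_zero hκ hy.1 (not_lt.1 hd)]
            simp
  have hdm : Measurable fun q : EuclideanSpace ℝ (Fin n) × EuclideanSpace ℝ (Fin n) =>
      infDist q.1 Ω := measurable_infDist.comp measurable_fst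
  have hkm : Measurable fun q : EuclideanSpace ℝ (Fin n) × EuclideanSpace ℝ (Fin n) =>
      κ q.1 q.2 := hκ.meas
  have hWm : Measurable fun q : EuclideanSpace ℝ (Fin n) × EuclideanSpace ℝ (Fin n) =>
      ENNReal.ofReal (κ q.1 q.2 / infDist q.1 Ω ^ n) := by fun_prop
  have hgm : Measurable fun q : EuclideanSpace ℝ (Fin n) × EuclideanSpace ℝ (Fin n) =>
      C' * T q.2 := (hTm.comp measurable_snd).const_mul _
  calc ∫⁻ y in near Ω, ∫⁻ x in region Ω y, yg φ (avg Ω κ u y - avg Ω κ u x) * sing β y x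
      ≤ ∫⁻ y in near Ω, ∫⁻ w in Ω, prob Ω κ y w * (C' * T w) :=
        setLIntegral_mono' (measurableSet_near Ω) key
    _ = ∫⁻ w in Ω, ∫⁻ y in near Ω, prob Ω κ y w * (C' * T w) :=
        lintegral_lintegral_swap ((measurable_prob hκ).mul hgm).aemeasurable
    _ ≤ ∫⁻ w in Ω, (ENNReal.ofReal c⁻¹ * ENNReal.ofReal C) * (C' * T w) := by
        refine setLIntegral_mono' hΩ fun w hw => ?_
        rw [lintegral_mul_const _ (measurable_prob_left hκ w)]
        gcongr
        have hW1 : Measurable fun x => ENNReal.ofReal (κ x w / infDist x Ω ^ n) :=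
          hWm.comp (f := fun x : EuclideanSpace ℝ (Fin n) => (x, w)) (by fun_prop)
        calc ∫⁻ y in near Ω, prob Ω κ y w
            ≤ ∫⁻ y in near Ω, ENNReal.ofReal c⁻¹ *
                ENNReal.ofReal (κ y w / infDist y Ω ^ n) :=
              setLIntegral_mono' (measurableSet_near Ω)
                fun y hy => prob_le_near hκ hy.1 (near_lt hy) w
          _ ≤ _ := by
              rw [lintegral_const_mul _ hW1]
              gcongr
              exact hκ.overlap w hw
    _ = _ := by
        rw [← lintegral_const_mul _ hTm]
        refine lintegral_congr fun w => ?_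
        ring

end

/-! ### Pairs of points that are close relative to their distance to the domain -/

section
variable {n : ℕ} {Ω : Set (EuclideanSpace ℝ (Fin n))}
  {κ : EuclideanSpace ℝ (Fin n) → EuclideanSpace ℝ (Fin n) → ℝ} {c C β : ℝ} {φ : ℝ → ℝ}

/-- Beyond the diameter of `Ω` the averages are constant. -/
lemma avg_far (hκ : IsReflKernel Ω κ c C) (hΩ : MeasurableSet Ω)
    (u : EuclideanSpace ℝ (Fin n) → ℝ) {x y : EuclideanSpace ℝ (Fin n)}
    (hx : ediam Ω ≤ ENNReal.ofReal (infDist x Ω)) (hy : ediam Ω ≤ ENNReal.ofReal (infDist y Ω)) :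
    avg Ω κ u x = avg Ω κ u y := by
  unfold avg kmass
  congr 1
  · exact setIntegral_congr_fun hΩ fun z hz => by rw [hκ.far z hz x y hx hy]
  · exact setIntegral_congr_fun hΩ fun z hz => hκ.far z hz x y hx hy

lemma abs_infDist_sub_le (x y : EuclideanSpace ℝ (Fin n)) :
    |infDist x Ω - infDist y Ω| ≤ dist x y := by
  rw [abs_le]
  have h1 := infDist_le_infDist_add_dist (s := Ω) (x := x) (y := y)
  have h2 := infDist_le_infDist_add_dist (s := Ω) (x := y) (y := x)
  rw [dist_comm y x] at h2
  constructor <;> linarith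

/-- The lower mass bound at `x` persists at the points `y` at Whitney scale from `x`, also when `y`
lies beyond twice the diameter. -/
lemma kmass_lower (hκ : IsReflKernel Ω κ c C) {x y : EuclideanSpace ℝ (Fin n)}
    (hx : 0 < infDist x Ω) (hxD : ENNReal.ofReal (infDist x Ω) < 2 * ediam Ω)
    (hxy : dist x y < infDist x Ω / 2) :
    c * (infDist x Ω / 2) ^ n ≤ kmass Ω κ y := by
  have hc := hκ.c_pos
  have h1 := abs_le.1 (abs_infDist_sub_le (Ω := Ω) x y)
  rcases lt_or_ge (ENNReal.ofReal (infDist y Ω)) (2 * ediam Ω) with h | h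
  · refine le_trans ?_ (hκ.mass y (by linarith) h)
    gcongr
    linarith
  · have h' : ediam Ω ≤ ENNReal.ofReal (infDist y Ω) :=
      le_trans (le_mul_of_one_le_left zero_le one_le_two) h
    have ht : ediam Ω ≠ ∞ := ne_top_of_le_ne_top ENNReal.ofReal_ne_top h'
    refine le_trans ?_ (hκ.mass_far y h')
    gcongr
    have h3 := (ENNReal.toReal_lt_toReal ENNReal.ofReal_ne_top
      (ENNReal.mul_ne_top ENNReal.ofNat_ne_top ht)).2 hxD
    rw [ENNReal.toReal_ofReal hx.le, ENNReal.toReal_mul] at h3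
    simp at h3
    linarith

/-- The extension is Lipschitz at Whitney scale, with constant the mean oscillation. -/
lemma avg_lip (hκ : IsReflKernel Ω κ c C) (hΩ : MeasurableSet Ω) (hD : 0 < ediam Ω)
    {u : EuclideanSpace ℝ (Fin n) → ℝ} (hu : Measurable u)
    (hui : ∀ x R, IntegrableOn u (Ω ∩ ball x R)) {x y : EuclideanSpace ℝ (Fin n)}
    (hx : 0 < infDist x Ω) (hxD : ENNReal.ofReal (infDist x Ω) < 2 * ediam Ω)
    (hxy : dist x y < infDist x Ω / 2) :
    |avg Ω κ u x - avg Ω κ u y| ≤ dist x y / infDist x Ω *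
      (C / (c * (infDist x Ω / 2) ^ n) *
        ∫ z in Ω ∩ ball x (5 * infDist x Ω), |u z - avg Ω κ u x|) := by
  have hc := hκ.c_pos
  have hC := hκ.C_nonneg
  set d := infDist x Ω with hd
  set a := avg Ω κ u x with ha
  have hdy := abs_le.1 (abs_infDist_sub_le (Ω := Ω) x y)
  have hy : 0 < infDist y Ω := by linarith
  have hKy := kmass_lower hκ hx hxD hxy
  have hKp := kmass_pos hκ hD hy
  have hInt : ∀ y, 0 < infDist y Ω → IntegrableOn (fun z => κ y z * (a - u z)) Ω := by
    intro y hy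
    simp only [mul_sub]
    exact ((kernel_integrable hκ hy).mul_const a).integrableOn.sub
      (integrable_kernel_mul hκ hu.aestronglyMeasurable hui hy)
  -- the kernel at `x` may be subtracted, since `a - u` has mean zero with respect to it
  have h1 : kmass Ω κ y * (a - avg Ω κ u y) = ∫ z in Ω, (κ y z - κ x z) * (a - u z) := by
    have e1 := integral_prob_mul_sub hκ hD hu hui hy a
    have e2 := integral_prob_mul_sub hκ hD hu hui hx a
    rw [← ha, sub_self, mul_zero] at e2
    simp only [sub_mul]
    rw [integral_sub (hInt y hy) (hInt x hx), e1, e2, sub_zero]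
  have hIi : IntegrableOn (fun z => |u z - a|) (Ω ∩ ball x (5 * d)) :=
    ((hui x (5 * d)).sub (integrableOn_const
      ((measure_mono inter_subset_right).trans_lt measure_ball_lt_top).ne)).abs
  have h2 : |∫ z in Ω, (κ y z - κ x z) * (a - u z)| ≤
      C * (dist x y / d) * ∫ z in Ω ∩ ball x (5 * d), |u z - a| := by
    rw [← integral_const_mul, inter_comm, ← Measure.restrict_restrict measurableSet_ball,
      ← integral_indicator measurableSet_ball, ← Real.norm_eq_abs]
    refine norm_integral_le_of_norm_le ?_ ?_
    · rw [integrable_indicator_iff measurableSet_ball, IntegrableOn,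
        Measure.restrict_restrict measurableSet_ball, inter_comm]
      exact hIi.const_mul _
    · filter_upwards [ae_restrict_mem hΩ] with z hz
      rw [norm_mul, Real.norm_eq_abs, Real.norm_eq_abs, abs_sub_comm a]
      by_cases hzB : z ∈ ball x (5 * d)
      · rw [indicator_of_mem hzB]
        gcongr
        rw [abs_sub_comm]
        exact hκ.lip z hz x y hx hxy
      · rw [indicator_of_notMem hzB]
        rw [mem_ball, not_lt, dist_comm] at hzB
        have k1 : κ x z = 0 := by
          by_contra h0
          have := hκ.supp x z hx h0
          linarith
        have k2 : κ y z = 0 := by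
          by_contra h0
          have := hκ.supp y z hy h0
          have := dist_triangle x y z
          linarith
        simp [k1, k2]
  have hI0 : 0 ≤ ∫ z in Ω ∩ ball x (5 * d), |u z - a| := integral_nonneg fun _ => abs_nonneg _
  rw [← h1, abs_mul, abs_of_pos hKp] at h2
  have h3 : c * (d / 2) ^ n * |a - avg Ω κ u y| ≤
      C * (dist x y / d) * ∫ z in Ω ∩ ball x (5 * d), |u z - a| :=
    le_trans (by gcongr) h2
  have hp : 0 < c * (d / 2) ^ n := by positivity
  rw [mul_comm, ← le_div_iff₀ hp] at h3
  refine h3.trans_eq ?_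
  ring

/-- Two applications of Jensen's inequality bound `φ` of the mean oscillation of `u` on
`B(x, 5 d) ∩ Ω` about its average at `x` by the double average of `φ(|u z - u w|)`. -/
lemma local_mean (hφ : IsYoung φ) (hκ : IsReflKernel Ω κ c C)
    (hD : 0 < ediam Ω)
    {u : EuclideanSpace ℝ (Fin n) → ℝ} (hu : Measurable u)
    (hui : ∀ x R, IntegrableOn u (Ω ∩ ball x R)) {x : EuclideanSpace ℝ (Fin n)}
    (hx : 0 < infDist x Ω) (hxD : ENNReal.ofReal (infDist x Ω) < 2 * ediam Ω) :
    0 < volume.real (Ω ∩ ball x (5 * infDist x Ω)) ∧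
    ENNReal.ofReal (φ ((∫ z in Ω ∩ ball x (5 * infDist x Ω), |u z - avg Ω κ u x|) /
      volume.real (Ω ∩ ball x (5 * infDist x Ω)))) ≤
      ∫⁻ z in Ω ∩ ball x (5 * infDist x Ω), ENNReal.ofReal ((c * infDist x Ω ^ n)⁻¹) *
        ∫⁻ w in Ω, prob Ω κ x w * yg φ (u z - u w) := by
  have hc := hκ.c_pos
  set d := infDist x Ω with hd
  set a := avg Ω κ u x with ha
  set B := Ω ∩ ball x (5 * d) with hB
  have hBt : volume B ≠ ∞ := ((measure_mono inter_subset_right).trans_lt measure_ball_lt_top).ne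
  set V := volume.real B with hV
  have hVK : c * d ^ n ≤ V := by
    refine (hκ.mass x hx hxD).trans ?_
    calc ∫ z in Ω, κ x z ≤ ∫ z in Ω, (ball x (5 * d)).indicator (fun _ => (1 : ℝ)) z := by
          refine integral_mono (kernel_integrable hκ hx).integrableOn ?_ fun z => ?_
          · exact ((integrable_indicator_iff measurableSet_ball).2
              (integrableOn_const measure_ball_lt_top.ne)).integrableOn
          · by_cases h : κ x z = 0
            · simp only [h]; exact indicator_nonneg (fun _ _ => zero_le_one) _
            · rw [indicator_of_mem (by
                rw [mem_ball, dist_comm]; linarith [hκ.supp x z hx h])]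
              exact hκ.le_one x z
      _ = V := by
          rw [integral_indicator measurableSet_ball, Measure.restrict_restrict measurableSet_ball,
            inter_comm, ← hB]
          simp [hV]
  have hV0 : 0 < V := lt_of_lt_of_le (by positivity) hVK
  refine ⟨hV0, ?_⟩
  have hIi : IntegrableOn (fun z => |u z - a|) B :=
    ((hui x (5 * d)).sub (integrableOn_const hBt)).abs
  have hj := jensen_weighted (volume.restrict B) (young_abs_convex hφ) (young_abs_cont hφ)
    (fun t => young_nonneg hφ (abs_nonneg t)) (p := fun _ => V⁻¹)
    (f := fun z => |u z - a|) measurable_const (fun _ => by positivity)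
    (integrableOn_const hBt) (by
      rw [setIntegral_const, smul_eq_mul, mul_inv_cancel₀ hV0.ne']) (by fun_prop)
    (hIi.const_mul _)
  have hI0 : 0 ≤ ∫ z in B, |u z - a| := integral_nonneg fun _ => abs_nonneg _
  simp only [integral_const_mul, abs_abs] at hj
  rw [inv_mul_eq_div, abs_of_nonneg (by positivity)] at hj
  refine hj.trans (lintegral_mono fun z => ?_)
  refine mul_le_mul' (ENNReal.ofReal_le_ofReal (by gcongr)) ?_
  exact yg_avg_le hφ hκ hD hu hui hx (u z)

/-- The modular over pairs at Whitney scale. The Lipschitz bound `avg_lip` reduces the integral in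
`y` to `lintegral_lipschitz_profile`, `local_mean` replaces the oscillation by a double integral over
`z` and `w`, and the remaining power of the distance of `x` is integrated in `x` by `lintegral_tail`. -/
lemma modular_local (hn : 1 ≤ n) (hβ : 0 < β) (hφ : IsYoung φ) (hCβ : CbetaFinite β φ)
    (hκ : IsReflKernel Ω κ c C) (hΩ : MeasurableSet Ω) (hD : 0 < ediam Ω) :
    ∃ A : ℝ, 1 ≤ A ∧ ∃ C' : ℝ≥0∞, C' ≠ ∞ ∧
      ∀ u : EuclideanSpace ℝ (Fin n) → ℝ, Measurable u →
      (∀ x R, IntegrableOn u (Ω ∩ ball x R)) →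
      ∫⁻ x in {x | 0 < infDist x Ω}, ∫⁻ y in ball x (infDist x Ω / 2),
        yg φ ((avg Ω κ u x - avg Ω κ u y) / A) * sing β x y ≤
        C' * ∫⁻ w in Ω, ∫⁻ z in Ω, yg φ (u w - u z) * sing β w z := by
  have hc := hκ.c_pos
  have hC := hκ.C_nonneg
  obtain ⟨CL, hCL, hprof⟩ := lintegral_lipschitz_profile hn hφ hCβ
  set γ : ℝ := β + 2 * n with hγ
  have hn' : (0 : ℝ) < n := by exact_mod_cast hn
  obtain ⟨CT, hCT, htail⟩ := lintegral_tail (n := n) γ (by linarith)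
  set ω := (volume (ball (0 : EuclideanSpace ℝ (Fin n)) 1)).toReal with hω
  -- `A` absorbs the constant of `avg_lip`, so that only `φ` of the mean oscillation appears
  set A := max 1 (C * 2 ^ n * 5 ^ n * ω / c) with hA
  have hA1 : 1 ≤ A := le_max_left _ _
  have hA0 : 0 < A := lt_of_lt_of_le one_pos hA1
  set b := CL * ENNReal.ofReal (c⁻¹ ^ 2 * 13 ^ γ) with hb
  have hbt : b ≠ ∞ := by finiteness
  refine ⟨A, hA1, b * CT, by finiteness, fun u hu hui => ?_⟩
  have hUm : MeasurableSet {x : EuclideanSpace ℝ (Fin n) | 0 < infDist x Ω} :=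
    measurableSet_lt measurable_const measurable_infDist
  set Kf : EuclideanSpace ℝ (Fin n) → EuclideanSpace ℝ (Fin n) → EuclideanSpace ℝ (Fin n) → ℝ≥0∞ :=
    fun x z w => ENNReal.ofReal ((dist z w + dist x z) ^ (-γ)) with hKf
  have key : ∀ x ∈ {x : EuclideanSpace ℝ (Fin n) | 0 < infDist x Ω},
      ∫⁻ y in ball x (infDist x Ω / 2),
        yg φ ((avg Ω κ u x - avg Ω κ u y) / A) * sing β x y ≤
      ∫⁻ z in Ω, ∫⁻ w in Ω, b * (yg φ (u z - u w) * Kf x z w) := by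
    intro x hx
    have hx : 0 < infDist x Ω := hx
    set d := infDist x Ω with hd
    rcases lt_or_ge (ENNReal.ofReal d) (2 * ediam Ω) with hxD | hxD
    swap
    -- beyond twice the diameter the extension is constant at Whitney scale
    · refine le_trans (le_of_eq ?_) zero_le
      rw [setLIntegral_congr_fun (g := fun _ => 0) measurableSet_ball, lintegral_zero]
      intro y hy
      have hy' : dist x y < d / 2 := by rw [dist_comm]; exact mem_ball.1 hy
      have hdy := abs_le.1 (abs_infDist_sub_le (Ω := Ω) x y)
      have h1 : ediam Ω ≤ ENNReal.ofReal d :=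
        le_trans (le_mul_of_one_le_left zero_le one_le_two) hxD
      have h2 : ediam Ω ≤ ENNReal.ofReal (infDist y Ω) := by
        refine (ENNReal.mul_le_mul_iff_right two_ne_zero ENNReal.ofNat_ne_top).1 (hxD.trans ?_)
        have e : (2 : ℝ≥0∞) * ENNReal.ofReal (infDist y Ω) =
            ENNReal.ofReal (2 * infDist y Ω) := by
          rw [ENNReal.ofReal_mul (by norm_num)]; simp
        rw [e]
        exact ENNReal.ofReal_le_ofReal (by linarith)
      simp only [avg_far hκ hΩ u h1 h2, sub_self, zero_div, yg_zero hφ, zero_mul]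
    obtain ⟨hV0, hmean⟩ := local_mean hφ hκ hD hu hui hx hxD
    set B := Ω ∩ ball x (5 * d) with hB
    have hBm : MeasurableSet B := hΩ.inter measurableSet_ball
    set V := volume.real B with hV
    set I := ∫ z in B, |u z - avg Ω κ u x| with hI
    have hI0 : 0 ≤ I := integral_nonneg fun _ => abs_nonneg _
    have hS0 : 0 ≤ I / V := by positivity
    have hVle : V ≤ (5 * d) ^ n * ω := by
      have : volume B ≤ ENNReal.ofReal ((5 * d) ^ n) *
          volume (ball (0 : EuclideanSpace ℝ (Fin n)) 1) :=
        (measure_mono inter_subset_right).trans_eq (vol_ball hn x (r := 5 * d) (by positivity))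
      have := ENNReal.toReal_mono (by finiteness) this
      rwa [ENNReal.toReal_mul, ENNReal.toReal_ofReal (by positivity)] at this
    calc ∫⁻ y in ball x (d / 2), yg φ ((avg Ω κ u x - avg Ω κ u y) / A) * sing β x y
        ≤ ∫⁻ y in ball x (d / 2),
            ENNReal.ofReal (φ (dist x y / d * (I / V)) / dist x y ^ ((n : ℝ) + β)) := by
          refine setLIntegral_mono' measurableSet_ball fun y hy => ?_
          have hy' : dist x y < d / 2 := by rw [dist_comm]; exact mem_ball.1 hy
          have h1 := avg_lip hκ hΩ hD hu hui hx hxD hy'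
          have h2 : |(avg Ω κ u x - avg Ω κ u y) / A| ≤ dist x y / d * (I / V) := by
            rw [abs_div, abs_of_pos hA0, div_le_iff₀ hA0]
            refine h1.trans ?_
            rw [mul_assoc]
            refine mul_le_mul_of_nonneg_left ?_ (by positivity)
            rw [← hd, ← hB, ← hI, div_mul_eq_mul_div, div_mul_eq_mul_div,
              div_le_div_iff₀ (by positivity) hV0]
            have h3 : C * 2 ^ n * 5 ^ n * ω / c ≤ A := le_max_right _ _
            calc C * I * V ≤ C * I * ((5 * d) ^ n * ω) := by gcongr
              _ = I * (C * 2 ^ n * 5 ^ n * ω / c) * (c * (d / 2) ^ n) := by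
                  rw [mul_pow, div_pow]; field_simp
              _ ≤ I * A * (c * (d / 2) ^ n) := by gcongr
          rw [div_eq_mul_inv (φ _), ENNReal.ofReal_mul' (by positivity)]
          refine mul_le_mul' (ENNReal.ofReal_le_ofReal ?_) le_rfl
          exact young_mono hφ (mem_Ici.2 (abs_nonneg _)) (mem_Ici.2 (by positivity)) h2
      _ ≤ ∫⁻ y in ball x d,
            ENNReal.ofReal (φ (dist x y / d * (I / V)) / dist x y ^ ((n : ℝ) + β)) :=
          lintegral_mono_set (ball_subset_ball (by linarith))
      _ ≤ CL * ENNReal.ofReal (d ^ (-β)) * ENNReal.ofReal (φ (I / V)) := hprof x d _ hx hS0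
      _ ≤ CL * ENNReal.ofReal (d ^ (-β)) * ∫⁻ z in B, ENNReal.ofReal ((c * d ^ n)⁻¹) *
            ∫⁻ w in Ω, prob Ω κ x w * yg φ (u z - u w) := by gcongr
      _ = ∫⁻ z in B, ∫⁻ w in Ω, (CL * ENNReal.ofReal (d ^ (-β)) *
            ENNReal.ofReal ((c * d ^ n)⁻¹)) * (prob Ω κ x w * yg φ (u z - u w)) := by
          rw [← lintegral_const_mul' _ _ (by finiteness)]
          refine lintegral_congr fun z => ?_
          rw [lintegral_const_mul' _ _ (by finiteness), mul_assoc (CL * _)]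
      _ ≤ ∫⁻ z in B, ∫⁻ w in Ω, b * (yg φ (u z - u w) * Kf x z w) := by
          refine setLIntegral_mono' hBm fun z hz => lintegral_mono fun w => ?_
          by_cases hzw : z = w
          · simp [hzw, yg_zero hφ]
          by_cases hxw : dist x w < 3 * d
          swap
          · rw [prob_eq_zero hκ hx (not_lt.1 hxw)]; simp
          have hxz : dist x z < 5 * d := by rw [dist_comm]; exact mem_ball.1 hz.2
          have hs : 0 < dist z w := dist_pos.2 hzw
          -- `|z - w| < 8 d` and `|x - z| < 5 d`
          have hs2 : (dist z w + dist x z) / 13 ≤ d := by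
            have := dist_triangle z x w
            rw [dist_comm z x] at this
            linarith
          have hprob : prob Ω κ x w ≤ ENNReal.ofReal ((c * d ^ n)⁻¹) := by
            refine ENNReal.ofReal_le_ofReal ?_
            rw [inv_eq_one_div]
            have := hκ.mass x hx hxD
            have := hκ.le_one x w
            unfold kmass
            gcongr
          have hreal : d ^ (-β) * (c * d ^ n)⁻¹ * (c * d ^ n)⁻¹ ≤
              c⁻¹ ^ 2 * 13 ^ γ * (dist z w + dist x z) ^ (-γ) := by
            have e1 : d ^ (-β) * (c * d ^ n)⁻¹ * (c * d ^ n)⁻¹ = c⁻¹ ^ 2 * d ^ (-γ) := by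
              rw [hγ, Real.rpow_neg hx.le, Real.rpow_neg hx.le, Real.rpow_add hx, two_mul,
                Real.rpow_add hx, Real.rpow_natCast]
              field_simp
            have e2 : d ^ (-γ) ≤ ((dist z w + dist x z) / 13) ^ (-γ) :=
              Real.rpow_le_rpow_of_nonpos (by positivity) hs2 (by linarith)
            have e3 : ((dist z w + dist x z) / 13) ^ (-γ) =
                13 ^ γ * (dist z w + dist x z) ^ (-γ) := by
              rw [Real.div_rpow (by positivity) (by norm_num), Real.rpow_neg (by norm_num : (0:ℝ) ≤ 13)]
              field_simp
            rw [e1, mul_assoc, ← e3]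
            gcongr
          calc (CL * ENNReal.ofReal (d ^ (-β)) * ENNReal.ofReal ((c * d ^ n)⁻¹)) *
                (prob Ω κ x w * yg φ (u z - u w))
              ≤ (CL * ENNReal.ofReal (d ^ (-β)) * ENNReal.ofReal ((c * d ^ n)⁻¹)) *
                (ENNReal.ofReal ((c * d ^ n)⁻¹) * yg φ (u z - u w)) := by gcongr
            _ = CL * yg φ (u z - u w) *
                  ENNReal.ofReal (d ^ (-β) * (c * d ^ n)⁻¹ * (c * d ^ n)⁻¹) := by
                rw [ENNReal.ofReal_mul (by positivity), ENNReal.ofReal_mul (by positivity)]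
                ring
            _ ≤ CL * yg φ (u z - u w) *
                  ENNReal.ofReal (c⁻¹ ^ 2 * 13 ^ γ * (dist z w + dist x z) ^ (-γ)) := by gcongr
            _ = b * (yg φ (u z - u w) * Kf x z w) := by
                rw [ENNReal.ofReal_mul (by positivity), hb, hKf]
                ring
      _ ≤ _ := lintegral_mono_set inter_subset_left
  have hm3 : Measurable fun p : (EuclideanSpace ℝ (Fin n) × EuclideanSpace ℝ (Fin n)) ×
      EuclideanSpace ℝ (Fin n) =>
        b * (yg φ (u p.1.2 - u p.2) * Kf p.1.1 p.1.2 p.2) := by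
    have h1 : Measurable fun p : (EuclideanSpace ℝ (Fin n) × EuclideanSpace ℝ (Fin n)) ×
      EuclideanSpace ℝ (Fin n) => yg φ (u p.1.2 - u p.2) :=
      (measurable_yg hφ).comp (by fun_prop)
    simp only [hKf]
    fun_prop
  have hm2 : Measurable fun q : EuclideanSpace ℝ (Fin n) × EuclideanSpace ℝ (Fin n) =>
      ∫⁻ w in Ω, b * (yg φ (u q.2 - u w) * Kf q.1 q.2 w) := hm3.lintegral_prod_right'
  calc _ ≤ ∫⁻ x in {x | 0 < infDist x Ω}, ∫⁻ z in Ω, ∫⁻ w in Ω,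
          b * (yg φ (u z - u w) * Kf x z w) := setLIntegral_mono' hUm key
    _ ≤ ∫⁻ x, ∫⁻ z in Ω, ∫⁻ w in Ω, b * (yg φ (u z - u w) * Kf x z w) :=
        setLIntegral_le_lintegral _ _
    _ = ∫⁻ z in Ω, ∫⁻ x, ∫⁻ w in Ω, b * (yg φ (u z - u w) * Kf x z w) :=
        lintegral_lintegral_swap hm2.aemeasurable
    _ = ∫⁻ z in Ω, ∫⁻ w in Ω, ∫⁻ x, b * (yg φ (u z - u w) * Kf x z w) := by
        refine lintegral_congr fun z => ?_
        refine lintegral_lintegral_swap (Measurable.aemeasurable ?_)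
        exact hm3.comp (f := fun q : EuclideanSpace ℝ (Fin n) × EuclideanSpace ℝ (Fin n) =>
          ((q.1, z), q.2)) (by fun_prop)
    _ ≤ ∫⁻ z in Ω, ∫⁻ w in Ω, b * CT * (yg φ (u z - u w) * sing β z w) := by
        refine lintegral_mono fun z => lintegral_mono fun w => ?_
        by_cases hzw : z = w
        · simp [hzw, yg_zero hφ]
        have hs : 0 < dist z w := dist_pos.2 hzw
        have hKm : Measurable fun x => Kf x z w := by simp only [hKf]; fun_prop
        rw [lintegral_const_mul _ (hKm.const_mul _), lintegral_const_mul _ hKm, mul_assoc b,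
          mul_left_comm CT]
        gcongr
        refine (htail z (dist z w) hs).trans_eq ?_
        rw [sing, ← Real.rpow_neg hs.le]
        congr 3
        rw [hγ]; ring
    _ = _ := by
        rw [← lintegral_const_mul' _ _ (by finiteness)]
        refine lintegral_congr fun z => ?_
        rw [lintegral_const_mul' _ _ (by finiteness)]

end

/-! ### The modular of the extension -/

section
variable {n : ℕ} {Ω : Set (EuclideanSpace ℝ (Fin n))}
  {κ : EuclideanSpace ℝ (Fin n) → EuclideanSpace ℝ (Fin n) → ℝ} {c C β : ℝ} {φ : ℝ → ℝ}

lemma yg_div_le (hφ : IsYoung φ) {A : ℝ} (hA : 1 ≤ A) (t : ℝ) : yg φ (t / A) ≤ yg φ t := by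
  refine yg_mono hφ ?_
  rw [abs_div, abs_of_pos (lt_of_lt_of_le one_pos hA)]
  exact div_le_self (abs_nonneg _) hA

lemma lintegral_symmetrize {U : Set (EuclideanSpace ℝ (Fin n))}
    {F : EuclideanSpace ℝ (Fin n) → EuclideanSpace ℝ (Fin n) → ℝ≥0∞}
    (hF : Measurable (Function.uncurry F)) :
    ∫⁻ x in U, ∫⁻ y in U, (F x y + F y x) = 2 * ∫⁻ x in U, ∫⁻ y in U, F x y := by
  have h1 : ∀ x, ∫⁻ y in U, (F x y + F y x) =
      (∫⁻ y in U, F x y) + ∫⁻ y in U, F y x := fun x =>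
    lintegral_add_left hF.of_uncurry_left _
  simp only [h1]
  rw [lintegral_add_left (Measurable.lintegral_prod_right hF),
    lintegral_lintegral_swap (f := fun x y => F y x) (hF.comp measurable_swap).aemeasurable,
    two_mul]

/-- The part of the modular of the extension carried by pairs of points outside the closure
of `Ω`: two such points are close relative to their distance to `Ω`, or separated with one of
them near `Ω`, or both far away, where the extension is constant. -/
lemma modular_outer (hn : 1 ≤ n) (hβ : 0 < β) (hφ : IsYoung φ) (hCβ : CbetaFinite β φ)
    (hκ : IsReflKernel Ω κ c C) (hΩ : MeasurableSet Ω) (hD : 0 < ediam Ω) :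
    ∃ A : ℝ, 1 ≤ A ∧ ∃ C' : ℝ≥0∞, C' ≠ ∞ ∧
      ∀ u : EuclideanSpace ℝ (Fin n) → ℝ, Measurable u →
      (∀ x R, IntegrableOn u (Ω ∩ ball x R)) →
      ∫⁻ x in {x | 0 < infDist x Ω}, ∫⁻ y in {x | 0 < infDist x Ω},
        yg φ ((avg Ω κ u x - avg Ω κ u y) / A) * sing β x y ≤
        C' * ∫⁻ w in Ω, ∫⁻ z in Ω, yg φ (u w - u z) * sing β w z := by
  obtain ⟨A, hA1, C₁, hC₁, hloc⟩ := modular_local hn hβ hφ hCβ hκ hΩ hD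
  obtain ⟨C₂, hC₂, hreg⟩ := modular_region hβ hφ hκ hΩ hD
  refine ⟨A, hA1, 2 * (C₁ + C₂), by finiteness, fun u hu hui => ?_⟩
  set U := {x : EuclideanSpace ℝ (Fin n) | 0 < infDist x Ω} with hU
  have hUm : MeasurableSet U := measurableSet_lt measurable_const measurable_infDist
  have hav : Measurable (avg Ω κ u) := measurable_avg hκ hu
  set J : EuclideanSpace ℝ (Fin n) → EuclideanSpace ℝ (Fin n) → ℝ≥0∞ := fun x y =>
    yg φ ((avg Ω κ u x - avg Ω κ u y) / A) * sing β x y with hJ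
  have hJm : Measurable (Function.uncurry J) := by
    have h1 : Measurable fun q : EuclideanSpace ℝ (Fin n) × EuclideanSpace ℝ (Fin n) =>
        yg φ ((avg Ω κ u q.1 - avg Ω κ u q.2) / A) := (measurable_yg hφ).comp (by fun_prop)
    exact h1.mul measurable_sing
  have hJc : ∀ x y, J x y = J y x := fun x y => by
    simp only [hJ]
    rw [sing_comm, ← neg_sub (avg Ω κ u y), neg_div, yg_neg]
  set f : EuclideanSpace ℝ (Fin n) → EuclideanSpace ℝ (Fin n) → ℝ≥0∞ := fun x =>
    (ball x (infDist x Ω / 2)).indicator (J x) with hf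
  set g : EuclideanSpace ℝ (Fin n) → EuclideanSpace ℝ (Fin n) → ℝ≥0∞ := fun x y =>
    (near Ω).indicator (fun x => (region Ω x).indicator (J x) y) x with hg
  have hfm : Measurable (Function.uncurry f) := by
    have hs : MeasurableSet {q : EuclideanSpace ℝ (Fin n) × EuclideanSpace ℝ (Fin n) |
        dist q.2 q.1 < infDist q.1 Ω / 2} :=
      measurableSet_lt (by fun_prop) ((measurable_infDist.comp measurable_fst).div_const 2)
    have : Function.uncurry f = {q : EuclideanSpace ℝ (Fin n) × EuclideanSpace ℝ (Fin n) |
        dist q.2 q.1 < infDist q.1 Ω / 2}.indicator (Function.uncurry J) := by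
      funext q; rfl
    rw [this]
    exact hJm.indicator hs
  have hgm : Measurable (Function.uncurry g) := by
    have : Function.uncurry g = (Prod.fst ⁻¹' near Ω).indicator
        ({q : EuclideanSpace ℝ (Fin n) × EuclideanSpace ℝ (Fin n) |
          q.2 ∈ region Ω q.1}.indicator (Function.uncurry J)) := by
      funext q; rfl
    rw [this]
    exact (hJm.indicator measurableSet_region_prod).indicator
      (measurable_fst (measurableSet_near Ω))
  have hle : ∀ x ∈ U, ∀ y ∈ U, J x y ≤ (f x y + g x y) + (f y x + g y x) := by
    intro x hx y hy
    have hx : 0 < infDist x Ω := hx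
    have hy : 0 < infDist y Ω := hy
    by_cases h1 : dist y x < infDist x Ω / 2
    · have : f x y = J x y := indicator_of_mem (mem_ball.2 h1) _
      rw [this, add_assoc]; exact le_self_add
    by_cases h2 : dist x y < infDist y Ω / 2
    · have : f y x = J x y := by
        rw [hJc x y]; exact indicator_of_mem (mem_ball.2 h2) _
      rw [this, add_left_comm]; exact le_self_add
    rw [not_lt] at h1 h2
    by_cases h3 : x ∈ near Ω
    · have h4 : y ∈ region Ω x := ⟨hy, by rwa [dist_comm], h1⟩
      have : g x y = J x y := by
        simp only [hg, indicator_of_mem h3, indicator_of_mem h4]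
      rw [this, add_comm (f x y), add_assoc]; exact le_self_add
    by_cases h4 : y ∈ near Ω
    · have h5 : x ∈ region Ω y := ⟨hx, by rwa [dist_comm], h2⟩
      have : g y x = J x y := by
        rw [hJc x y]
        simp only [hg, indicator_of_mem h4, indicator_of_mem h5]
      rw [this, ← add_assoc]; exact le_add_self
    have h3' : ediam Ω ≤ ENNReal.ofReal (infDist x Ω) := not_lt.1 fun h => h3 ⟨hx, h⟩
    have h4' : ediam Ω ≤ ENNReal.ofReal (infDist y Ω) := not_lt.1 fun h => h4 ⟨hy, h⟩
    have : J x y = 0 := by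
      simp only [hJ, avg_far hκ hΩ u h3' h4', sub_self, zero_div, yg_zero hφ, zero_mul]
    rw [this]; exact zero_le
  have hfi : ∫⁻ x in U, ∫⁻ y in U, f x y ≤
      C₁ * ∫⁻ w in Ω, ∫⁻ z in Ω, yg φ (u w - u z) * sing β w z := by
    refine le_trans (lintegral_mono fun x => ?_) (hloc u hu hui)
    refine (setLIntegral_le_lintegral _ _).trans_eq ?_
    exact lintegral_indicator measurableSet_ball _
  have hgi : ∫⁻ x in U, ∫⁻ y in U, g x y ≤
      C₂ * ∫⁻ w in Ω, ∫⁻ z in Ω, yg φ (u w - u z) * sing β w z := by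
    refine le_trans ?_ (hreg u hu hui)
    rw [← lintegral_indicator (measurableSet_near Ω)]
    refine (setLIntegral_le_lintegral _ _).trans (lintegral_mono fun x => ?_)
    refine (setLIntegral_le_lintegral _ _).trans ?_
    by_cases h3 : x ∈ near Ω
    · simp only [hg, indicator_of_mem h3]
      rw [lintegral_indicator (measurableSet_region x)]
      exact lintegral_mono fun y => mul_le_mul' (yg_div_le hφ hA1 _) le_rfl
    · simp [hg, indicator_of_notMem h3]
  calc ∫⁻ x in U, ∫⁻ y in U, J x y
      ≤ ∫⁻ x in U, ∫⁻ y in U, ((f x y + g x y) + (f y x + g y x)) :=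
        setLIntegral_mono' hUm fun x hx => setLIntegral_mono' hUm fun y hy => hle x hx y hy
    _ = 2 * ∫⁻ x in U, ∫⁻ y in U, (f x y + g x y) :=
        lintegral_symmetrize (F := fun x y => f x y + g x y) (hfm.add hgm)
    _ = 2 * ((∫⁻ x in U, ∫⁻ y in U, f x y) + ∫⁻ x in U, ∫⁻ y in U, g x y) := by
        rw [← lintegral_add_left (Measurable.lintegral_prod_right hfm)]
        congr 1
        exact lintegral_congr fun x => lintegral_add_left hfm.of_uncurry_left _
    _ ≤ 2 * ((C₁ * ∫⁻ w in Ω, ∫⁻ z in Ω, yg φ (u w - u z) * sing β w z) +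
          C₂ * ∫⁻ w in Ω, ∫⁻ z in Ω, yg φ (u w - u z) * sing β w z) := by gcongr
    _ = _ := by ring

/-- Up to a null set, the space consists of `Ω` and of the points at positive distance from it. -/
lemma lintegral_univ_split (hne : Ω.Nonempty) (hb : volume (closure Ω \ Ω) = 0)
    (F : EuclideanSpace ℝ (Fin n) → ℝ≥0∞) :
    ∫⁻ x, F x = (∫⁻ x in Ω, F x) + ∫⁻ x in {x | 0 < infDist x Ω}, F x := by
  have hUm : MeasurableSet {x : EuclideanSpace ℝ (Fin n) | 0 < infDist x Ω} :=
    measurableSet_lt measurable_const measurable_infDist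
  have hdisj : Disjoint Ω {x : EuclideanSpace ℝ (Fin n) | 0 < infDist x Ω} := by
    rw [Set.disjoint_left]
    intro x hx hx'
    exact absurd (infDist_zero_of_mem hx) (ne_of_gt hx')
  rw [← lintegral_union hUm hdisj, ← setLIntegral_univ]
  refine setLIntegral_congr ?_
  have hb' : ∀ᵐ y ∂(volume : Measure (EuclideanSpace ℝ (Fin n))), y ∉ closure Ω \ Ω :=
    measure_eq_zero_iff_ae_notMem.1 hb
  rw [eventuallyEq_set]
  filter_upwards [hb'] with y hy
  refine ⟨fun _ => ?_, fun _ => mem_univ _⟩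
  by_cases h : y ∈ Ω
  · exact Or.inl h
  · refine Or.inr (lt_of_le_of_ne infDist_nonneg fun h0 => hy ⟨?_, h⟩)
    exact (mem_closure_iff_infDist_zero hne).2 h0.symm

/-- The modular of the extension is controlled by that of the function. -/
lemma modular_ext (hn : 1 ≤ n) (hβ : 0 < β) (hφ : IsYoung φ) (hCβ : CbetaFinite β φ)
    (hκ : IsReflKernel Ω κ c C) (hΩ : IsOpen Ω) (hne : Ω.Nonempty)
    (hb : volume (closure Ω \ Ω) = 0) :
    ∃ A : ℝ, 1 ≤ A ∧ ∃ B : ℝ, 1 ≤ B ∧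
      ∀ u : EuclideanSpace ℝ (Fin n) → ℝ, Measurable u →
      (∀ x R, IntegrableOn u (Ω ∩ ball x R)) →
      ∫⁻ x, ∫⁻ y, yg φ ((ext Ω κ u x - ext Ω κ u y) / A) * sing β x y ≤
        ENNReal.ofReal B * ∫⁻ w in Ω, ∫⁻ z in Ω, yg φ (u w - u z) * sing β w z := by
  have hD := ediam_pos hn hΩ hne
  obtain ⟨A, hA1, C₁, hC₁, hout⟩ := modular_outer hn hβ hφ hCβ hκ hΩ.measurableSet hD
  obtain ⟨C₂, hC₂, hcross⟩ := modular_cross hβ hφ hκ hΩ.measurableSet hD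
  have hUm : MeasurableSet {x : EuclideanSpace ℝ (Fin n) | 0 < infDist x Ω} :=
    measurableSet_lt measurable_const measurable_infDist
  set K : ℝ≥0∞ := (1 + C₂) + (C₂ + C₁) with hK
  have hKt : K ≠ ∞ := by finiteness
  refine ⟨A, hA1, K.toReal, ?_, fun u hu hui => ?_⟩
  · rw [← ENNReal.toReal_one]
    refine ENNReal.toReal_mono hKt ?_
    rw [hK, add_assoc]; exact le_self_add
  rw [ENNReal.ofReal_toReal hKt]
  set U := {x : EuclideanSpace ℝ (Fin n) | 0 < infDist x Ω} with hU
  set M := ∫⁻ w in Ω, ∫⁻ z in Ω, yg φ (u w - u z) * sing β w z with hM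
  have hem : Measurable (ext Ω κ u) := measurable_ext hκ hu
  have hav : Measurable (avg Ω κ u) := measurable_avg hκ hu
  set J : EuclideanSpace ℝ (Fin n) → EuclideanSpace ℝ (Fin n) → ℝ≥0∞ := fun x y =>
    yg φ ((ext Ω κ u x - ext Ω κ u y) / A) * sing β x y with hJ
  have hJm : Measurable (Function.uncurry J) := by
    have h1 : Measurable fun q : EuclideanSpace ℝ (Fin n) × EuclideanSpace ℝ (Fin n) =>
        yg φ ((ext Ω κ u q.1 - ext Ω κ u q.2) / A) := (measurable_yg hφ).comp (by fun_prop)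
    exact h1.mul measurable_sing
  have hJc : ∀ x y, J x y = J y x := fun x y => by
    simp only [hJ]
    rw [sing_comm, ← neg_sub (ext Ω κ u y), neg_div, yg_neg]
  have eΩ : ∀ x ∈ Ω, ext Ω κ u x = u x := fun x hx => by
    simp [ext, infDist_zero_of_mem hx]
  have eU : ∀ x ∈ U, ext Ω κ u x = avg Ω κ u x := fun x hx => by
    have hx : 0 < infDist x Ω := hx
    simp [ext, hx]
  have hΩΩ : ∫⁻ x in Ω, ∫⁻ y in Ω, J x y ≤ M := by
    refine setLIntegral_mono' hΩ.measurableSet fun x hx =>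
      setLIntegral_mono' hΩ.measurableSet fun y hy => ?_
    simp only [hJ, eΩ x hx, eΩ y hy]
    exact mul_le_mul' (yg_div_le hφ hA1 _) le_rfl
  have hΩU : ∫⁻ x in Ω, ∫⁻ y in U, J x y ≤ C₂ * M := by
    refine le_trans (setLIntegral_mono' hΩ.measurableSet fun x hx =>
      setLIntegral_mono' hUm fun y hy => ?_) (hcross u hu hui)
    simp only [hJ, eΩ x hx, eU y hy]
    exact mul_le_mul' (yg_div_le hφ hA1 _) le_rfl
  have hUΩ : ∫⁻ x in U, ∫⁻ y in Ω, J x y ≤ C₂ * M := by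
    rw [lintegral_lintegral_swap hJm.aemeasurable]
    simpa only [hJc] using hΩU
  have hUU : ∫⁻ x in U, ∫⁻ y in U, J x y ≤ C₁ * M := by
    refine le_trans (le_of_eq (setLIntegral_congr_fun hUm fun x hx =>
      setLIntegral_congr_fun hUm fun y hy => ?_)) (hout u hu hui)
    simp only [hJ, eU x hx, eU y hy]
  have hmΩ : Measurable fun x => ∫⁻ y in Ω, J x y := Measurable.lintegral_prod_right hJm
  calc ∫⁻ x, ∫⁻ y, J x y = ∫⁻ x, ((∫⁻ y in Ω, J x y) + ∫⁻ y in U, J x y) :=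
        lintegral_congr fun x => lintegral_univ_split hne hb _
    _ = ((∫⁻ x in Ω, ∫⁻ y in Ω, J x y) + ∫⁻ x in U, ∫⁻ y in Ω, J x y) +
          ((∫⁻ x in Ω, ∫⁻ y in U, J x y) + ∫⁻ x in U, ∫⁻ y in U, J x y) := by
        rw [lintegral_add_left hmΩ, lintegral_univ_split hne hb, lintegral_univ_split hne hb]
    _ ≤ (M + C₂ * M) + (C₂ * M + C₁ * M) := by gcongr
    _ = K * M := by rw [hK]; ring

lemma fracIntegral_eq (u : EuclideanSpace ℝ (Fin n) → ℝ) {lam : ℝ} (hlam : 0 < lam) :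
    fracIntegral n β φ Ω u lam =
      ∫⁻ x in Ω, ∫⁻ y in Ω, yg φ ((u x - u y) / lam) * sing β x y := by
  unfold fracIntegral
  simp only [yg_mul_sing hlam]

/-- A modular bound with constants inside and outside `φ` becomes a bound of Luxemburg type. -/
lemma fracIntegral_ext_le (hφ : IsYoung φ) {A B : ℝ} (hA : 1 ≤ A) (hB : 1 ≤ B)
    (h : ∀ u : EuclideanSpace ℝ (Fin n) → ℝ, Measurable u →
      (∀ x R, IntegrableOn u (Ω ∩ ball x R)) →
      ∫⁻ x, ∫⁻ y, yg φ ((ext Ω κ u x - ext Ω κ u y) / A) * sing β x y ≤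
        ENNReal.ofReal B * ∫⁻ w in Ω, ∫⁻ z in Ω, yg φ (u w - u z) * sing β w z)
    {u : EuclideanSpace ℝ (Fin n) → ℝ} (hu : Measurable u)
    (hui : ∀ x R, IntegrableOn u (Ω ∩ ball x R)) {lam : ℝ} (hlam : 0 < lam) :
    fracIntegral n β φ univ (ext Ω κ u) (B * A * lam) ≤ fracIntegral n β φ Ω u lam := by
  have hA0 : 0 < A := lt_of_lt_of_le one_pos hA
  have hB0 : 0 < B := lt_of_lt_of_le one_pos hB
  have h1 := h (lam⁻¹ • u) (hu.const_smul _) fun x R => (hui x R).smul _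
  rw [ext_smul] at h1
  have hs : ∀ a b : ℝ, lam⁻¹ * a - lam⁻¹ * b = (a - b) / lam := fun a b => by ring
  simp only [Pi.smul_apply, smul_eq_mul, hs] at h1
  rw [fracIntegral_eq _ hlam, fracIntegral_eq _ (by positivity)]
  simp only [Measure.restrict_univ]
  -- convexity absorbs the constant `B` into the argument of `φ`
  have h2 : ∀ t : ℝ, yg φ (t / (B * A * lam)) ≤ ENNReal.ofReal B⁻¹ * yg φ (t / lam / A) := by
    intro t
    rw [yg, yg, ← ENNReal.ofReal_mul (by positivity)]
    refine ENNReal.ofReal_le_ofReal ?_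
    have e : |t / (B * A * lam)| = B⁻¹ * |t / lam / A| := by
      rw [← abs_of_pos (inv_pos.2 hB0), ← abs_mul]
      congr 1
      field_simp
    rw [e]
    exact young_scale hφ (abs_nonneg _) (by positivity) (inv_le_one_of_one_le₀ hB)
  calc ∫⁻ x, ∫⁻ y, yg φ ((ext Ω κ u x - ext Ω κ u y) / (B * A * lam)) * sing β x y
      ≤ ∫⁻ x, ∫⁻ y, ENNReal.ofReal B⁻¹ *
          (yg φ ((ext Ω κ u x - ext Ω κ u y) / lam / A) * sing β x y) := by
        refine lintegral_mono fun x => lintegral_mono fun y => ?_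
        rw [← mul_assoc]
        exact mul_le_mul' (h2 _) le_rfl
    _ = ENNReal.ofReal B⁻¹ * ∫⁻ x, ∫⁻ y,
          yg φ ((ext Ω κ u x - ext Ω κ u y) / lam / A) * sing β x y := by
        rw [← lintegral_const_mul' _ _ (by finiteness)]
        refine lintegral_congr fun x => ?_
        rw [lintegral_const_mul' _ _ (by finiteness)]
    _ ≤ ENNReal.ofReal B⁻¹ * (ENNReal.ofReal B * ∫⁻ w in Ω, ∫⁻ z in Ω,
          yg φ ((u w - u z) / lam) * sing β w z) := by gcongr
    _ = ∫⁻ w in Ω, ∫⁻ z in Ω, yg φ ((u w - u z) / lam) * sing β w z := by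
        rw [← mul_assoc, ← ENNReal.ofReal_mul (by positivity), inv_mul_cancel₀ hB0.ne',
          ENNReal.ofReal_one, one_mul]

/-! ### Functions of finite seminorm -/

lemma exists_admissible {u : EuclideanSpace ℝ (Fin n) → ℝ} (h : fracNorm n β φ Ω u ≠ ∞) :
    ∃ lam : ℝ, 0 < lam ∧ fracIntegral n β φ Ω u lam ≤ 1 := by
  by_contra! h'
  refine h (sInf_eq_top.2 fun l hl => ?_)
  exact absurd hl.2.2 (not_le.2 (h' _ (ENNReal.toReal_pos hl.1.ne' hl.2.1)))

/-- A member of the space has a Borel representative, and both are integrable on the bounded parts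
of `Ω`. -/
lemma memW_integrableOn (hn : 1 ≤ n) (hβ : 0 < β) (hφ : IsYoung φ)
    (hΩ : MeasurableSet Ω) (hpos : volume Ω ≠ 0)
    {u : EuclideanSpace ℝ (Fin n) → ℝ} (hu : MemW n β φ Ω u) :
    ∃ u', Measurable u' ∧ u =ᵐ[volume.restrict Ω] u' ∧
      (∀ x R, IntegrableOn u' (Ω ∩ ball x R)) ∧ ∀ x R, IntegrableOn u (Ω ∩ ball x R) := by
  have hm := hu.1.aestronglyMeasurable
  obtain ⟨lam, hlam, hle⟩ := exists_admissible hu.2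
  have hae := hm.ae_eq_mk
  have hm' : Measurable (hm.mk u) := hm.stronglyMeasurable_mk.measurable
  have hi : ∀ x R, IntegrableOn (hm.mk u) (Ω ∩ ball x R) := fun x R => by
    refine integrableOn_of_fracIntegral hn hβ hφ hΩ hpos hm' hlam ?_ x R
    rw [← fracIntegral_congr hae]
    exact ne_top_of_le_ne_top ENNReal.one_ne_top hle
  refine ⟨hm.mk u, hm', hae, hi, fun x R => ?_⟩
  exact (hi x R).congr_fun_ae (ae_restrict_of_ae_restrict_of_subset inter_subset_left hae.symm)

/-- Ahlfors regular open sets are extension domains. -/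
lemma extension_of_ahlfors (hn : 1 ≤ n) (hβ : 0 < β) (hφ : IsYoung φ) (hCβ : CbetaFinite β φ)
    (hΩ : IsOpen Ω) (hne : Ω.Nonempty) (hA : AhlforsRegular n Ω) :
    IsExtensionDomain n β φ Ω := by
  obtain ⟨κ, c, C, hκ⟩ := exists_reflKernel hn hΩ hne hA
  have hb := volume_boundary hn hΩ hne hA
  have hpos : volume Ω ≠ 0 := (hΩ.measure_pos volume hne).ne'
  obtain ⟨A, hA1, B, hB1, hmod⟩ := modular_ext hn hβ hφ hCβ hκ hΩ hne hb
  have hA0 : 0 < A := lt_of_lt_of_le one_pos hA1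
  have hB0 : 0 < B := lt_of_lt_of_le one_pos hB1
  refine ⟨B * A, by positivity, ext Ω κ, fun u v hu hv => ?_, fun a u _ => ext_smul a u,
    fun u hu => ?_⟩
  · obtain ⟨-, -, -, -, hui⟩ := memW_integrableOn hn hβ hφ hΩ.measurableSet hpos hu
    obtain ⟨-, -, -, -, hvi⟩ := memW_integrableOn hn hβ hφ hΩ.measurableSet hpos hv
    exact ext_add hκ hu.1.aestronglyMeasurable hui hv.1.aestronglyMeasurable hvi
  obtain ⟨u', hm', hae, hi', -⟩ := memW_integrableOn hn hβ hφ hΩ.measurableSet hpos hu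
  have hext : ext Ω κ u =ᵐ[volume] ext Ω κ u' := ext_congr hb hne hΩ.measurableSet hae
  have hext' : ext Ω κ u =ᵐ[volume.restrict univ] ext Ω κ u' := by
    rwa [Measure.restrict_univ]
  have hmain : ∀ lam : ℝ, 0 < lam → fracIntegral n β φ Ω u lam ≤ 1 →
      fracIntegral n β φ univ (ext Ω κ u) (B * A * lam) ≤ 1 := fun lam hlam h1 => by
    rw [fracIntegral_congr hext']
    refine (fracIntegral_ext_le hφ hA1 hB1 hmod hm' hi' hlam).trans ?_
    rwa [← fracIntegral_congr hae]
  have hnorm : fracNorm n β φ univ (ext Ω κ u) ≤ ENNReal.ofReal (B * A) * fracNorm n β φ Ω u := by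
    have h0 : ENNReal.ofReal (B * A) ≠ 0 := by
      rw [Ne, ENNReal.ofReal_eq_zero, not_le]; positivity
    rw [← ENNReal.div_le_iff' h0 ENNReal.ofReal_ne_top]
    refine le_sInf fun l hl => ?_
    rw [ENNReal.div_le_iff' h0 ENNReal.ofReal_ne_top]
    refine sInf_le ⟨ENNReal.mul_pos h0 hl.1.ne', ENNReal.mul_ne_top ENNReal.ofReal_ne_top hl.2.1,
      ?_⟩
    rw [ENNReal.toReal_mul, ENNReal.toReal_ofReal (by positivity)]
    exact hmain _ (ENNReal.toReal_pos hl.1.ne' hl.2.1) hl.2.2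
  refine ⟨⟨?_, ne_top_of_le_ne_top (ENNReal.mul_ne_top ENNReal.ofReal_ne_top hu.2) hnorm⟩, ?_,
    hnorm⟩
  · obtain ⟨lam, hlam, hle⟩ := exists_admissible hu.2
    have hfin := hmain lam hlam hle
    rw [fracIntegral_congr hext'] at hfin
    have hInt : ∀ x R, IntegrableOn (ext Ω κ u') (univ ∩ ball x R) := fun x R =>
      integrableOn_of_fracIntegral hn hβ hφ MeasurableSet.univ
        (isOpen_univ.measure_pos volume univ_nonempty).ne' (measurable_ext hκ hm')
        (lam := B * A * lam) (by positivity) (ne_top_of_le_ne_top ENNReal.one_ne_top hfin) x R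
    rw [locallyIntegrableOn_univ]
    intro x
    refine ⟨ball x 1, ball_mem_nhds x one_pos, ?_⟩
    have := hInt x 1
    rw [univ_inter] at this
    exact this.congr_fun_ae (ae_restrict_of_ae hext.symm)
  · rw [ae_restrict_iff' hΩ.measurableSet]
    exact Eventually.of_forall fun x hx => by simp [ext, infDist_zero_of_mem hx]

end

end AhlforsExt

/-- Ahlfors n-regular domains are `Ẇ^{β,φ}`-extension domains. -/
theorem ahlfors_implies_extension
    (n : ℕ) (hn : 1 ≤ n) (β : ℝ)
    (hβ : β ∈ Set.Ioo (0 : ℝ) (n : ℝ) ∪ Set.Ioi (n : ℝ))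
    (φ : ℝ → ℝ) (hφ : IsYoung φ) (hCβ : CbetaFinite β φ)
    (Ω : Set (EuclideanSpace ℝ (Fin n))) (hΩopen : IsOpen Ω) (hΩconn : IsConnected Ω)
    (hA : AhlforsRegular n Ω) :
    IsExtensionDomain n β φ Ω := by
  have hβ0 : 0 < β := by
    rcases hβ with h | h
    · exact h.1
    · exact lt_of_le_of_lt (Nat.cast_nonneg n) h
  exact AhlforsExt.extension_of_ahlfors hn hβ0 hφ hCβ hΩopen hΩconn.nonempty hA
end

section
/- Let n ≥ 1, β > n, and let φ be a doubling Young function satisfying C_β := sup_{t>0} (t^β/φ(t)) ∫_0^t φ(s) s^{-β-1} ds < ∞. If a domain Ω ⊂ ℝⁿ is a Ẇ^{β,φ}-extension domain, then there exists a constant C = C(β,n,φ) > 0 such that for every u ∈ Ẇ^{β,φ}(Ω) there is a function ũ on Ω with ũ = u almost everywhere and |ũ(x) − ũ(y)| ≤ C φ⁻¹(|x−y|^{β−n}) ‖u‖_{Ẇ^{β,φ}(Ω)} for all x, y ∈ Ω. -/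
/-!
The extension operator reduces the claim to `Ω = ℝⁿ`. There, let `w` have finite seminorm and let
`lam` be admissible. For two comparable balls `B`, `B'` of radius about `R`, the elementary
inequality `t ≤ a + (a / φ a) φ t` (`IsYoung.le_add`) with `φ a = R ^ (β - n)`, integrated over
`B × B'`, gives `|w_B - w_B'| ≤ c * lam * φ⁻¹(R ^ (β - n))` (`abs_average_sub_le`).

Doubling, `φ (2 t) ≤ K φ t`, says that dividing the argument of `φ⁻¹` by `K` at least halves its
value. So along radii `ρ ^ k` with `ρ ^ (β - n) = K⁻¹` the differences of consecutive averages
decay geometrically, uniformly in the centre. The averages therefore converge at every point; the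
limit `v` agrees with `w` almost everywhere by Lebesgue differentiation, and chaining at the scale
`ρ ^ j ≈ |x - y|` gives the modulus of continuity. Finally one takes the infimum over `lam`
(`exists_holder_representative`).
-/

open MeasureTheory Metric Set Filter
open scoped ENNReal NNReal Topology Classical

/-! ### Young functions and their inverses -/

/-- Convexity and `φ 0 = 0` make `φ t / t` nondecreasing. -/
lemma IsYoung.mul_le {φ : ℝ → ℝ} (hφ : IsYoung φ) {s t : ℝ} (hs : 0 ≤ s) (hst : s ≤ t) :
    t * φ s ≤ s * φ t := by
  obtain ⟨-, hconv, h0, -⟩ := hφ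
  rcases hs.eq_or_lt with rfl | hs
  · simp [h0]
  have ht : 0 < t := hs.trans_le hst
  have h := hconv.2 (mem_Ici.2 le_rfl) (mem_Ici.2 ht.le)
    (show 0 ≤ 1 - s / t by rw [sub_nonneg, div_le_one ht]; exact hst)
    (show 0 ≤ s / t by positivity) (by ring)
  simp only [smul_eq_mul, mul_zero, zero_add, h0] at h
  rw [div_mul_cancel₀ _ ht.ne'] at h
  calc t * φ s ≤ t * (s / t * φ t) := by gcongr
    _ = s * φ t := by field_simp

lemma IsYoung.nonneg {φ : ℝ → ℝ} (hφ : IsYoung φ) {t : ℝ} (ht : 0 ≤ t) : 0 ≤ φ t := by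
  rcases ht.eq_or_lt with rfl | ht
  · exact hφ.2.2.1.ge
  · exact (hφ.2.2.2 t ht).le

lemma IsYoung.lt {φ : ℝ → ℝ} (hφ : IsYoung φ) {s t : ℝ} (hs : 0 ≤ s) (hst : s < t) :
    φ s < φ t := by
  have ht : 0 < t := hs.trans_lt hst
  have h := hφ.mul_le hs hst.le
  have hp := hφ.2.2.2 t ht
  nlinarith

/-- A Young function maps `(0, ∞)` onto `(0, ∞)`, and `yInv` is its inverse there. -/
lemma IsYoung.yInv_spec {φ : ℝ → ℝ} (hφ : IsYoung φ) {y : ℝ} (hy : 0 < y) :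
    0 < yInv φ y ∧ φ (yInv φ y) = y := by
  have h1 : 0 < φ 1 := hφ.2.2.2 1 one_pos
  -- A point where `φ` exceeds `y`, from `φ t ≥ t * φ 1` for `t ≥ 1`.
  have hT : y ≤ φ (1 + y / φ 1) := by
    have h := hφ.mul_le zero_le_one (t := 1 + y / φ 1) (by linarith [div_pos hy h1])
    have : (1 + y / φ 1) * φ 1 = φ 1 + y := by field_simp
    linarith
  have hTpos : 0 ≤ 1 + y / φ 1 := by positivity
  obtain ⟨a, ⟨ha0, -⟩, ha⟩ := intermediate_value_Icc hTpos
    (hφ.1.mono Icc_subset_Ici_self) (show y ∈ Icc (φ 0) _ from ⟨by rw [hφ.2.2.1]; exact hy.le, hT⟩)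
  have hapos : 0 < a := by
    rcases ha0.eq_or_lt with rfl | h
    · rw [hφ.2.2.1] at ha; linarith
    · exact h
  have hset : {t : ℝ | 0 ≤ t ∧ y ≤ φ t} = Ici a := by
    ext t
    simp only [mem_ofPred_eq, mem_Ici]
    constructor
    · rintro ⟨h0, h⟩
      by_contra! hlt
      have := hφ.lt h0 hlt
      linarith
    · intro h
      refine ⟨ha0.trans h, ?_⟩
      rcases h.eq_or_lt with rfl | h
      · exact ha.ge
      · exact ha.ge.trans (hφ.lt ha0 h).le
  have : yInv φ y = a := by rw [yInv, hset, csInf_Ici]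
  rw [this]
  exact ⟨hapos, ha⟩

lemma yInv_le {φ : ℝ → ℝ} {y t : ℝ} (ht : 0 ≤ t) (h : y ≤ φ t) :
    yInv φ y ≤ t :=
  csInf_le ⟨0, fun _ hs => hs.1⟩ ⟨ht, h⟩

lemma yInv_nonneg (φ : ℝ → ℝ) (y : ℝ) : 0 ≤ yInv φ y :=
  Real.sInf_nonneg fun _ hs => hs.1

lemma IsYoung.yInv_mono {φ : ℝ → ℝ} (hφ : IsYoung φ) {y z : ℝ} (hz : 0 < z) (h : y ≤ z) :
    yInv φ y ≤ yInv φ z :=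
  yInv_le (yInv_nonneg _ _) (by rwa [(hφ.yInv_spec hz).2])

/-- Doubling of `φ` turns into geometric decay of the inverse. -/
lemma IsYoung.yInv_div_le {φ : ℝ → ℝ} (hφ : IsYoung φ) {K : ℝ} (hK : IsDoubling φ K) {y : ℝ}
    (hy : 0 < y) : yInv φ (K⁻¹ * y) ≤ yInv φ y / 2 := by
  obtain ⟨h0, h1⟩ := hφ.yInv_spec hy
  have hKpos : 0 < K := one_pos.trans hK.1
  refine yInv_le (by positivity) ?_
  have h := hK.2 (yInv φ y / 2) (by positivity)
  rw [mul_div_cancel₀ _ two_ne_zero, h1] at h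
  rwa [inv_mul_le_iff₀ hKpos]

/-- A substitute for Jensen's inequality: below `a` bound `t` by `a`, above `a` use that
`φ t / t` is nondecreasing. -/
lemma IsYoung.le_add {φ : ℝ → ℝ} (hφ : IsYoung φ) {a t : ℝ} (ha : 0 < a) (ht : 0 ≤ t) :
    t ≤ a + a / φ a * φ t := by
  have hpa := hφ.2.2.2 a ha
  have hpt := hφ.nonneg ht
  rcases le_total t a with h | h
  · have : 0 ≤ a / φ a * φ t := by positivity
    linarith
  · have h2 := hφ.mul_le ha.le h
    have : t ≤ a / φ a * φ t := by
      rw [div_mul_eq_mul_div, le_div_iff₀ hpa]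
      exact h2
    linarith

/-! ### Comparing averages over two balls -/

section Averages

variable {n : ℕ}

local notation "V" => EuclideanSpace ℝ (Fin n)

lemma enorm_average_sub_mul_le {w : V → ℝ} {B B' : Set V}
    (hB : IntegrableOn w B) (hB' : IntegrableOn w B') (hB0 : volume B ≠ 0) (hBt : volume B ≠ ∞)
    (hB0' : volume B' ≠ 0) (hBt' : volume B' ≠ ∞) :
    ‖(⨍ p in B, w p) - ⨍ q in B', w q‖ₑ * (volume B * volume B') ≤
      ∫⁻ p in B, ∫⁻ q in B', ‖w p - w q‖ₑ := by
  have : IsFiniteMeasure (volume.restrict B) := ⟨by simpa using hBt.lt_top⟩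
  have : IsFiniteMeasure (volume.restrict B') := ⟨by simpa using hBt'.lt_top⟩
  have hm : 0 < volume.real B := ENNReal.toReal_pos hB0 hBt
  have hm' : 0 < volume.real B' := ENNReal.toReal_pos hB0' hBt'
  have hin : ∀ p, ∫ q in B', (w p - w q) = volume.real B' * w p - ∫ q in B', w q := by
    intro p
    rw [integral_sub (integrable_const _) hB']
    simp
  have hout : ∫ p in B, ∫ q in B', (w p - w q) =
      ((⨍ p in B, w p) - ⨍ q in B', w q) * (volume.real B * volume.real B') := by
    simp_rw [hin]
    rw [integral_sub (hB.const_mul _) (integrable_const _), integral_const_mul, setAverage_eq,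
      setAverage_eq]
    simp only [integral_const, smul_eq_mul, measureReal_restrict_apply_univ]
    field_simp
  have hvol : ‖volume.real B * volume.real B'‖ₑ = volume B * volume B' := by
    rw [enorm_mul, Real.enorm_of_nonneg hm.le, Real.enorm_of_nonneg hm'.le, Measure.real,
      Measure.real, ENNReal.ofReal_toReal hBt, ENNReal.ofReal_toReal hBt']
  rw [← hvol, ← enorm_mul, ← hout]
  refine (enorm_integral_le_lintegral_enorm _).trans ?_
  exact lintegral_mono fun p => enorm_integral_le_lintegral_enorm _

/-- `IsYoung.le_add` integrated over two sets whose points are within `D` of each other; `a` is a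
free parameter. -/
lemma lintegral_lintegral_enorm_sub_le {β : ℝ} {φ : ℝ → ℝ} (hφ : IsYoung φ) (hβ : 0 ≤ n + β)
    {w : V → ℝ} {lam : ℝ} (hlam : 0 < lam) (hw : fracIntegral n β φ univ w lam ≤ 1)
    {B B' : Set V} (hBm : MeasurableSet B) (hBm' : MeasurableSet B') {D : ℝ}
    (hD : ∀ p ∈ B, ∀ q ∈ B', dist p q ≤ D) (hD0 : 0 ≤ D) {a : ℝ} (ha : 0 < a) :
    ∫⁻ p in B, ∫⁻ q in B', ‖w p - w q‖ₑ ≤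
      ENNReal.ofReal (lam * a) * (volume B * volume B') +
        ENNReal.ofReal (lam * (a / φ a * D ^ ((n : ℝ) + β))) := by
  have hpa := hφ.2.2.2 a ha
  set c := lam * (a / φ a * D ^ ((n : ℝ) + β)) with hc
  have hc0 : 0 ≤ c := by positivity
  have hpt : ∀ p ∈ B, ∀ q ∈ B', ‖w p - w q‖ₑ ≤ ENNReal.ofReal (lam * a) +
      ENNReal.ofReal c *
        ENNReal.ofReal (φ (|w p - w q| / lam) / dist p q ^ ((n : ℝ) + β)) := by
    intro p hp q hq
    rw [Real.enorm_eq_ofReal_abs, ← ENNReal.ofReal_mul hc0]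
    have ht0 : 0 ≤ |w p - w q| / lam := by positivity
    have hφt := hφ.nonneg ht0
    rw [← ENNReal.ofReal_add (by positivity) (by positivity)]
    apply ENNReal.ofReal_le_ofReal
    rcases eq_or_ne p q with rfl | hpq
    · simp [hφ.2.2.1]; positivity
    have hd : 0 < dist p q := dist_pos.2 hpq
    have hpow : dist p q ^ ((n : ℝ) + β) ≤ D ^ ((n : ℝ) + β) :=
      Real.rpow_le_rpow hd.le (hD p hp q hq) hβ
    have hdp : 0 < dist p q ^ ((n : ℝ) + β) := Real.rpow_pos_of_pos hd _
    have h1 := hφ.le_add ha ht0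
    have h2 : φ (|w p - w q| / lam) ≤ D ^ ((n : ℝ) + β) *
        (φ (|w p - w q| / lam) / dist p q ^ ((n : ℝ) + β)) := by
      rw [mul_div_assoc', le_div_iff₀ hdp, mul_comm]
      gcongr
    calc |w p - w q| = lam * (|w p - w q| / lam) := by field_simp
      _ ≤ lam * (a + a / φ a * (D ^ ((n : ℝ) + β) *
            (φ (|w p - w q| / lam) / dist p q ^ ((n : ℝ) + β)))) := by
          gcongr
          exact h1.trans (by gcongr)
      _ = _ := by rw [hc]; ring
  calc ∫⁻ p in B, ∫⁻ q in B', ‖w p - w q‖ₑ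
      ≤ ∫⁻ p in B, (ENNReal.ofReal (lam * a) * volume B' + ENNReal.ofReal c *
          ∫⁻ q, ENNReal.ofReal (φ (|w p - w q| / lam) / dist p q ^ ((n : ℝ) + β))) := by
        refine setLIntegral_mono' hBm fun p hp => ?_
        refine (setLIntegral_mono' hBm' (hpt p hp)).trans ?_
        rw [lintegral_add_left measurable_const, setLIntegral_const,
          lintegral_const_mul' _ _ ENNReal.ofReal_ne_top]
        gcongr
        exact Measure.restrict_le_self
    _ ≤ ENNReal.ofReal (lam * a) * (volume B * volume B') + ENNReal.ofReal c * 1 := by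
        rw [lintegral_add_left measurable_const, setLIntegral_const,
          lintegral_const_mul' _ _ ENNReal.ofReal_ne_top]
        gcongr ?_ + _ * ?_
        · rw [mul_assoc, mul_comm (volume B')]
        · refine le_trans ?_ hw
          simp only [fracIntegral, Measure.restrict_univ]
          exact lintegral_mono' Measure.restrict_le_self le_rfl
    _ = _ := by rw [mul_one]

/-- The constant of the two-ball comparison; `M` bounds the ratio of distance to radius. -/
noncomputable def ballConst (n : ℕ) (β M : ℝ) : ℝ :=
  1 + M ^ ((n : ℝ) + β) / (volume.real (closedBall (0 : EuclideanSpace ℝ (Fin n)) 1)) ^ 2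

lemma volume_real_unitBall_pos :
    0 < volume.real (closedBall (0 : V) 1) :=
  ENNReal.toReal_pos (measure_closedBall_pos _ _ one_pos).ne' measure_closedBall_lt_top.ne

lemma ballConst_pos {β M : ℝ} (hM : 0 ≤ M) : 0 < ballConst n β M := by
  unfold ballConst
  positivity

/-- Two balls of radius at least `R`, all of whose points are within `M * R` of each other,
have averages differing by at most a multiple of `φ⁻¹(R ^ (β - n))`. -/
lemma abs_average_sub_le {β : ℝ} {φ : ℝ → ℝ} (hφ : IsYoung φ) (hβ : (n : ℝ) < β)
    {w : V → ℝ} (hwl : LocallyIntegrable w) {lam : ℝ} (hlam : 0 < lam)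
    (hw : fracIntegral n β φ univ w lam ≤ 1) {x y : V} {r s R M : ℝ} (hR : 0 < R) (hM : 0 ≤ M)
    (hr : R ≤ r) (hs : R ≤ s) (hD : r + dist x y + s ≤ M * R) :
    |(⨍ p in closedBall x r, w p) - ⨍ q in closedBall y s, w q| ≤
      ballConst n β M * (lam * yInv φ (R ^ (β - n))) := by
  have hRp : 0 < R ^ (β - n) := Real.rpow_pos_of_pos hR _
  obtain ⟨ha, hφa⟩ := hφ.yInv_spec hRp
  set a := yInv φ (R ^ (β - n))
  have hnβ : 0 ≤ (n : ℝ) + β := by have : (0 : ℝ) ≤ n := n.cast_nonneg; linarith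
  have hD' : ∀ p ∈ closedBall x r, ∀ q ∈ closedBall y s, dist p q ≤ M * R := by
    intro p hp q hq
    rw [mem_closedBall] at hp hq
    rw [dist_comm] at hq
    linarith [dist_triangle4 p x y q]
  have key := (enorm_average_sub_mul_le (w := w)
    (hwl.integrableOn_isCompact (isCompact_closedBall x r))
    (hwl.integrableOn_isCompact (isCompact_closedBall y s))
    (measure_closedBall_pos _ _ (hR.trans_le hr)).ne' measure_closedBall_lt_top.ne
    (measure_closedBall_pos _ _ (hR.trans_le hs)).ne' measure_closedBall_lt_top.ne).trans
    (lintegral_lintegral_enorm_sub_le hφ hnβ hlam hw measurableSet_closedBall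
      measurableSet_closedBall hD' (by positivity) ha)
  have hvol : ∀ (z : V) (t : ℝ), R ≤ t →
      R ^ n * volume.real (closedBall (0 : V) 1) ≤ volume.real (closedBall z t) := by
    intro z t ht
    rw [Measure.addHaar_real_closedBall' volume z (hR.le.trans ht), finrank_euclideanSpace_fin]
    gcongr
  have hm := hvol x r hr
  have hm' := hvol y s hs
  have hω := volume_real_unitBall_pos (n := n)
  rw [← ofReal_measureReal (μ := volume) (s := closedBall x r) measure_closedBall_lt_top.ne,
    ← ofReal_measureReal (μ := volume) (s := closedBall y s) measure_closedBall_lt_top.ne,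
    Real.enorm_eq_ofReal_abs, ← ENNReal.ofReal_mul measureReal_nonneg,
    ← ENNReal.ofReal_mul (abs_nonneg _), ← ENNReal.ofReal_mul (by positivity),
    ← ENNReal.ofReal_add (by positivity) (by rw [hφa]; positivity),
    ENNReal.ofReal_le_ofReal_iff (by rw [hφa]; positivity), hφa] at key
  set ω := volume.real (closedBall (0 : V) 1) with hωdef
  set m := volume.real (closedBall x r)
  set m' := volume.real (closedBall y s)
  have hmm : (R ^ n * ω) * (R ^ n * ω) ≤ m * m' := by gcongr
  have hmmpos : 0 < m * m' := lt_of_lt_of_le (by positivity) hmm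
  -- `(M R)^(n+β) = M^(n+β) R^(2n) R^(β-n)`, and `R^(2n)` is absorbed by the volumes.
  have hpow : (M * R) ^ ((n : ℝ) + β) =
      M ^ ((n : ℝ) + β) * ((R ^ n * R ^ n) * R ^ (β - n)) := by
    rw [Real.mul_rpow hM hR.le, ← Real.rpow_natCast R n, ← Real.rpow_add hR, ← Real.rpow_add hR]
    congr 2
    ring
  have hM' : 0 ≤ M ^ ((n : ℝ) + β) := by positivity
  have h2 : a / R ^ (β - n) * (M * R) ^ ((n : ℝ) + β) ≤
      a * (M ^ ((n : ℝ) + β) / ω ^ 2) * (m * m') := by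
    calc a / R ^ (β - n) * (M * R) ^ ((n : ℝ) + β)
        = a * (M ^ ((n : ℝ) + β) / ω ^ 2) * ((R ^ n * ω) * (R ^ n * ω)) := by
          rw [hpow]; field_simp
      _ ≤ _ := by gcongr
  refine le_of_mul_le_mul_right (key.trans ?_) hmmpos
  calc lam * a * (m * m') + lam * (a / R ^ (β - n) * (M * R) ^ ((n : ℝ) + β))
      ≤ lam * a * (m * m') + lam * (a * (M ^ ((n : ℝ) + β) / ω ^ 2) * (m * m')) := by gcongr
    _ = _ := by rw [ballConst, ← hωdef]; ring

/-! ### The precise representative on the whole space -/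

/-- If consecutive terms of a `ℤ`-indexed real sequence differ by at most `b k`, where `b` at least
halves at each step, the sequence converges, at distance at most `2 * b j` from its `j`-th term. -/
lemma exists_tendsto_of_halving {A b : ℤ → ℝ} (hA : ∀ k, |A k - A (k + 1)| ≤ b k)
    (hb : ∀ k, b (k + 1) ≤ b k / 2) :
    ∃ L, Tendsto A atTop (𝓝 L) ∧ ∀ j, |A j - L| ≤ 2 * b j := by
  have hgeo : ∀ (j : ℤ) (i : ℕ), b (j + i) ≤ b j / 2 ^ i := by
    intro j i
    induction i with
    | zero => simp
    | succ i ih =>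
      have := hb (j + i)
      push_cast
      rw [← add_assoc, pow_succ, ← div_div]
      linarith
  have hdist : ∀ (j : ℤ) (i : ℕ),
      dist (A (j + i)) (A (j + (i + 1 : ℕ))) ≤ 2 * b j / 2 / 2 ^ i := by
    intro j i
    rw [Real.dist_eq, mul_div_cancel_left₀ _ two_ne_zero]
    push_cast
    rw [← add_assoc]
    exact (hA _).trans (hgeo j i)
  have hlim : ∀ (L : ℝ) (j : ℤ), Tendsto (fun i : ℕ => A (j + i)) atTop (𝓝 L) →
      Tendsto A atTop (𝓝 L) := by
    intro L j h
    have ht : Tendsto (fun k : ℤ => (k - j).toNat) atTop atTop := by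
      refine tendsto_atTop.2 fun N => ?_
      filter_upwards [eventually_ge_atTop (j + N)] with k hk
      omega
    refine (h.comp ht).congr' ?_
    filter_upwards [eventually_ge_atTop j] with k hk
    simp only [Function.comp]
    congr 1
    omega
  obtain ⟨L, hL⟩ := cauchySeq_tendsto_of_complete (cauchySeq_of_le_geometric_two (hdist 0))
  have hLA := hlim L 0 hL
  refine ⟨L, hLA, fun j => ?_⟩
  have hj : Tendsto (fun i : ℕ => A (j + i)) atTop (𝓝 L) :=
    hLA.comp (tendsto_atTop_add_const_left _ _ tendsto_natCast_atTop_atTop)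
  have := dist_le_of_le_geometric_two_of_tendsto₀ (hdist j) hj
  simpa [Real.dist_eq] using this

/-- The Hölder-type imbedding on the whole space. -/
lemma exists_holder_representative {β : ℝ} (hβ : (n : ℝ) < β) {φ : ℝ → ℝ} (hφ : IsYoung φ)
    {K : ℝ} (hK : IsDoubling φ K) :
    ∃ C > (0 : ℝ), ∀ w : V → ℝ, MemW n β φ univ w → ∃ v : V → ℝ, v =ᵐ[volume] w ∧
      ∀ x y, |v x - v y| ≤
        C * yInv φ (dist x y ^ (β - n)) * (fracNorm n β φ univ w).toReal := by
  have hK1 := hK.1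
  have hKpos : 0 < K := one_pos.trans hK1
  have hβn : 0 < β - n := sub_pos.2 hβ
  -- The ratio of consecutive radii is `ρ = K ^ (-1 / (β - n))`, so that one step divides
  -- `R ^ (β - n)` by `K` and hence halves its image under the inverse of `φ`.
  set ρ : ℝ := K⁻¹ ^ (β - n)⁻¹ with hρ
  have hρ0 : 0 < ρ := Real.rpow_pos_of_pos (inv_pos.2 hKpos) _
  have hρ1 : ρ < 1 := Real.rpow_lt_one (inv_pos.2 hKpos).le (inv_lt_one_of_one_lt₀ hK1)
    (inv_pos.2 hβn)
  have hρK : ρ ^ (β - n) = K⁻¹ := Real.rpow_inv_rpow (inv_pos.2 hKpos).le hβn.ne'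
  set M : ℝ := 2 / ρ + 2 with hM
  have hM0 : 0 ≤ M := by positivity
  have hc := ballConst_pos (n := n) (β := β) hM0
  set c := ballConst n β M
  refine ⟨5 * c, by positivity, fun w hw => ?_⟩
  have hwl : LocallyIntegrable w := locallyIntegrableOn_univ.1 hw.1
  set A : V → ℤ → ℝ := fun x k => ⨍ p in closedBall x (ρ ^ k), w p with hA
  set g : ℤ → ℝ := fun k => yInv φ ((ρ ^ k) ^ (β - n)) with hg
  have hg0 : ∀ k, 0 ≤ g k := fun k => yInv_nonneg _ _
  have hghalf : ∀ k, g (k + 1) ≤ g k / 2 := by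
    intro k
    have hk : 0 < ρ ^ k := zpow_pos hρ0 k
    have : (ρ ^ (k + 1)) ^ (β - n) = K⁻¹ * (ρ ^ k) ^ (β - n) := by
      rw [zpow_add_one₀ hρ0.ne', Real.mul_rpow hk.le hρ0.le, hρK, mul_comm]
    simp only [hg, this]
    exact hφ.yInv_div_le hK (Real.rpow_pos_of_pos hk _)
  have hconv : ∀ lam : ℝ, 0 < lam → fracIntegral n β φ univ w lam ≤ 1 → ∀ x,
      ∃ L, Tendsto (A x) atTop (𝓝 L) ∧ ∀ j, |A x j - L| ≤ 2 * (c * (lam * g j)) := by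
    intro lam hlam hI x
    refine exists_tendsto_of_halving (fun k => ?_) (fun k => ?_)
    · have hk : 0 < ρ ^ k := zpow_pos hρ0 k
      have hk1 : ρ ^ (k + 1) = ρ ^ k * ρ := zpow_add_one₀ hρ0.ne' k
      have hle : ρ ^ (k + 1) ≤ ρ ^ k := by rw [hk1]; nlinarith
      have h := abs_average_sub_le hφ hβ hwl hlam hI (x := x) (y := x) (zpow_pos hρ0 (k + 1))
        hM0 hle le_rfl (by
          have : M * ρ ^ (k + 1) = 2 * ρ ^ k + 2 * ρ ^ (k + 1) := by
            rw [hM, hk1]; field_simp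
          have := zpow_pos hρ0 (k + 1)
          rw [dist_self]
          linarith)
      refine h.trans ?_
      have hgk : g (k + 1) ≤ g k := (hghalf k).trans (by linarith [hg0 k])
      change c * (lam * g (k + 1)) ≤ _
      gcongr
    · have := mul_le_mul_of_nonneg_left (hghalf k) (mul_pos hc hlam).le
      linarith
  have hne : ∃ lam : ℝ≥0∞, 0 < lam ∧ lam ≠ ∞ ∧ fracIntegral n β φ univ w lam.toReal ≤ 1 := by
    by_contra! h
    apply hw.2
    rw [fracNorm, sInf_eq_top]
    rintro lam ⟨h1, h2, h3⟩
    exact absurd h3 (h lam h1 h2).not_ge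
  obtain ⟨lam₀, hl0, hlt, hlI⟩ := hne
  choose v hv using fun x => (hconv lam₀.toReal (ENNReal.toReal_pos hl0.ne' hlt) hlI x)
  refine ⟨v, ?_, fun x y => ?_⟩
  · filter_upwards [IsUnifLocDoublingMeasure.ae_tendsto_average volume hwl 1] with x hx
    have hρlim : Tendsto (fun k : ℕ => ρ ^ (k : ℤ)) atTop (𝓝[>] 0) := by
      refine tendsto_nhdsWithin_iff.2 ⟨?_, Eventually.of_forall fun k => zpow_pos hρ0 _⟩
      simpa using tendsto_pow_atTop_nhds_zero_of_lt_one hρ0.le hρ1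
    have h1 := hx (fun _ : ℕ => x) (fun k : ℕ => ρ ^ (k : ℤ)) hρlim
      (Eventually.of_forall fun k => mem_closedBall_self (by positivity))
    exact tendsto_nhds_unique ((hv x).1.comp tendsto_natCast_atTop_atTop) h1
  rcases eq_or_ne x y with rfl | hxy
  · have := yInv_nonneg φ (dist x x ^ (β - n))
    rw [sub_self, abs_zero]
    positivity
  have hd : 0 < dist x y := dist_pos.2 hxy
  have hbound : ∀ lam : ℝ, 0 < lam → fracIntegral n β φ univ w lam ≤ 1 →
      |v x - v y| ≤ 5 * c * yInv φ (dist x y ^ (β - n)) * lam := by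
    intro lam hlam hI
    have hlim : ∀ z j, |A z j - v z| ≤ 2 * (c * (lam * g j)) := by
      intro z
      obtain ⟨L, hL, hLj⟩ := hconv lam hlam hI z
      rwa [tendsto_nhds_unique hL (hv z).1] at hLj
    -- The scale `j` with `ρ ^ j < |x - y| ≤ ρ ^ (j - 1)`.
    obtain ⟨i, hi1, hi2⟩ := exists_mem_Ioc_zpow hd (one_lt_inv_iff₀.2 ⟨hρ0, hρ1⟩)
    rw [inv_zpow'] at hi1 hi2
    obtain ⟨j, rfl⟩ : ∃ j : ℤ, i = -j := ⟨-i, by ring⟩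
    rw [neg_neg] at hi1
    have hj : 0 < ρ ^ j := zpow_pos hρ0 j
    have hj1 : ρ ^ (-(-j + 1)) = ρ ^ j / ρ := by
      rw [show -(-j + 1) = j - 1 by ring, zpow_sub_one₀ hρ0.ne', div_eq_mul_inv]
    rw [hj1] at hi2
    have hxyj : |A x j - A y j| ≤ c * (lam * g j) := by
      refine abs_average_sub_le hφ hβ hwl hlam hI hj hM0 le_rfl le_rfl ?_
      have h1 : M * ρ ^ j = 2 * (ρ ^ j / ρ) + 2 * ρ ^ j := by rw [hM]; ring
      have h2 : 0 < ρ ^ j / ρ := by positivity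
      linarith
    have hgd : g j ≤ yInv φ (dist x y ^ (β - n)) :=
      hφ.yInv_mono (Real.rpow_pos_of_pos hd _) (Real.rpow_le_rpow hj.le hi1.le hβn.le)
    have h3 : |v x - v y| ≤ 5 * (c * (lam * g j)) := by
      have ha := abs_le.1 (hlim x j)
      have hb := abs_le.1 (hlim y j)
      have hab := abs_le.1 hxyj
      rw [abs_le]
      constructor <;> linarith [ha.1, ha.2, hb.1, hb.2, hab.1, hab.2]
    calc |v x - v y| ≤ 5 * (c * (lam * g j)) := h3
      _ ≤ 5 * (c * (lam * yInv φ (dist x y ^ (β - n)))) := by gcongr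
      _ = _ := by ring
  -- Pass to the infimum over admissible `lam`.
  set Y := 5 * c * yInv φ (dist x y ^ (β - n))
  have hY : 0 < Y := mul_pos (by positivity) (hφ.yInv_spec (Real.rpow_pos_of_pos hd _)).1
  rw [← div_le_iff₀' hY, ← ENNReal.ofReal_le_iff_le_toReal hw.2]
  refine le_sInf ?_
  rintro lam ⟨h1, h2, h3⟩
  rw [ENNReal.ofReal_le_iff_le_toReal h2, div_le_iff₀' hY]
  exact hbound lam.toReal (ENNReal.toReal_pos h1.ne' h2) h3

end Averages

/-! ### Extension domains -/

/-- extension domains satisfy the Hölder-type imbedding, `β > n`. -/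
theorem extension_implies_imbedding_high
    (n : ℕ) (hn : 1 ≤ n) (β : ℝ) (hβ : (n : ℝ) < β)
    (φ : ℝ → ℝ) (hφ : IsYoung φ) (hdbl : ∃ K : ℝ, IsDoubling φ K)
    (hCβ : CbetaFinite β φ)
    (Ω : Set (EuclideanSpace ℝ (Fin n))) (hΩopen : IsOpen Ω) (hΩconn : IsConnected Ω)
    (hE : IsExtensionDomain n β φ Ω) :
    ∃ C > (0 : ℝ), ∀ u : EuclideanSpace ℝ (Fin n) → ℝ, MemW n β φ Ω u →
      ∃ v : EuclideanSpace ℝ (Fin n) → ℝ,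
        (∀ᵐ x ∂(volume.restrict Ω), v x = u x) ∧
        ∀ x ∈ Ω, ∀ y ∈ Ω,
          |v x - v y| ≤
            C * yInv φ (dist x y ^ (β - (n : ℝ))) * (fracNorm n β φ Ω u).toReal := by
  obtain ⟨K, hK⟩ := hdbl
  obtain ⟨C, hC, hrep⟩ := exists_holder_representative hβ hφ hK
  obtain ⟨C', hC', E, -, -, hE⟩ := hE
  refine ⟨C * C', by positivity, fun u hu => ?_⟩
  obtain ⟨hmem, hae, hnorm⟩ := hE u hu
  obtain ⟨v, hvae, hv⟩ := hrep (E u) hmem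
  refine ⟨v, ?_, fun x _ y _ => (hv x y).trans ?_⟩
  · filter_upwards [ae_restrict_of_ae hvae, hae] with x h1 h2
    rw [h1, h2]
  · have h := ENNReal.toReal_mono (ENNReal.mul_ne_top ENNReal.ofReal_ne_top hu.2) hnorm
    rw [ENNReal.toReal_mul, ENNReal.toReal_ofReal hC'.le] at h
    have hY := yInv_nonneg φ (dist x y ^ (β - (n : ℝ)))
    calc C * yInv φ (dist x y ^ (β - (n : ℝ))) * (fracNorm n β φ univ (E u)).toReal
        ≤ C * yInv φ (dist x y ^ (β - (n : ℝ))) * (C' * (fracNorm n β φ Ω u).toReal) := by gcongr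
      _ = _ := by ring
end
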